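/- Boundary quantitative strong maximum principle in half-balls. For every integer n ≥ 2, reals 0 < λ ≤ Λ, exponents q > n and p with n ≤ p ≤ q, d₀ ∈ (0,1/4], and K > 0, there exist constants ε > 0, c > 0, C > 0 such that the following holds. Let b, f : B₂⁺ → ℝ be continuous with b ≥ 0 and ‖b‖_{L^q(B₂⁺)} ≤ K, and let u be a C² function on B₂⁺ with u ≥ 0 and L⁻[u] ≤ f in B₂⁺. Then c·(∫_{B_{3/2}⁺} (f⁻(x))^ε dx)^{1/ε} ≤ inf_{x ∈ B₁⁺} u(x)/x_n + C·‖f⁺‖_{L^{p,q}(B₂⁺)}, the integral being a Lebesgue integral with values in [0,+∞]. -/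

import Mathlib

open MeasureTheory
open scoped ENNReal

/-- The Pucci minimal extremal operator `𝓜⁻(M)` with ellipticity constants `lam ≤ Lam`:
the infimum of `tr(A*M)` over symmetric matrices `A` with `lam•I ≤ A ≤ Lam•I`. -/
noncomputable def pucciMinus (n : ℕ) (lam Lam : ℝ) (M : Matrix (Fin n) (Fin n) ℝ) : ℝ :=
  sInf { t : ℝ | ∃ A : Matrix (Fin n) (Fin n) ℝ, A.IsSymm ∧
    (A - lam • (1 : Matrix (Fin n) (Fin n) ℝ)).PosSemidef ∧
    (Lam • (1 : Matrix (Fin n) (Fin n) ℝ) - A).PosSemidef ∧ t = (A * M).trace }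

/-- The Pucci maximal extremal operator `𝓜⁺(M)`. -/
noncomputable def pucciPlus (n : ℕ) (lam Lam : ℝ) (M : Matrix (Fin n) (Fin n) ℝ) : ℝ :=
  sSup { t : ℝ | ∃ A : Matrix (Fin n) (Fin n) ℝ, A.IsSymm ∧
    (A - lam • (1 : Matrix (Fin n) (Fin n) ℝ)).PosSemidef ∧
    (Lam • (1 : Matrix (Fin n) (Fin n) ℝ) - A).PosSemidef ∧ t = (A * M).trace }

/-- The Hessian matrix `D²u(x)` of `u` at `x`. -/
noncomputable def hess (n : ℕ) (u : EuclideanSpace ℝ (Fin n) → ℝ)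
    (x : EuclideanSpace ℝ (Fin n)) : Matrix (Fin n) (Fin n) ℝ :=
  fun i j => fderiv ℝ (fun y => fderiv ℝ u y (EuclideanSpace.single j (1 : ℝ))) x
    (EuclideanSpace.single i (1 : ℝ))

/-- The euclidean norm `|Du(x)|` of the gradient of `u` at `x`. -/
noncomputable def gradNorm (n : ℕ) (u : EuclideanSpace ℝ (Fin n) → ℝ)
    (x : EuclideanSpace ℝ (Fin n)) : ℝ := ‖fderiv ℝ u x‖

/-- The `L^p` norm `(∫_E |g|^p)^(1/p)`, as a Lebesgue integral valued in `[0,∞]`. -/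
noncomputable def LpNormE (n : ℕ) (p : ℝ) (g : EuclideanSpace ℝ (Fin n) → ℝ)
    (E : Set (EuclideanSpace ℝ (Fin n))) : ℝ≥0∞ :=
  (∫⁻ x in E, ENNReal.ofReal (|g x| ^ p)) ^ (1 / p)

/-- The last (`n`-th) coordinate `x_n` of a point of `ℝⁿ`. -/
def lastC (n : ℕ) (hn : 1 ≤ n) (x : EuclideanSpace ℝ (Fin n)) : ℝ := x ⟨n - 1, by omega⟩

/-- The open half-ball `B_R⁺ = {|x| < R, x_n > 0}`. -/
def halfBall (n : ℕ) (hn : 1 ≤ n) (R : ℝ) : Set (EuclideanSpace ℝ (Fin n)) :=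
  {x | ‖x‖ < R ∧ 0 < lastC n hn x}

/-- The flat boundary part `B_R⁰ = {|x| ≤ R, x_n = 0}`. -/
def flatB (n : ℕ) (hn : 1 ≤ n) (R : ℝ) : Set (EuclideanSpace ℝ (Fin n)) :=
  {x | ‖x‖ ≤ R ∧ lastC n hn x = 0}

/-- The norm `‖g‖_{L^{p,q}(B_R⁺)} = ‖g‖_{L^p(B_R⁺)} + ‖g‖_{L^q(B_R⁺ ∩ {x_n < d0})}`. -/
noncomputable def LpqNormHB (n : ℕ) (hn : 1 ≤ n) (p q d0 R : ℝ)
    (g : EuclideanSpace ℝ (Fin n) → ℝ) : ℝ≥0∞ :=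
  LpNormE n p g (halfBall n hn R) +
    LpNormE n q g {x ∈ halfBall n hn R | lastC n hn x < d0}

/-- The open cube `Q_ρ` of side `ρ` centered at `(0,…,0,ρ/2)`. -/
def cubeQ (n : ℕ) (hn : 1 ≤ n) (ρ : ℝ) : Set (EuclideanSpace ℝ (Fin n)) :=
  {x | (∀ i : Fin n, i.1 ≠ n - 1 → |x i| < ρ / 2) ∧ 0 < lastC n hn x ∧ lastC n hn x < ρ}

/-- The norm `‖g‖_{L^{p,q}(Q₂)} = ‖g‖_{L^p(Q₂)} + ‖g‖_{L^q(Q₂ ∩ {x_n < d0})}`. -/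
noncomputable def LpqNormQ (n : ℕ) (hn : 1 ≤ n) (p q d0 : ℝ)
    (g : EuclideanSpace ℝ (Fin n) → ℝ) : ℝ≥0∞ :=
  LpNormE n p g (cubeQ n hn 2) +
    LpNormE n q g {x ∈ cubeQ n hn 2 | lastC n hn x < d0}

namespace QSMP

open Matrix

/-- Euclidean space. -/
abbrev E (n : ℕ) := EuclideanSpace ℝ (Fin n)

/-- Admissible coefficient matrices. -/
def Adm (n : ℕ) (lam Lam : ℝ) (A : Matrix (Fin n) (Fin n) ℝ) : Prop :=
  A.IsSymm ∧ (A - lam • (1 : Matrix (Fin n) (Fin n) ℝ)).PosSemidef ∧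
    (Lam • (1 : Matrix (Fin n) (Fin n) ℝ) - A).PosSemidef

/-- Matrix of an operator. -/
noncomputable def mat {n : ℕ} (T : E n →L[ℝ] E n) : Matrix (Fin n) (Fin n) ℝ :=
  fun i j => inner ℝ (T (EuclideanSpace.single i (1 : ℝ))) (EuclideanSpace.single j (1 : ℝ))

theorem mat_apply {n : ℕ} (T : E n →L[ℝ] E n) (i j : Fin n) :
    mat T i j = (T (EuclideanSpace.single i (1 : ℝ))) j := by
  simp [mat, EuclideanSpace.inner_single_right]

theorem trace_mul_nonneg {n : ℕ} {A H : Matrix (Fin n) (Fin n) ℝ}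
    (hA : A.PosSemidef) (hH : H.PosSemidef) : 0 ≤ (A * H).trace := by
  open scoped MatrixOrder in
  obtain ⟨B, rfl⟩ := CStarAlgebra.nonneg_iff_eq_star_mul_self.mp hA.nonneg
  have h := (hH.mul_mul_conjTranspose_same B).trace_nonneg
  rw [Matrix.star_eq_conjTranspose, Matrix.mul_assoc, Matrix.trace_mul_comm]
  exact h

theorem Adm.lower {n : ℕ} {lam Lam : ℝ} {A H : Matrix (Fin n) (Fin n) ℝ}
    (hA : Adm n lam Lam A) (hH : H.PosSemidef) : lam * H.trace ≤ (A * H).trace := by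
  have := trace_mul_nonneg hA.2.1 hH
  simp [Matrix.sub_mul, Matrix.trace_sub] at this
  linarith

theorem Adm.upper {n : ℕ} {lam Lam : ℝ} {A H : Matrix (Fin n) (Fin n) ℝ}
    (hA : Adm n lam Lam A) (hH : H.PosSemidef) : (A * H).trace ≤ Lam * H.trace := by
  have := trace_mul_nonneg hA.2.2 hH
  simp [Matrix.sub_mul, Matrix.trace_sub] at this
  linarith

theorem adm_nonempty (n : ℕ) {lam Lam : ℝ} (h : lam ≤ Lam) : ∃ A, Adm n lam Lam A := by
  refine ⟨lam • 1, ?_, ?_, ?_⟩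
  · simp [Matrix.IsSymm]
  · rw [sub_self]; exact Matrix.PosSemidef.zero
  · rw [← sub_smul]; exact Matrix.PosSemidef.one.smul (by linarith)

theorem pucci_upper {n : ℕ} {lam Lam : ℝ} (h : lam ≤ Lam)
    {M N : Matrix (Fin n) (Fin n) ℝ} {t s : ℝ} (hH : (M - N).PosSemidef)
    (hM : pucciMinus n lam Lam M ≤ t) (hN : ∀ A, Adm n lam Lam A → -s ≤ (A * N).trace) :
    lam * (M - N).trace ≤ t + s := by
  apply le_of_forall_pos_le_add
  intro ε hε
  have : pucciMinus n lam Lam M < t + ε := by linarith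
  obtain ⟨A0, hA0⟩ := adm_nonempty n h
  unfold pucciMinus at this
  obtain ⟨y, ⟨A, h1, h2, h3, rfl⟩, hy⟩ := exists_lt_of_csInf_lt
    (by exact ⟨(A0 * M).trace, A0, hA0.1, hA0.2.1, hA0.2.2, rfl⟩) this
  have hA : Adm n lam Lam A := ⟨h1, h2, h3⟩
  have := hA.lower hH
  have h4 := hN A hA
  rw [Matrix.mul_sub, Matrix.trace_sub (A * M)] at this
  linarith

theorem pucci_lower {n : ℕ} {lam Lam : ℝ} (h : lam ≤ Lam)
    {M : Matrix (Fin n) (Fin n) ℝ} {a : ℝ} (ha : 0 ≤ a) (hl : 0 ≤ lam)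
    (hM : (M + a • (1 : Matrix (Fin n) (Fin n) ℝ)).PosSemidef) :
    -(a * Lam * n) ≤ pucciMinus n lam Lam M := by
  obtain ⟨A0, hA0⟩ := adm_nonempty n h
  unfold pucciMinus
  apply le_csInf (by exact ⟨(A0 * M).trace, A0, hA0.1, hA0.2.1, hA0.2.2, rfl⟩)
  rintro y ⟨A, h1, h2, h3, rfl⟩
  have hA : Adm n lam Lam A := ⟨h1, h2, h3⟩
  have h5 := hA.lower hM
  have h6 := hA.upper (Matrix.PosSemidef.one (n := Fin n) (R := ℝ))
  have h7 := hM.trace_nonneg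
  have h8 : 0 ≤ lam * (M + a • (1 : Matrix (Fin n) (Fin n) ℝ)).trace := mul_nonneg hl h7
  rw [Matrix.mul_add, Matrix.trace_add (A * M)] at h5
  have h9 : (A * a • (1 : Matrix (Fin n) (Fin n) ℝ)).trace = a * A.trace := by simp
  have h10 : A.trace ≤ Lam * n := by simpa using h6
  nlinarith [mul_le_mul_of_nonneg_left h10 ha]

theorem det_le_trace_pow {n : ℕ} {H : Matrix (Fin n) (Fin n) ℝ} (hH : H.PosSemidef) :
    |H.det| ≤ H.trace ^ n := by
  have h0 := hH.eigenvalues_nonneg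
  have h1 : H.det = ∏ i, hH.1.eigenvalues i := by simpa using hH.1.det_eq_prod_eigenvalues
  have h2 : H.trace = ∑ i, hH.1.eigenvalues i := by simpa using hH.1.trace_eq_sum_eigenvalues
  rw [h1, h2, abs_of_nonneg (Finset.prod_nonneg fun i _ => h0 i)]
  calc ∏ i, hH.1.eigenvalues i ≤ ∏ _i : Fin n, ∑ i, hH.1.eigenvalues i :=
        Finset.prod_le_prod (fun i _ => h0 i)
          (fun i _ => Finset.single_le_sum (f := hH.1.eigenvalues) (fun j _ => h0 j) (Finset.mem_univ i))
    _ = _ := by simp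

theorem det_mat {n : ℕ} (T : E n →L[ℝ] E n) : T.det = (mat T).det := by
  have h : LinearMap.toMatrix (EuclideanSpace.basisFun (Fin n) ℝ).toBasis
      (EuclideanSpace.basisFun (Fin n) ℝ).toBasis (T : E n →ₗ[ℝ] E n) = (mat T)ᵀ := by
    ext i j
    rw [LinearMap.toMatrix_apply, Matrix.transpose_apply, mat_apply]
    simp
  rw [ContinuousLinearMap.det, ← LinearMap.det_toMatrix (EuclideanSpace.basisFun (Fin n) ℝ).toBasis, h,
    Matrix.det_transpose]

theorem mat_quad {n : ℕ} (T : E n →L[ℝ] E n) (x : Fin n → ℝ) :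
    x ⬝ᵥ (mat T *ᵥ x) = inner ℝ (T (WithLp.toLp 2 x)) (WithLp.toLp 2 x) := by
  have hx : (WithLp.toLp 2 x : E n) = ∑ i, x i • EuclideanSpace.single i (1 : ℝ) := by
    ext j; simp [Finset.sum_apply, Pi.single_apply]
  conv_rhs => rw [hx]
  simp only [map_sum, map_smul, sum_inner, inner_sum, inner_smul_left, inner_smul_right]
  simp only [dotProduct, mulVec, mat, Finset.mul_sum]
  rw [Finset.sum_comm]
  refine Finset.sum_congr rfl fun i _ => Finset.sum_congr rfl fun j _ => ?_
  simp only [conj_trivial]; ring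

theorem mat_psd {n : ℕ} {T : E n →L[ℝ] E n}
    (hs : ∀ v w, inner ℝ (T v) w = inner ℝ v (T w))
    (hp : ∀ v, 0 ≤ inner ℝ (T v) v) : (mat T).PosSemidef := by
  apply Matrix.PosSemidef.of_dotProduct_mulVec_nonneg
  · ext i j
    simp only [Matrix.conjTranspose_apply, mat, star_trivial]
    rw [hs, real_inner_comm]
  · intro x
    simpa [mat_quad] using hp (WithLp.toLp 2 x)

theorem mat_add {n : ℕ} (S T : E n →L[ℝ] E n) : mat (S + T) = mat S + mat T := by
  ext i j; simp [mat_apply]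
theorem mat_sub {n : ℕ} (S T : E n →L[ℝ] E n) : mat (S - T) = mat S - mat T := by
  ext i j; simp [mat_apply]
theorem mat_smul {n : ℕ} (c : ℝ) (T : E n →L[ℝ] E n) : mat (c • T) = c • mat T := by
  ext i j; simp [mat_apply]
theorem mat_id {n : ℕ} : mat (ContinuousLinearMap.id ℝ (E n)) = 1 := by
  ext i j; simp [mat_apply, Matrix.one_apply, eq_comm]

/-- rank one operator `w ↦ ⟪v,w⟫ v` -/
noncomputable def rk {n : ℕ} (v : E n) : E n →L[ℝ] E n := (innerSL ℝ v).smulRight v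

theorem rk_apply {n : ℕ} (v w : E n) : rk v w = inner ℝ v w • v := by
  simp [rk]

theorem mat_rk_psd {n : ℕ} (v : E n) : (mat (rk v)).PosSemidef := by
  apply mat_psd
  · intro x y; simp [rk_apply, inner_smul_left, inner_smul_right, real_inner_comm, mul_comm]
  · intro x; simp only [rk_apply, inner_smul_left]
    simp [mul_self_nonneg]

theorem mat_rk_trace {n : ℕ} (v : E n) : (mat (rk v)).trace = ‖v‖ ^ 2 := by
  rw [EuclideanSpace.norm_sq_eq]
  simp only [Matrix.trace, Matrix.diag, mat_apply, rk_apply]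
  refine Finset.sum_congr rfl fun i _ => ?_
  simp [EuclideanSpace.inner_single_right, sq]

/-- trace bounds used for test functions -/
theorem Adm.tr_id_le {n : ℕ} {lam Lam : ℝ} {A : Matrix (Fin n) (Fin n) ℝ}
    (hA : Adm n lam Lam A) :
    (A * mat (ContinuousLinearMap.id ℝ (E n))).trace ≤ Lam * n := by
  have := hA.upper (mat_psd (T := ContinuousLinearMap.id ℝ (E n)) (fun _ _ => rfl)
    (fun v => by simp))
  have h2 : (mat (ContinuousLinearMap.id ℝ (E n))).trace = n := by rw [mat_id]; simp
  rwa [h2] at this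

theorem Adm.le_tr_rk {n : ℕ} {lam Lam : ℝ} {A : Matrix (Fin n) (Fin n) ℝ}
    (hA : Adm n lam Lam A) (v : E n) :
    lam * ‖v‖ ^ 2 ≤ (A * mat (rk v)).trace := by
  have := hA.lower (mat_rk_psd v)
  rwa [mat_rk_trace] at this

end QSMP
namespace QSMP

open Matrix Filter Topology

section calc2
variable {n : ℕ}

/-- test functions with gradient and Hessian -/
structure TF (h : E n → ℝ) (g : E n → E n) (H : E n → E n →L[ℝ] E n) : Prop where
  d1 : ∀ x, HasGradientAt h (g x) x
  d2 : ∀ x, HasFDerivAt g (H x) x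
  sym : ∀ x v w, inner ℝ (H x v) w = inner ℝ v (H x w)

/-- nonnegative supersolutions -/
structure Sup (n : ℕ) (lam Lam : ℝ) (b f u : E n → ℝ) (Ω : Set (E n)) : Prop where
  op : IsOpen Ω
  bc : ContinuousOn b Ω
  fc : ContinuousOn f Ω
  b0 : ∀ x ∈ Ω, 0 ≤ b x
  cd : ContDiffOn ℝ 2 u Ω
  u0 : ∀ x ∈ Ω, 0 ≤ u x
  eq : ∀ x ∈ Ω, pucciMinus n lam Lam (hess n u x) - b x * gradNorm n u x ≤ f x

theorem Sup.mono {lam Lam : ℝ} {b f u : E n → ℝ} {Ω U : Set (E n)}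
    (h : Sup n lam Lam b f u Ω) (hU : IsOpen U) (hs : U ⊆ Ω) : Sup n lam Lam b f u U :=
  ⟨hU, h.bc.mono hs, h.fc.mono hs, fun x hx => h.b0 x (hs hx), h.cd.mono hs,
    fun x hx => h.u0 x (hs hx), fun x hx => h.eq x (hs hx)⟩

theorem gradient_eq_comp (u : E n → ℝ) :
    gradient u = fun x => (InnerProductSpace.toDual ℝ (E n)).symm (fderiv ℝ u x) := rfl

variable {u : E n → ℝ} {Ω : Set (E n)}

theorem fderiv_diff (hΩ : IsOpen Ω) (hu : ContDiffOn ℝ 2 u Ω) {x : E n} (hx : x ∈ Ω) :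
    DifferentiableAt ℝ (fderiv ℝ u) x := by
  have h1 : ContDiffAt ℝ 2 u x := hu.contDiffAt (hΩ.mem_nhds hx)
  have h2 : ContDiffAt ℝ 1 (fderiv ℝ u) x := h1.fderiv_right (by norm_num)
  exact h2.differentiableAt (by norm_num)

theorem grad_hasFDeriv (hΩ : IsOpen Ω) (hu : ContDiffOn ℝ 2 u Ω) {x : E n} (hx : x ∈ Ω) :
    HasFDerivAt (gradient u)
      (((InnerProductSpace.toDual ℝ (E n)).symm.toContinuousLinearEquiv.toContinuousLinearMap :
        (StrongDual ℝ (E n)) →L[ℝ] E n) ∘L (fderiv ℝ (fderiv ℝ u) x)) x := by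
  have h := (fderiv_diff hΩ hu hx).hasFDerivAt
  exact (((InnerProductSpace.toDual ℝ (E n)).symm.toContinuousLinearEquiv.toContinuousLinearMap :
        (StrongDual ℝ (E n)) →L[ℝ] E n)).hasFDerivAt.comp x h

theorem grad_diff (hΩ : IsOpen Ω) (hu : ContDiffOn ℝ 2 u Ω) {x : E n} (hx : x ∈ Ω) :
    HasFDerivAt (gradient u) (fderiv ℝ (gradient u) x) x :=
  (grad_hasFDeriv hΩ hu hx).differentiableAt.hasFDerivAt

theorem grad_inner (hΩ : IsOpen Ω) (hu : ContDiffOn ℝ 2 u Ω) {x : E n} (hx : x ∈ Ω) (v w : E n) :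
    inner ℝ (fderiv ℝ (gradient u) x v) w = fderiv ℝ (fderiv ℝ u) x v w := by
  rw [(grad_hasFDeriv hΩ hu hx).fderiv]
  simp

theorem grad_sym (hΩ : IsOpen Ω) (hu : ContDiffOn ℝ 2 u Ω) {x : E n} (hx : x ∈ Ω) (v w : E n) :
    inner ℝ (fderiv ℝ (gradient u) x v) w = inner ℝ v (fderiv ℝ (gradient u) x w) := by
  rw [grad_inner hΩ hu hx, real_inner_comm, grad_inner hΩ hu hx]
  have h1 : ContDiffAt ℝ 2 u x := hu.contDiffAt (hΩ.mem_nhds hx)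
  exact (h1.isSymmSndFDerivAt (by simp)).eq v w

theorem grad_has (hΩ : IsOpen Ω) (hu : ContDiffOn ℝ 2 u Ω) {x : E n} (hx : x ∈ Ω) :
    HasGradientAt u (gradient u x) x := by
  have h1 : ContDiffAt ℝ 2 u x := hu.contDiffAt (hΩ.mem_nhds hx)
  exact (h1.differentiableAt (by norm_num)).hasGradientAt

theorem hess_eq (hΩ : IsOpen Ω) (hu : ContDiffOn ℝ 2 u Ω) {x : E n} (hx : x ∈ Ω) :
    hess n u x = mat (fderiv ℝ (gradient u) x) := by
  ext i j
  rw [mat, grad_inner hΩ hu hx, hess]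
  have h := (fderiv_diff hΩ hu hx).hasFDerivAt
  have := (ContinuousLinearMap.apply ℝ ℝ (EuclideanSpace.single j (1 : ℝ) : E n)).hasFDerivAt.comp x h
  have h3 := this.fderiv
  have h4 : (fun y => fderiv ℝ u y (EuclideanSpace.single j (1 : ℝ))) =
    (⇑(ContinuousLinearMap.apply ℝ ℝ (EuclideanSpace.single j (1 : ℝ) : E n)) ∘ fderiv ℝ u) := rfl
  rw [h4, h3]
  rfl

theorem gradNorm_eq (x : E n) : gradNorm n u x = ‖gradient u x‖ := by
  simp [gradNorm, gradient_eq_comp]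

theorem contact_psd (hΩ : IsOpen Ω) {w : E n → ℝ} {gw : E n → E n} {T : E n →L[ℝ] E n}
    (hw : ∀ x ∈ Ω, HasGradientAt w (gw x) x) {x0 : E n} (hx0 : x0 ∈ Ω) (hT : HasFDerivAt gw T x0)
    (hc : ∀ z ∈ Ω, w x0 + inner ℝ (gw x0) (z - x0) ≤ w z) (v : E n) : 0 ≤ inner ℝ (T v) v := by
  by_contra hneg
  push Not at hneg
  set φ : ℝ → ℝ := fun t => w (x0 + t • v) - t * inner ℝ (gw x0) v with hφ
  have hline : ∀ t : ℝ, HasDerivAt (fun t : ℝ => x0 + t • v) v t := fun t => by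
    simpa using ((hasDerivAt_id t).smul_const v).const_add x0
  have hev : ∀ᶠ t : ℝ in 𝓝 0, x0 + t • v ∈ Ω := by
    have : ContinuousAt (fun t : ℝ => x0 + t • v) 0 := (hline 0).continuousAt
    exact this.eventually (hΩ.mem_nhds (by simpa using hx0))
  have hd : ∀ t : ℝ, x0 + t • v ∈ Ω → HasDerivAt φ (inner ℝ (gw (x0 + t • v) - gw x0) v) t := by
    intro t ht
    have h1 := (hw _ ht).hasFDerivAt.comp_hasDerivAt t (hline t)
    have h2 := h1.sub ((hasDerivAt_id t).mul_const (inner ℝ (gw x0) v))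
    refine h2.congr_deriv ?_
    simp [inner_sub_left]
  have hde : deriv φ =ᶠ[𝓝 0] fun t => inner ℝ (gw (x0 + t • v) - gw x0) v := by
    filter_upwards [hev] with t ht using (hd t ht).deriv
  have hd2 : HasDerivAt (fun t : ℝ => inner ℝ (gw (x0 + t • v) - gw x0) v) (inner ℝ (T v) v) 0 := by
    have hT' : HasFDerivAt gw T (x0 + (0 : ℝ) • v) := by simpa using hT
    have h1 := hT'.comp_hasDerivAt (0 : ℝ) (hline 0)
    have h2 := (h1.sub_const (gw x0)).inner ℝ (hasDerivAt_const (0 : ℝ) v)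
    simpa using h2
  have hdd : deriv (deriv φ) 0 = inner ℝ (T v) v := by
    rw [hde.deriv_eq]; exact hd2.deriv
  have h0 : x0 + (0 : ℝ) • v ∈ Ω := by simpa using hx0
  have hd0 : deriv φ 0 = 0 := by rw [(hd 0 h0).deriv]; simp
  have hmax : IsLocalMax φ 0 := isLocalMax_of_deriv_deriv_neg (by rw [hdd]; exact hneg) hd0
    (hd 0 h0).continuousAt
  have hconst : φ =ᶠ[𝓝 0] fun _ => φ 0 := by
    filter_upwards [hmax, hev] with t ht1 ht2
    refine le_antisymm ht1 ?_
    have := hc _ ht2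
    simp only [hφ, zero_smul, add_zero, zero_mul, sub_zero]
    simp [inner_smul_right] at this
    linarith
  have h1 : deriv φ =ᶠ[𝓝 0] fun _ => 0 := by
    filter_upwards [hconst.eventuallyEq_nhds] with t ht
    rw [ht.deriv_eq]; simp
  have h2 := h1.deriv_eq
  rw [hdd] at h2
  simp at h2
  linarith

/-- contact set -/
def contact (w : E n → ℝ) (gw : E n → E n) (Ω Kc : Set (E n)) (η : ℝ) : Set (E n) :=
  {x ∈ Kc | (∀ z ∈ Ω, w x + inner ℝ (gw x) (z - x) ≤ w z) ∧ ‖gw x‖ ≤ η}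

/-- volume of the unit ball -/
noncomputable def om (n : ℕ) : ℝ := (volume (Metric.ball (0 : E n) 1)).toReal

theorem om_pos (n : ℕ) : 0 < om n :=
  ENNReal.toReal_pos (Metric.measure_ball_pos _ _ one_pos).ne' measure_ball_lt_top.ne

theorem vol_ball (x : E n) {r : ℝ} (hr : 0 < r) :
    volume (Metric.ball x r) = ENNReal.ofReal (r ^ n * om n) := by
  rw [Measure.addHaar_ball_of_pos _ _ hr, ENNReal.ofReal_mul (by positivity), om,
    ENNReal.ofReal_toReal measure_ball_lt_top.ne]
  simp

theorem vol_closedBall (x : E n) {r : ℝ} (hr : 0 ≤ r) :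
    volume (Metric.closedBall x r) = ENNReal.ofReal (r ^ n * om n) := by
  rw [Measure.addHaar_closedBall _ _ hr, ENNReal.ofReal_mul (by positivity), om,
    ENNReal.ofReal_toReal measure_ball_lt_top.ne]
  simp

theorem contact_compact {Kc : Set (E n)} (hK : IsCompact Kc) {w : E n → ℝ}
    {gw : E n → E n} (hw : ContinuousOn w Kc) (hg : ContinuousOn gw Kc) (η : ℝ) :
    IsCompact (contact w gw Ω Kc η) := by
  have hcl : IsClosed (contact w gw Ω Kc η) := by
    have : contact w gw Ω Kc η =
        (⋂ z ∈ Ω, {x ∈ Kc | w x + inner ℝ (gw x) (z - x) ≤ w z}) ∩ {x ∈ Kc | ‖gw x‖ ≤ η} := by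
      ext x
      simp only [contact, Set.mem_ofPred_eq, Set.mem_inter_iff, Set.mem_iInter]
      constructor
      · rintro ⟨a, b, c⟩; exact ⟨fun z hz => ⟨a, b z hz⟩, a, c⟩
      · rintro ⟨a, b, c⟩; exact ⟨b, fun z hz => (a z hz).2, c⟩
    rw [this]
    refine IsClosed.inter (isClosed_biInter fun z _ => ?_) ?_
    · apply hK.isClosed.isClosed_le
      · exact hw.add (hg.inner (continuousOn_const.sub continuousOn_id))
      · exact continuousOn_const
    · exact hK.isClosed.isClosed_le hg.norm continuousOn_const
  exact hK.of_isClosed_subset hcl (fun x hx => hx.1)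

theorem abp {Kc : Set (E n)} (hΩ : IsOpen Ω) (hK : IsCompact Kc) (hKΩ : Kc ⊆ Ω)
    {w : E n → ℝ} {gw : E n → E n} {Tw : E n → E n →L[ℝ] E n}
    (hw1 : ∀ x ∈ Ω, HasGradientAt w (gw x) x) (hw2 : ∀ x ∈ Ω, HasFDerivAt gw (Tw x) x)
    (hs : ∀ x ∈ Ω, ∀ v w, inner ℝ (Tw x v) w = inner ℝ v (Tw x w))
    {x1 : E n} (hx1 : x1 ∈ Ω) {η : ℝ} (hη : 0 < η)
    (hb : ∀ z ∈ Ω, z ∉ Kc → w x1 + η * ‖z - x1‖ < w z) :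
    IsCompact (contact w gw Ω Kc η) ∧ (∀ x ∈ contact w gw Ω Kc η, (mat (Tw x)).PosSemidef) ∧
    ENNReal.ofReal (η ^ n * om n) ≤
      ∫⁻ x in contact w gw Ω Kc η, ENNReal.ofReal ((mat (Tw x)).trace ^ n) := by
  have hwc : ContinuousOn w Kc := fun x hx =>
    (hw1 x (hKΩ hx)).hasFDerivAt.continuousAt.continuousWithinAt
  have hgc : ContinuousOn gw Kc := fun x hx => (hw2 x (hKΩ hx)).continuousAt.continuousWithinAt
  have hcomp := contact_compact (Ω := Ω) hK hwc hgc η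
  have hpsd : ∀ x ∈ contact w gw Ω Kc η, (mat (Tw x)).PosSemidef := fun x hx =>
    mat_psd (hs x (hKΩ hx.1)) (contact_psd hΩ hw1 (hKΩ hx.1) (hw2 x (hKΩ hx.1)) hx.2.1)
  refine ⟨hcomp, hpsd, ?_⟩
  have hsub : Metric.ball (0 : E n) η ⊆ gw '' contact w gw Ω Kc η := by
    intro l hl
    have hl' : ‖l‖ < η := by simpa using hl
    have hx1K : x1 ∈ Kc := by
      by_contra h
      have := hb x1 hx1 h
      simp at this
    have hcont : ContinuousOn (fun z => w z - inner ℝ l (z - x1)) Kc :=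
      hwc.sub (continuousOn_const.inner (continuousOn_id.sub continuousOn_const))
    obtain ⟨x, hxK, hx⟩ := hK.exists_isMinOn ⟨x1, hx1K⟩ hcont
    have hmin : ∀ z ∈ Ω, w x - inner ℝ l (x - x1) ≤ w z - inner ℝ l (z - x1) := by
      intro z hz
      by_cases hzK : z ∈ Kc
      · exact hx hzK
      · have h1 := hb z hz hzK
        have h2 := hx hx1K
        simp at h2
        have h3 : inner ℝ l (z - x1) ≤ ‖l‖ * ‖z - x1‖ := real_inner_le_norm _ _
        have h4 : ‖l‖ * ‖z - x1‖ ≤ η * ‖z - x1‖ := by gcongr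
        linarith
    have hgrad : gw x = l := by
      have hloc : IsLocalMin (fun z => w z - inner ℝ l (z - x1)) x := by
        filter_upwards [hΩ.mem_nhds (hKΩ hxK)] with z hz using hmin z hz
      have hf : HasFDerivAt (fun z => w z - inner ℝ l (z - x1))
          (InnerProductSpace.toDual ℝ (E n) (gw x) - innerSL ℝ l) x := by
        have h1 := (hw1 x (hKΩ hxK)).hasFDerivAt
        have h2 : HasFDerivAt (fun z => inner ℝ l (z - x1)) (innerSL ℝ l) x := by
          have := (innerSL ℝ l).hasFDerivAt.comp x ((hasFDerivAt_id x).sub_const x1)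
          rw [ContinuousLinearMap.comp_id] at this
          exact this
        exact h1.sub h2
      have h0 := hloc.hasFDerivAt_eq_zero hf
      apply ext_inner_right ℝ
      intro v
      have := congrArg (fun L => L v) h0
      simp at this
      linarith
    refine ⟨x, ⟨hxK, fun z hz => ?_, by rw [hgrad]; exact hl'.le⟩, hgrad⟩
    have := hmin z hz
    rw [hgrad]
    have h5 : inner ℝ l (z - x) = inner ℝ l (z - x1) - inner ℝ l (x - x1) := by
      rw [← inner_sub_right]; congr 1; abel
    linarith
  calc ENNReal.ofReal (η ^ n * om n) = volume (Metric.ball (0 : E n) η) := (vol_ball _ hη).symm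
    _ ≤ volume (gw '' contact w gw Ω Kc η) := measure_mono hsub
    _ ≤ ∫⁻ x in contact w gw Ω Kc η, ENNReal.ofReal |(Tw x).det| :=
        addHaar_image_le_lintegral_abs_det_fderiv volume hcomp.measurableSet
          (fun x hx => (hw2 x (hKΩ hx.1)).hasFDerivWithinAt)
    _ ≤ _ := by
        apply setLIntegral_mono' hcomp.measurableSet
        intro x hx
        apply ENNReal.ofReal_le_ofReal
        rw [det_mat]
        exact det_le_trace_pow (hpsd x hx)

/-- ABP for supersolutions minus test functions. -/
theorem abp_sol {lam Lam : ℝ} (hl : 0 < lam) (hL : lam ≤ Lam) {b f : E n → ℝ} {Kc : Set (E n)}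
    (hS : Sup n lam Lam b f u Ω) (hK : IsCompact Kc) (hKΩ : Kc ⊆ Ω)
    {h : E n → ℝ} {gh : E n → E n} {Hh : E n → E n →L[ℝ] E n} (ht : TF h gh Hh)
    {x1 : E n} (hx1 : x1 ∈ Ω) {η : ℝ} (hη : 0 < η)
    (hb : ∀ z ∈ Ω, z ∉ Kc → u x1 - h x1 + η * ‖z - x1‖ < u z - h z)
    {s : E n → ℝ}
    (hs : ∀ x ∈ contact (fun x => u x - h x) (fun x => gradient u x - gh x) Ω Kc η,
      ∀ A, Adm n lam Lam A → -s x ≤ (A * mat (Hh x)).trace) :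
    IsCompact (contact (fun x => u x - h x) (fun x => gradient u x - gh x) Ω Kc η) ∧
    ENNReal.ofReal (η ^ n * om n) ≤
      ∫⁻ x in contact (fun x => u x - h x) (fun x => gradient u x - gh x) Ω Kc η,
        ENNReal.ofReal (((max (f x) 0 + b x * (‖gh x‖ + η) + s x) / lam) ^ n) := by
  obtain ⟨h1, h2, h3⟩ := abp hS.op hK hKΩ (w := fun x => u x - h x)
    (gw := fun x => gradient u x - gh x) (Tw := fun x => fderiv ℝ (gradient u) x - Hh x)
    (fun x hx => by
      have := (grad_has hS.op hS.cd hx).hasFDerivAt.sub (ht.d1 x).hasFDerivAt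
      rw [hasGradientAt_iff_hasFDerivAt, map_sub]; exact this)
    (fun x hx => (grad_diff hS.op hS.cd hx).sub (ht.d2 x))
    (fun x hx v w => by
      simp only [_root_.sub_apply, inner_sub_left, inner_sub_right,
        grad_sym hS.op hS.cd hx, ht.sym])
    hx1 hη hb
  refine ⟨h1, h3.trans ?_⟩
  apply setLIntegral_mono' h1.measurableSet
  intro x hx
  apply ENNReal.ofReal_le_ofReal
  have hxΩ := hKΩ hx.1
  have hp := h2 x hx
  have h4 := hS.eq x hxΩ
  rw [hess_eq hS.op hS.cd hxΩ, gradNorm_eq] at h4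
  simp only [mat_sub] at hp ⊢
  have h5 := pucci_upper hL hp (t := f x + b x * ‖gradient u x‖) (by linarith) (hs x hx)
  have h6 : ‖gradient u x‖ ≤ ‖gh x‖ + η := by
    have := hx.2.2
    have h7 := norm_add_le (gh x) (gradient u x - gh x)
    simp at h7
    linarith
  have h7 : b x * ‖gradient u x‖ ≤ b x * (‖gh x‖ + η) :=
    mul_le_mul_of_nonneg_left h6 (hS.b0 x hxΩ)
  apply pow_le_pow_left₀ hp.trace_nonneg
  rw [le_div_iff₀ hl]
  have := le_max_left (f x) 0
  linarith

end calc2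
end QSMP
namespace QSMP

open Matrix Filter Topology

section tests
variable {n : ℕ}

theorem TF.add {h1 h2 : E n → ℝ} {g1 g2 : E n → E n} {H1 H2 : E n → E n →L[ℝ] E n}
    (t1 : TF h1 g1 H1) (t2 : TF h2 g2 H2) :
    TF (fun x => h1 x + h2 x) (fun x => g1 x + g2 x) (fun x => H1 x + H2 x) where
  d1 x := by
    rw [hasGradientAt_iff_hasFDerivAt, map_add]
    exact (t1.d1 x).hasFDerivAt.add (t2.d1 x).hasFDerivAt
  d2 x := (t1.d2 x).add (t2.d2 x)
  sym x v w := by simp [inner_add_left, inner_add_right, t1.sym, t2.sym]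

theorem TF.smul {h1 : E n → ℝ} {g1 : E n → E n} {H1 : E n → E n →L[ℝ] E n}
    (t1 : TF h1 g1 H1) (c : ℝ) :
    TF (fun x => c * h1 x) (fun x => c • g1 x) (fun x => c • H1 x) where
  d1 x := by
    rw [hasGradientAt_iff_hasFDerivAt]
    have := (t1.d1 x).hasFDerivAt.const_mul c
    simpa using this
  d2 x := (t1.d2 x).const_smul c
  sym x v w := by simp [inner_smul_left, inner_smul_right, t1.sym]

theorem hasFDerivAt_inner_const (p x : E n) :
    HasFDerivAt (fun z => (inner ℝ p z : ℝ)) (innerSL ℝ p) x := (innerSL ℝ p).hasFDerivAt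

theorem TF.aff (c : ℝ) (p : E n) :
    TF (fun x => c + inner ℝ p x) (fun _ => p) (fun _ => 0) where
  d1 x := by
    rw [hasGradientAt_iff_hasFDerivAt]
    exact (hasFDerivAt_inner_const p x).const_add c
  d2 x := hasFDerivAt_const p x
  sym x v w := by simp

theorem TF.linsq (p : E n) :
    TF (fun x => (inner ℝ p x) ^ 2) (fun x => (2 * inner ℝ p x) • p) (fun _ => (2 : ℝ) • rk p) where
  d1 x := by
    rw [hasGradientAt_iff_hasFDerivAt]
    have := (hasFDerivAt_inner_const p x).pow 2
    refine this.congr_fderiv ?_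
    ext v
    simp [inner_smul_left]
  d2 x := by
    have := ((hasFDerivAt_inner_const p x).const_mul 2).smul_const p
    refine this.congr_fderiv ?_
    ext v
    simp [rk_apply]
    ring
  sym x v w := by
    simp [rk_apply, inner_smul_left, inner_smul_right, real_inner_comm, mul_comm]

theorem hasFDerivAt_nsq (y x : E n) :
    HasFDerivAt (fun z : E n => ‖z - y‖ ^ 2) ((2 : ℝ) • innerSL ℝ (x - y)) x := by
  have h := (hasStrictFDerivAt_norm_sq (x - y)).hasFDerivAt.comp x ((hasFDerivAt_id x).sub_const y)
  refine h.congr_fderiv ?_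
  ext v; simp

theorem TF.rad (y : E n) {φ φ1 φ2 : ℝ → ℝ} (h1 : ∀ t, 0 ≤ t → HasDerivAt φ (φ1 t) t)
    (h2 : ∀ t, 0 ≤ t → HasDerivAt φ1 (φ2 t) t) :
    TF (fun x => φ (‖x - y‖ ^ 2)) (fun x => (2 * φ1 (‖x - y‖ ^ 2)) • (x - y))
      (fun x => (2 * φ1 (‖x - y‖ ^ 2)) • ContinuousLinearMap.id ℝ (E n)
        + (4 * φ2 (‖x - y‖ ^ 2)) • rk (x - y)) where
  d1 x := by
    rw [hasGradientAt_iff_hasFDerivAt]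
    have := (h1 (‖x - y‖ ^ 2) (by positivity)).comp_hasFDerivAt x (hasFDerivAt_nsq y x)
    refine this.congr_fderiv ?_
    ext v
    simp [inner_smul_left]
    ring
  d2 x := by
    have h3 := ((h2 (‖x - y‖ ^ 2) (by positivity)).comp_hasFDerivAt x (hasFDerivAt_nsq y x)).const_mul 2
    have := h3.smul ((hasFDerivAt_id x).sub_const y)
    refine this.congr_fderiv ?_
    ext v i
    simp [rk_apply, inner_sub_left]
    ring
  sym x v w := by
    simp only [rk_apply, inner_smul_left, inner_smul_right, inner_add_left, inner_add_right,
      _root_.add_apply, _root_.smul_apply, ContinuousLinearMap.id_apply]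
    rw [real_inner_comm v (x - y)]
    simp only [conj_trivial]
    ring

theorem TF.nsq (y : E n) :
    TF (fun x => ‖x - y‖ ^ 2) (fun x => (2 : ℝ) • (x - y))
      (fun _ => (2 : ℝ) • ContinuousLinearMap.id ℝ (E n)) := by
  have := TF.rad y (φ := fun t => t) (φ1 := fun _ => 1) (φ2 := fun _ => 0)
    (fun t _ => hasDerivAt_id t) (fun t _ => hasDerivAt_const t 1)
  convert this using 2 with x
  · simp
  · ext v
    simp

/-- profile -/
noncomputable def J (ρ : ℝ) (k : ℕ) (t : ℝ) : ℝ := ((1 + t / ρ ^ 2) ^ k)⁻¹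

theorem J_deriv {ρ : ℝ} (k : ℕ) {t : ℝ} (ht : 0 ≤ t) :
    HasDerivAt (J ρ k) (-(k / ρ ^ 2) * J ρ (k + 1) t) t := by
  have h0 : (0 : ℝ) < 1 + t / ρ ^ 2 := by positivity
  have h1 : HasDerivAt (fun t : ℝ => 1 + t / ρ ^ 2) (1 / ρ ^ 2) t := by
    simpa using ((hasDerivAt_id t).div_const (ρ ^ 2)).const_add 1
  have h2 := (h1.pow k).inv (pow_pos h0 k).ne'
  refine h2.congr_deriv ?_
  rcases k with _ | k
  · simp
  · simp only [J]
    by_cases hρ : ρ = 0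
    · simp [hρ]
    simp only [Pi.pow_apply, Nat.add_sub_cancel]
    generalize 1 + t / ρ ^ 2 = a at h0
    have ha : a ≠ 0 := h0.ne'
    field_simp
    ring

/-- barrier -/
noncomputable def bar (m : ℕ) (ρ : ℝ) (y x : E n) : ℝ := J ρ m (‖x - y‖ ^ 2)
/-- its gradient -/
noncomputable def barg (m : ℕ) (ρ : ℝ) (y x : E n) : E n :=
  (2 * (-(m / ρ ^ 2) * J ρ (m + 1) (‖x - y‖ ^ 2))) • (x - y)
/-- its Hessian -/
noncomputable def barH (m : ℕ) (ρ : ℝ) (y x : E n) : E n →L[ℝ] E n :=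
  (2 * (-(m / ρ ^ 2) * J ρ (m + 1) (‖x - y‖ ^ 2))) • ContinuousLinearMap.id ℝ (E n)
    + (4 * (-(m / ρ ^ 2) * (-((m + 1 : ℕ) / ρ ^ 2) * J ρ (m + 1 + 1) (‖x - y‖ ^ 2)))) • rk (x - y)

theorem TF.bar (m : ℕ) (ρ : ℝ) (y : E n) : TF (bar m ρ y) (barg m ρ y) (barH m ρ y) :=
  TF.rad y (φ := J ρ m) (φ1 := fun t => -(m / ρ ^ 2) * J ρ (m + 1) t)
    (φ2 := fun t => -(m / ρ ^ 2) * (-((m + 1 : ℕ) / ρ ^ 2) * J ρ (m + 1 + 1) t))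
    (fun _ ht => J_deriv m ht) (fun _ ht => (J_deriv (m + 1) ht).const_mul _)

theorem J_pos {ρ : ℝ} (k : ℕ) {t : ℝ} (ht : 0 ≤ t) : 0 < J ρ k t := by
  unfold J; positivity

theorem J_le_one {ρ : ℝ} (k : ℕ) {t : ℝ} (ht : 0 ≤ t) : J ρ k t ≤ 1 := by
  unfold J
  apply inv_le_one_of_one_le₀
  apply one_le_pow₀
  have : 0 ≤ t / ρ ^ 2 := by positivity
  linarith

theorem J_anti {ρ : ℝ} (k : ℕ) {s t : ℝ} (hs : 0 ≤ s) (ht : s ≤ t) : J ρ k t ≤ J ρ k s := by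
  unfold J
  have : 0 ≤ s / ρ ^ 2 := by positivity
  have : s / ρ ^ 2 ≤ t / ρ ^ 2 := by gcongr
  gcongr

theorem J_scale {ρ : ℝ} (hρ : 0 < ρ) (k : ℕ) (c : ℝ) : J ρ k (c * ρ ^ 2) = ((1 + c) ^ k)⁻¹ := by
  unfold J
  rw [mul_div_assoc, div_self (by positivity), mul_one]

theorem J_mul {ρ : ℝ} (k : ℕ) {t : ℝ} (ht : 0 ≤ t) :
    J ρ k t = (1 + t / ρ ^ 2) * J ρ (k + 1) t := by
  have h0 : (0 : ℝ) < 1 + t / ρ ^ 2 := by positivity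
  unfold J
  generalize 1 + t / ρ ^ 2 = a at h0
  have ha : a ≠ 0 := h0.ne'
  field_simp
  ring

theorem barg_norm (m : ℕ) {ρ : ℝ} (y x : E n) :
    ‖barg m ρ y x‖ ≤ 2 * (m / ρ ^ 2) * ‖x - y‖ := by
  unfold barg
  rw [norm_smul]
  gcongr
  have h1 := J_pos (ρ := ρ) (m + 1) (t := ‖x - y‖ ^ 2) (by positivity)
  have h2 := J_le_one (ρ := ρ) (m + 1) (t := ‖x - y‖ ^ 2) (by positivity)
  have h3 : (0 : ℝ) ≤ m / ρ ^ 2 := by positivity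
  rw [Real.norm_eq_abs, abs_le]
  constructor <;> nlinarith

theorem barg_norm_le (m : ℕ) {ρ : ℝ} (hρ : 0 < ρ) {y x : E n} (hx : ‖x - y‖ ≤ 4 * ρ) :
    ‖barg m ρ y x‖ ≤ 8 * m / ρ := by
  refine (barg_norm m y x).trans ?_
  calc 2 * (m / ρ ^ 2) * ‖x - y‖ ≤ 2 * (m / ρ ^ 2) * (4 * ρ) := by gcongr
    _ = _ := by field_simp; ring

theorem bar_trace_eq (m : ℕ) {ρ : ℝ} (y x : E n) (A : Matrix (Fin n) (Fin n) ℝ) :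
    (A * mat (barH m ρ y x)).trace =
      2 * (m / ρ ^ 2) * J ρ (m + 2) (‖x - y‖ ^ 2) *
        (2 * ((m + 1) / ρ ^ 2) * (A * mat (rk (x - y))).trace
        - (1 + ‖x - y‖ ^ 2 / ρ ^ 2) * (A * mat (ContinuousLinearMap.id ℝ (E n))).trace) := by
  unfold barH
  rw [mat_add, mat_smul, mat_smul, Matrix.mul_add, Matrix.trace_add]
  simp only [Matrix.mul_smul, Matrix.trace_smul, smul_eq_mul]
  rw [J_mul (ρ := ρ) (m + 1) (t := ‖x - y‖ ^ 2) (by positivity)]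
  push_cast
  ring

/-- barrier is a strict subsolution away from its centre -/
theorem bar_trace_ge {lam Lam : ℝ} (hl : 0 < lam) (hL : lam ≤ Lam) {m : ℕ}
    (hm : 5 * Lam * n ≤ (m + 1) * lam) {ρ : ℝ} (hρ : 0 < ρ) {y x : E n}
    (hx : ρ / 2 ≤ ‖x - y‖) (hx' : ‖x - y‖ ≤ 4 * ρ)
    {A : Matrix (Fin n) (Fin n) ℝ} (hA : Adm n lam Lam A) :
    2 * m * Lam * n * ((17 : ℝ) ^ (m + 2))⁻¹ / ρ ^ 2 ≤ (A * mat (barH m ρ y x)).trace := by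
  rw [bar_trace_eq]
  have hL0 : 0 < Lam := by linarith
  have h1 := hA.tr_id_le
  have h2 := hA.le_tr_rk (x - y)
  set t := ‖x - y‖ ^ 2 / ρ ^ 2 with ht
  have ht1 : 1 / 4 ≤ t := by
    rw [ht, le_div_iff₀ (by positivity)]; nlinarith
  have hJ : ((17 : ℝ) ^ (m + 2))⁻¹ ≤ J ρ (m + 2) (‖x - y‖ ^ 2) := by
    have := J_anti (ρ := ρ) (m + 2) (s := ‖x - y‖ ^ 2) (t := 16 * ρ ^ 2) (by positivity)
      (by nlinarith [norm_nonneg (x - y)])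
    rw [J_scale hρ] at this
    norm_num at this
    linarith
  have h3 : Lam * n ≤ 2 * ((m + 1) / ρ ^ 2) * (A * mat (rk (x - y))).trace
        - (1 + t) * (A * mat (ContinuousLinearMap.id ℝ (E n))).trace := by
    have h4 : 2 * ((m + 1) * lam) * t ≤ 2 * ((m + 1) / ρ ^ 2) * (A * mat (rk (x - y))).trace := by
      calc 2 * ((m + 1) * lam) * t = 2 * ((m + 1) / ρ ^ 2) * (lam * ‖x - y‖ ^ 2) := by
            rw [ht]; field_simp
        _ ≤ _ := by gcongr
    have h5 : (1 + t) * (A * mat (ContinuousLinearMap.id ℝ (E n))).trace ≤ (1 + t) * (Lam * n) := by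
      gcongr
    have h6 : 2 * (5 * Lam * n) * t ≤ 2 * ((m + 1) * lam) * t := by gcongr
    have h7 : 0 ≤ Lam * n := by positivity
    nlinarith
  have h8 : 0 ≤ Lam * n := by positivity
  have hJ0 : 0 ≤ J ρ (m + 2) (‖x - y‖ ^ 2) := (J_pos _ (by positivity)).le
  calc 2 * m * Lam * n * ((17 : ℝ) ^ (m + 2))⁻¹ / ρ ^ 2
      = 2 * (m / ρ ^ 2) * ((17 : ℝ) ^ (m + 2))⁻¹ * (Lam * n) := by ring
    _ ≤ _ := by gcongr

theorem bar_trace_ge' {lam Lam : ℝ} (hl : 0 < lam) (hL : lam ≤ Lam) {m : ℕ}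
    {ρ : ℝ} (hρ : 0 < ρ) {y x : E n}
    {A : Matrix (Fin n) (Fin n) ℝ} (hA : Adm n lam Lam A) :
    -(2 * m * Lam * n / ρ ^ 2) ≤ (A * mat (barH m ρ y x)).trace := by
  have hL0 : 0 < Lam := by linarith
  have h1 := hA.tr_id_le
  have h2 := hA.le_tr_rk (x - y)
  have h3 : 0 ≤ (A * mat (rk (x - y))).trace := le_trans (by positivity) h2
  unfold barH
  rw [mat_add, mat_smul, mat_smul, Matrix.mul_add, Matrix.trace_add]
  simp only [Matrix.mul_smul, Matrix.trace_smul, smul_eq_mul]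
  have hJ1 := J_pos (ρ := ρ) (m + 1) (t := ‖x - y‖ ^ 2) (by positivity)
  have hJ2 := J_le_one (ρ := ρ) (m + 1) (t := ‖x - y‖ ^ 2) (by positivity)
  have hJ3 := J_pos (ρ := ρ) (m + 1 + 1) (t := ‖x - y‖ ^ 2) (by positivity)
  set j := J ρ (m + 1) (‖x - y‖ ^ 2)
  have h4 : 0 ≤ 4 * (-(m / ρ ^ 2) * (-((m + 1 : ℕ) / ρ ^ 2) * J ρ (m + 1 + 1) (‖x - y‖ ^ 2))) *
      (A * mat (rk (x - y))).trace := by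
    have : -(m / ρ ^ 2) * (-((m + 1 : ℕ) / ρ ^ 2) * J ρ (m + 1 + 1) (‖x - y‖ ^ 2)) =
      (m / ρ ^ 2) * (((m + 1 : ℕ) / ρ ^ 2) * J ρ (m + 1 + 1) (‖x - y‖ ^ 2)) := by ring
    rw [this]; positivity
  have h5 : 2 * (m / ρ ^ 2) * j * (A * mat (ContinuousLinearMap.id ℝ (E n))).trace ≤
      2 * (m / ρ ^ 2) * (Lam * n) := by
    calc _ ≤ 2 * (m / ρ ^ 2) * j * (Lam * n) := by gcongr
      _ ≤ 2 * (m / ρ ^ 2) * 1 * (Lam * n) := by gcongr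
      _ = _ := by ring
  have h6 : 2 * m * Lam * n / ρ ^ 2 = 2 * (m / ρ ^ 2) * (Lam * n) := by ring
  rw [h6]
  linarith

end tests

section compar
variable {n : ℕ}

theorem lint_bound {Ω S : Set (E n)} (hΩ : IsOpen Ω) (hS : S ⊆ Ω)
    {b f : E n → ℝ} (hbc : ContinuousOn b Ω) (hfc : ContinuousOn f Ω)
    (hb0 : ∀ x ∈ Ω, 0 ≤ b x)
    {α β F1 B1 : ℝ} (hα : 0 ≤ α) (hβ : 0 ≤ β) (hF1 : 0 ≤ F1)
    (hF : ∫⁻ x in Ω, ENNReal.ofReal ((max (f x) 0) ^ n) ≤ ENNReal.ofReal F1)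
    (hB : ∫⁻ x in Ω, ENNReal.ofReal ((b x) ^ n) ≤ ENNReal.ofReal B1) :
    ∫⁻ x in S, ENNReal.ofReal (α * (max (f x) 0) ^ n + β * (b x) ^ n) ≤
      ENNReal.ofReal (α * F1) + ENNReal.ofReal (β * B1) := by
  refine (lintegral_mono_set hS).trans ?_
  have hmf : AEMeasurable (fun x => ENNReal.ofReal ((max (f x) 0) ^ n)) (volume.restrict Ω) := by
    apply AEMeasurable.ennreal_ofReal
    exact ContinuousOn.aemeasurable (((hfc.sup continuousOn_const).pow n)) hΩ.measurableSet
  calc ∫⁻ x in Ω, ENNReal.ofReal (α * (max (f x) 0) ^ n + β * (b x) ^ n)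
      = ∫⁻ x in Ω, (ENNReal.ofReal α * ENNReal.ofReal ((max (f x) 0) ^ n) +
          ENNReal.ofReal β * ENNReal.ofReal ((b x) ^ n)) := by
        apply setLIntegral_congr_fun hΩ.measurableSet
        intro x hx
        have := hb0 x hx
        simp only
        rw [ENNReal.ofReal_add (by positivity) (by positivity), ENNReal.ofReal_mul hα,
          ENNReal.ofReal_mul hβ]
    _ = ENNReal.ofReal α * (∫⁻ x in Ω, ENNReal.ofReal ((max (f x) 0) ^ n)) +
          ENNReal.ofReal β * ∫⁻ x in Ω, ENNReal.ofReal ((b x) ^ n) := by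
        rw [lintegral_add_left' (hmf.const_mul _), lintegral_const_mul' _ _ ENNReal.ofReal_ne_top,
          lintegral_const_mul' _ _ ENNReal.ofReal_ne_top]
    _ ≤ ENNReal.ofReal α * ENNReal.ofReal F1 + ENNReal.ofReal β * ENNReal.ofReal B1 := by
        gcongr
    _ = _ := by rw [ENNReal.ofReal_mul hα, ENNReal.ofReal_mul hβ]

theorem two_add_pow (n : ℕ) {x y : ℝ} (hx : 0 ≤ x) (hy : 0 ≤ y) :
    (x + y) ^ n ≤ 2 ^ n * (x ^ n + y ^ n) := by
  have h := add_pow_le hx hy n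
  refine h.trans ?_
  gcongr
  · norm_num
  · omega

theorem comparison (n : ℕ) (hn : 1 ≤ n) {lam Lam : ℝ} (hl : 0 < lam) (hL : lam ≤ Lam) :
    ∃ C δ : ℝ, 0 < C ∧ 0 < δ ∧ ∀ (b f u : E n → ℝ) (U : Set (E n)), Sup n lam Lam b f u U →
      ∀ d : ℝ, 0 < d → (∀ x ∈ U, ∀ y ∈ U, ‖x - y‖ ≤ d) →
      ∀ (h : E n → ℝ) (gh : E n → E n) (Hh : E n → E n →L[ℝ] E n), TF h gh Hh →
      ∀ Hb : ℝ, 0 ≤ Hb → (∀ x ∈ U, ‖gh x‖ ≤ Hb) →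
      (∀ x ∈ U, u x < h x → ∀ A, Adm n lam Lam A → 0 ≤ (A * mat (Hh x)).trace) →
      ∀ Ef : E n → ℝ, Continuous Ef → (∀ x ∈ closure U, x ∉ U → Ef x ≤ 0) →
      (∀ x ∈ U, h x - u x ≤ Ef x) → ∀ F B : ℝ, 0 ≤ F → 0 ≤ B →
      ∫⁻ x in U, ENNReal.ofReal ((max (f x) 0) ^ n) ≤ ENNReal.ofReal (F ^ n) →
      ∫⁻ x in U, ENNReal.ofReal ((b x) ^ n) ≤ ENNReal.ofReal (B ^ n) → B ≤ δ →
      ∀ x ∈ U, h x - u x ≤ C * d * (F + Hb * B) := by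
  have hω := om_pos n
  set δ0 := min 1 (om n / 2) with hδ0
  have hδ0p : 0 < δ0 := by positivity
  refine ⟨2 * (max 1 (2 / om n) * (4 / lam)), δ0 * (lam / 4), by positivity, by positivity, ?_⟩
  intro b f u U hS d hd hdiam h gh Hh ht Hb hHb hgh htr Ef hEc hE0 hE F B hF hB hFi hBi hBδ x1 hx1
  by_contra hcon
  push Not at hcon
  set τ := h x1 - u x1 with hτ
  have hτ0 : 0 < τ := lt_of_le_of_lt (by positivity) hcon
  set η := τ / (2 * d) with hη
  have hη0 : 0 < η := by positivity
  have hηd : η * d = τ / 2 := by rw [hη]; field_simp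
  set Kc := closure U ∩ {x | τ / 2 ≤ Ef x} with hKc
  have hKU : Kc ⊆ U := by
    rintro x ⟨hx, hx2⟩
    by_contra hxU
    have := hE0 x hx hxU
    have h2 : τ / 2 ≤ Ef x := hx2
    linarith
  have hUb : Bornology.IsBounded U := by
    rw [Metric.isBounded_iff]
    exact ⟨d, fun x hx y hy => by rw [dist_eq_norm]; exact hdiam x hx y hy⟩
  have hKcomp : IsCompact Kc :=
    Metric.isCompact_of_isClosed_isBounded
      (isClosed_closure.inter (isClosed_le continuous_const hEc)) (hUb.subset hKU)
  have hbd : ∀ z ∈ U, z ∉ Kc → u x1 - h x1 + η * ‖z - x1‖ < u z - h z := by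
    intro z hz hzK
    have h1 : Ef z < τ / 2 := by
      by_contra h2
      push Not at h2
      exact hzK ⟨subset_closure hz, h2⟩
    have h2 := hE z hz
    have h3 : η * ‖z - x1‖ ≤ η * d := by
      gcongr
      exact hdiam z hz x1 hx1
    linarith
  obtain ⟨hc1, hc2⟩ := abp_sol hl hL hS hKcomp hKU ht hx1 hη0 hbd (s := fun _ => 0) (by
    intro x hx A hA
    rw [neg_zero]
    refine htr x (hKU hx.1) ?_ A hA
    have h1 := hx.2.1 x1 hx1
    have h2 : -(η * d) ≤ inner ℝ (gradient u x - gh x) (x1 - x) := by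
      have h3 := abs_real_inner_le_norm (gradient u x - gh x) (x1 - x)
      have h4 : ‖gradient u x - gh x‖ * ‖x1 - x‖ ≤ η * d :=
        mul_le_mul hx.2.2 (hdiam x1 hx1 x (hKU hx.1)) (norm_nonneg _) hη0.le
      have := abs_le.mp (h3.trans h4)
      exact this.1
    simp only at h1
    linarith)
  have hbound : ENNReal.ofReal (η ^ n * om n) ≤
      ENNReal.ofReal ((2 / lam) ^ n * F ^ n) +
        ENNReal.ofReal ((2 / lam) ^ n * (Hb + η) ^ n * B ^ n) := by
    refine hc2.trans (le_trans ?_ (lint_bound hS.op (fun x (hx : x ∈ contact (fun x => u x - h x) (fun x => gradient u x - gh x) U Kc η) => hKU hx.1) hS.bc hS.fc hS.b0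
      (α := (2 / lam) ^ n) (β := (2 / lam) ^ n * (Hb + η) ^ n) (by positivity) (by positivity)
      (by positivity) hFi hBi))
    apply setLIntegral_mono' hc1.measurableSet
    intro x hx
    apply ENNReal.ofReal_le_ofReal
    have hxU := hKU hx.1
    have hb := hS.b0 x hxU
    rw [add_zero, div_pow]
    have h1 : (max (f x) 0 + b x * (‖gh x‖ + η)) ^ n ≤ (max (f x) 0 + b x * (Hb + η)) ^ n := by
      gcongr
      exact hgh x hxU
    have h2 := two_add_pow n (le_max_right (f x) 0) (show 0 ≤ b x * (Hb + η) by positivity)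
    calc _ ≤ (2 ^ n * (max (f x) 0 ^ n + (b x * (Hb + η)) ^ n)) / lam ^ n := by
          gcongr; exact h1.trans h2
      _ = _ := by rw [mul_pow, div_pow]; ring
  rw [← ENNReal.ofReal_add (by positivity) (by positivity),
    ENNReal.ofReal_le_ofReal_iff (by positivity)] at hbound
  have hpow := two_add_pow n hHb hη0.le
  have hn0 : n ≠ 0 := by omega
  have hBn : (4 / lam) ^ n * B ^ n ≤ om n / 2 := by
    rw [← mul_pow]
    have h1 : 4 / lam * B ≤ δ0 := by
      calc 4 / lam * B ≤ 4 / lam * (δ0 * (lam / 4)) := by gcongr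
        _ = δ0 := by field_simp
    calc (4 / lam * B) ^ n ≤ δ0 ^ n := by gcongr
      _ ≤ δ0 := pow_le_of_le_one hδ0p.le (min_le_left _ _) hn0
      _ ≤ om n / 2 := min_le_right _ _
  have h24 : (2 / lam) ^ n * 2 ^ n = (4 / lam) ^ n := by rw [← mul_pow]; congr 1; ring
  have h24' : (2 / lam) ^ n ≤ (4 / lam) ^ n := by gcongr; norm_num
  have key : η ^ n * (om n / 2) ≤ (4 / lam) ^ n * (F + Hb * B) ^ n := by
    have h1 : (2 / lam) ^ n * (Hb + η) ^ n * B ^ n ≤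
        (4 / lam) ^ n * Hb ^ n * B ^ n + η ^ n * ((4 / lam) ^ n * B ^ n) := by
      calc _ ≤ (2 / lam) ^ n * (2 ^ n * (Hb ^ n + η ^ n)) * B ^ n := by gcongr
        _ = _ := by rw [← h24]; ring
    have h2 : η ^ n * ((4 / lam) ^ n * B ^ n) ≤ η ^ n * (om n / 2) := by gcongr
    have h3 : (2 / lam) ^ n * F ^ n ≤ (4 / lam) ^ n * F ^ n := by gcongr
    have h4 : F ^ n + (Hb * B) ^ n ≤ (F + Hb * B) ^ n :=
      pow_add_pow_le hF (by positivity) hn0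
    have h5 : (4 / lam) ^ n * (F ^ n + (Hb * B) ^ n) ≤ (4 / lam) ^ n * (F + Hb * B) ^ n := by gcongr
    rw [mul_pow] at h5
    nlinarith
  have key2 : η ^ n ≤ (max 1 (2 / om n) * (4 / lam) * (F + Hb * B)) ^ n := by
    rw [mul_pow, mul_pow]
    have h1 : 2 / om n ≤ (max 1 (2 / om n)) ^ n :=
      (le_max_right _ _).trans (le_self_pow₀ (le_max_left _ _) hn0)
    calc η ^ n = 2 / om n * (η ^ n * (om n / 2)) := by field_simp
      _ ≤ 2 / om n * ((4 / lam) ^ n * (F + Hb * B) ^ n) := by gcongr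
      _ ≤ (max 1 (2 / om n)) ^ n * ((4 / lam) ^ n * (F + Hb * B) ^ n) := by gcongr
      _ = _ := by ring
  have key3 := le_of_pow_le_pow_left₀ hn0 (by positivity) key2
  have : τ = 2 * d * η := by rw [hη]; field_simp
  have h9 : 2 * d * η ≤ 2 * d * (max 1 (2 / om n) * (4 / lam) * (F + Hb * B)) := by gcongr
  rw [this] at hcon
  linarith

end compar
end QSMP
namespace QSMP

open Matrix Filter Topology

section holder
variable {n : ℕ}

theorem LpNormE_mono {q : ℝ} (hq : 0 < q) (g : E n → ℝ) {U V : Set (E n)} (h : U ⊆ V) :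
    LpNormE n q g U ≤ LpNormE n q g V := by
  unfold LpNormE
  apply ENNReal.rpow_le_rpow (lintegral_mono_set h) (by positivity)

theorem holder (hn : 1 ≤ n) {q : ℝ} (hq : (n : ℝ) ≤ q) {U : Set (E n)}
    {g : E n → ℝ} (hg : AEStronglyMeasurable g (volume.restrict U)) (hg0 : ∀ x, 0 ≤ g x) :
    ∫⁻ x in U, ENNReal.ofReal ((g x) ^ n) ≤
      (LpNormE n q g U * (volume U) ^ (1 / (n : ℝ) - 1 / q)) ^ n := by
  have hn0 : (0 : ℝ) < n := by exact_mod_cast hn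
  have hq0 : 0 < q := lt_of_lt_of_le hn0 hq
  have h := eLpNorm'_le_eLpNorm'_mul_rpow_measure_univ (μ := volume.restrict U) hn0 hq hg
  have e1 : ∀ r : ℝ, 0 < r → eLpNorm' g r (volume.restrict U) = LpNormE n r g U := by
    intro r hr
    unfold eLpNorm' LpNormE
    congr 1
    apply lintegral_congr
    intro x
    rw [Real.enorm_eq_ofReal_abs, ENNReal.ofReal_rpow_of_nonneg (abs_nonneg _) hr.le]
  rw [e1 _ hn0, e1 _ hq0, Measure.restrict_apply_univ] at h
  refine le_trans (le_of_eq ?_) (pow_le_pow_left' h n)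
  unfold LpNormE
  rw [← ENNReal.rpow_natCast, ← ENNReal.rpow_mul, one_div, inv_mul_cancel₀ hn0.ne',
    ENNReal.rpow_one]
  apply lintegral_congr
  intro x
  rw [abs_of_nonneg (hg0 x), Real.rpow_natCast]

theorem holder' (hn : 1 ≤ n) {q : ℝ} (hq : (n : ℝ) ≤ q) {U : Set (E n)}
    {g : E n → ℝ} (hg : AEStronglyMeasurable g (volume.restrict U)) (hg0 : ∀ x, 0 ≤ g x)
    {k r : ℝ} (hk : 0 ≤ k) (hr : 0 < r) {x0 : E n} (hU : U ⊆ Metric.ball x0 r)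
    (hgk : LpNormE n q g U ≤ ENNReal.ofReal k) :
    ∫⁻ x in U, ENNReal.ofReal ((g x) ^ n) ≤
      ENNReal.ofReal ((k * (om n) ^ (1 / (n : ℝ) - 1 / q) * r ^ (1 - n / q)) ^ n) := by
  have hn0 : (0 : ℝ) < n := by exact_mod_cast hn
  have hq0 : 0 < q := lt_of_lt_of_le hn0 hq
  have hω := om_pos n
  refine (holder hn hq hg hg0).trans ?_
  rw [ENNReal.ofReal_pow (by positivity)]
  gcongr
  have he : 0 ≤ 1 / (n : ℝ) - 1 / q := by
    rw [sub_nonneg]; gcongr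
  have hv : volume U ≤ ENNReal.ofReal (r ^ n * om n) := (measure_mono hU).trans (vol_ball x0 hr).le
  calc LpNormE n q g U * volume U ^ (1 / (n : ℝ) - 1 / q)
      ≤ ENNReal.ofReal k * (ENNReal.ofReal (r ^ n * om n)) ^ (1 / (n : ℝ) - 1 / q) := by
        gcongr
    _ = ENNReal.ofReal (k * (om n) ^ (1 / (n : ℝ) - 1 / q) * r ^ (1 - n / q)) := by
        rw [ENNReal.ofReal_rpow_of_nonneg (by positivity) he, ← ENNReal.ofReal_mul hk,
          Real.mul_rpow (by positivity) hω.le, ← Real.rpow_natCast, ← Real.rpow_mul hr.le]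
        congr 1
        have : (n : ℝ) * (1 / (n : ℝ) - 1 / q) = 1 - n / q := by field_simp
        rw [this]; ring

/-- Standing data: a supersolution in the half ball with scaled integral bounds. -/
structure Dat (n : ℕ) (hn : 1 ≤ n) (lam Lam d0 α Kb N : ℝ) (b f u : E n → ℝ) : Prop where
  sup : Sup n lam Lam b f u (halfBall n hn 2)
  N0 : 0 ≤ N
  hb : ∀ (U : Set (E n)) (x0 : E n) (r : ℝ), IsOpen U → U ⊆ halfBall n hn 2 → 0 < r →
    U ⊆ Metric.ball x0 r →
    ∫⁻ x in U, ENNReal.ofReal ((b x) ^ n) ≤ ENNReal.ofReal ((Kb * r ^ α) ^ n)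
  hf : ∫⁻ x in halfBall n hn 2, ENNReal.ofReal ((max (f x) 0) ^ n) ≤ ENNReal.ofReal (N ^ n)
  hfq : ∀ (U : Set (E n)) (x0 : E n) (r : ℝ), IsOpen U → U ⊆ halfBall n hn 2 → 0 < r →
    (∀ x ∈ U, lastC n hn x < d0) → U ⊆ Metric.ball x0 r →
    ∫⁻ x in U, ENNReal.ofReal ((max (f x) 0) ^ n) ≤ ENNReal.ofReal ((N * r ^ α) ^ n)

theorem lastC_cont (hn : 1 ≤ n) : Continuous (lastC n hn) := by
  unfold lastC; fun_prop

theorem halfBall_open (hn : 1 ≤ n) (R : ℝ) : IsOpen (halfBall n hn R) :=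
  (isOpen_lt continuous_norm continuous_const).inter (isOpen_lt continuous_const (lastC_cont hn))

theorem dat_of (hn : 1 ≤ n) {lam Lam p q d0 K : ℝ} (hq : (n : ℝ) < q) (hp : (n : ℝ) ≤ p)
    (hd0 : 0 < d0) (hK : 0 < K) :
    ∃ Kb CN : ℝ, 0 < Kb ∧ 0 < CN ∧ ∀ b f u : E n → ℝ,
      Sup n lam Lam b f u (halfBall n hn 2) → LpNormE n q b (halfBall n hn 2) ≤ ENNReal.ofReal K →
      LpqNormHB n hn p q d0 2 (fun x => max (f x) 0) ≠ ∞ →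
      Dat n hn lam Lam d0 (1 - n / q) Kb
        (CN * (LpqNormHB n hn p q d0 2 (fun x => max (f x) 0)).toReal) b f u := by
  have hω := om_pos n
  have hn0 : (0 : ℝ) < n := by exact_mod_cast hn
  have hq0 : 0 < q := hn0.trans hq
  have hp0 : 0 < p := lt_of_lt_of_le hn0 hp
  set c1 := (om n) ^ (1 / (n : ℝ) - 1 / q) with hc1
  set c2 := (om n) ^ (1 / (n : ℝ) - 1 / p) * 2 ^ (1 - n / p) with hc2
  have hc1p : 0 < c1 := by positivity
  have hc2p : 0 < c2 := by positivity
  refine ⟨K * c1, c1 + c2, by positivity, by positivity, ?_⟩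
  intro b f u hS hbK hfin
  set L := LpqNormHB n hn p q d0 2 (fun x => max (f x) 0) with hL
  have hfm : AEStronglyMeasurable (fun x => max (f x) 0) (volume.restrict (halfBall n hn 2)) :=
    (hS.fc.sup continuousOn_const).aestronglyMeasurable hS.op.measurableSet
  refine ⟨hS, by positivity, ?_, ?_, ?_⟩
  · intro U x0 r hU hUD hr hUr
    have hbm : AEStronglyMeasurable (fun x => |b x|) (volume.restrict U) :=
      ((hS.bc.mono hUD).abs).aestronglyMeasurable hU.measurableSet
    have hb1 : LpNormE n q (fun x => |b x|) U ≤ ENNReal.ofReal K := by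
      refine le_trans (le_of_eq ?_) ((LpNormE_mono hq0 b hUD).trans hbK)
      unfold LpNormE
      simp
    have := holder' hn hq.le hbm (fun x => abs_nonneg _) hK.le hr hUr hb1
    refine le_trans (le_of_eq ?_) this
    apply setLIntegral_congr_fun hU.measurableSet
    intro x hx
    simp only
    rw [abs_of_nonneg (hS.b0 x (hUD hx))]
  · have h1 : LpNormE n p (fun x => max (f x) 0) (halfBall n hn 2) ≤ ENNReal.ofReal L.toReal := by
      rw [ENNReal.ofReal_toReal hfin, hL]; exact le_self_add
    have := holder' hn hp hfm (fun x => le_max_right _ _) ENNReal.toReal_nonneg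
      (r := 2) (x0 := 0) (by norm_num) (fun x hx => by simpa using hx.1) h1
    refine this.trans (ENNReal.ofReal_le_ofReal ?_)
    apply pow_le_pow_left₀ (by positivity)
    rw [mul_assoc, ← hc2, mul_comm]
    gcongr
    linarith
  · intro U x0 r hU hUD hr hUd hUr
    have h1 : LpNormE n q (fun x => max (f x) 0) U ≤ ENNReal.ofReal L.toReal := by
      rw [ENNReal.ofReal_toReal hfin, hL]
      refine (LpNormE_mono hq0 _ ?_).trans le_add_self
      exact fun x hx => ⟨hUD hx, hUd x hx⟩
    have := holder' hn hq.le (hfm.mono_measure (Measure.restrict_mono hUD le_rfl))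
      (fun x => le_max_right _ _) ENNReal.toReal_nonneg hr hUr h1
    refine this.trans (ENNReal.ofReal_le_ofReal ?_)
    apply pow_le_pow_left₀ (by positivity)
    rw [← hc1, mul_comm L.toReal]
    gcongr
    linarith

end holder
end QSMP
namespace QSMP

open Matrix Filter Topology

section chain
variable {n : ℕ}

theorem J_bern {ρ : ℝ} (k : ℕ) {s t : ℝ} (hs : 0 ≤ s) (ht : 0 ≤ t) :
    J ρ k t - (k / ρ ^ 2) * J ρ (k + 1) t * (s - t) ≤ J ρ k s := by
  by_cases hρ : ρ = 0
  · simp [J, hρ]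
  have ha : (0 : ℝ) < 1 + s / ρ ^ 2 := by positivity
  have hb : (0 : ℝ) < 1 + t / ρ ^ 2 := by positivity
  have hst : s - t = ρ ^ 2 * ((1 + s / ρ ^ 2) - (1 + t / ρ ^ 2)) := by field_simp; ring
  rw [hst]
  unfold J
  set a := 1 + s / ρ ^ 2
  set b := 1 + t / ρ ^ 2
  have h1 : 1 + (k : ℝ) * (b / a - 1) ≤ (b / a) ^ k := by
    have := one_add_mul_le_pow (a := b / a - 1) (by have : 0 < b / a := by positivity
                                                    linarith) k
    simpa using this
  have h2 : 1 - a / b ≤ b / a - 1 := by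
    have : b / a - 1 - (1 - a / b) = (b - a) ^ 2 / (a * b) := by field_simp
    have h3 : 0 ≤ (b - a) ^ 2 / (a * b) := by positivity
    linarith
  have h3 : 1 + (k : ℝ) * (1 - a / b) ≤ (b / a) ^ k := by
    refine le_trans ?_ h1
    gcongr
  calc (b ^ k)⁻¹ - k / ρ ^ 2 * (b ^ (k + 1))⁻¹ * (ρ ^ 2 * (a - b))
      = (b ^ k)⁻¹ * (1 + (k : ℝ) * (1 - a / b)) := by
        rw [pow_succ]; field_simp; ring
    _ ≤ (b ^ k)⁻¹ * (b / a) ^ k := by gcongr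
    _ = (a ^ k)⁻¹ := by rw [div_pow]; field_simp

theorem local_barrier (hn : 1 ≤ n) {lam Lam : ℝ} (hl : 0 < lam) (hL : lam ≤ Lam) :
    ∃ (m : ℕ) (C δ : ℝ), 1 ≤ m ∧ 0 < C ∧ 0 < δ ∧ ∀ (b f u : E n → ℝ) (y : E n) (ρ T : ℝ),
      0 < ρ → 0 ≤ T → Sup n lam Lam b f u (Metric.ball y (4 * ρ)) →
      (∀ x ∈ Metric.ball y ρ, T ≤ u x) → ∀ F B : ℝ, 0 ≤ F → 0 ≤ B →
      ∫⁻ x in Metric.ball y (4 * ρ), ENNReal.ofReal ((max (f x) 0) ^ n) ≤ ENNReal.ofReal (F ^ n) →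
      ∫⁻ x in Metric.ball y (4 * ρ), ENNReal.ofReal ((b x) ^ n) ≤ ENNReal.ofReal (B ^ n) → B ≤ δ →
      ∀ x ∈ Metric.ball y (4 * ρ),
        T * (bar m ρ y x - ((17 : ℝ) ^ m)⁻¹) - C * ρ * (F + T / ρ * B) ≤ u x := by
  obtain ⟨C, δ, hC, hδ, hcomp⟩ := comparison n hn hl hL
  obtain ⟨m0, hm0⟩ := exists_nat_ge (5 * Lam * n / lam)
  set m := m0 + 1 with hmdef
  have hm : 5 * Lam * n ≤ (m + 1) * lam := by
    rw [div_le_iff₀ hl] at hm0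
    refine hm0.trans ?_
    gcongr
    rw [hmdef]; push_cast; linarith
  have hm1 : (1 : ℝ) ≤ m := by rw [hmdef]; push_cast; linarith [Nat.cast_nonneg (α := ℝ) m0]
  refine ⟨m, C * 8 * (8 * m), δ, by omega, by positivity, hδ, ?_⟩
  intro b f u y ρ T hρ hT hS hu F B hF hB hFi hBi hBδ x hx
  have ht := ((TF.bar m ρ y).smul T).add (TF.aff (-(T * ((17 : ℝ) ^ m)⁻¹)) (0 : E n))
  have hle : ∀ z : E n, bar m ρ y z ≤ 1 := fun z => J_le_one m (by positivity)
  have h17 : (0 : ℝ) < ((17 : ℝ) ^ m)⁻¹ := by positivity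
  have key := hcomp b f u _ hS (8 * ρ) (by positivity) (by
    intro z hz w hw
    rw [Metric.mem_ball] at hz hw
    rw [← dist_eq_norm]
    linarith [dist_triangle_right z w y]) _ _ _ ht (T * (8 * m / ρ)) (by positivity) (by
    intro z hz
    rw [Metric.mem_ball, dist_eq_norm] at hz
    rw [add_zero, norm_smul, Real.norm_of_nonneg hT]
    gcongr
    exact barg_norm_le m hρ hz.le) (by
    intro z hz huz A hA
    have hz1 : ¬ ‖z - y‖ < ρ := by
      intro h
      have h1 := hu z (by rwa [Metric.mem_ball, dist_eq_norm])
      simp only [inner_zero_left, add_zero] at huz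
      have := hle z
      nlinarith [mul_nonneg hT (sub_nonneg.2 this), mul_nonneg hT h17.le]
    rw [Metric.mem_ball, dist_eq_norm] at hz
    push Not at hz1
    have := bar_trace_ge hl hL hm hρ (y := y) (x := z) (by linarith) hz.le hA
    rw [add_zero, mat_smul, Matrix.mul_smul, Matrix.trace_smul, smul_eq_mul]
    have hL0 : 0 < Lam := by linarith
    exact mul_nonneg hT (le_trans (by positivity) this))
    _ (continuous_iff_continuousAt.2 fun z => (ht.d1 z).hasFDerivAt.continuousAt) (by
    intro z hz hz2
    rw [Metric.mem_ball, dist_eq_norm] at hz2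
    push Not at hz2
    have h1 := J_anti (ρ := ρ) m (s := 16 * ρ ^ 2) (t := ‖z - y‖ ^ 2) (by positivity) (by nlinarith)
    rw [J_scale hρ] at h1
    norm_num at h1
    simp only [inner_zero_left, add_zero]
    have h2 : T * bar m ρ y z ≤ T * ((17 : ℝ) ^ m)⁻¹ := by
      gcongr; exact h1
    linarith) (by
    intro z hz
    have := hS.u0 z hz
    linarith) F B hF hB hFi hBi hBδ x hx
  simp only [inner_zero_left, add_zero] at key
  have h3 : C * (8 * ρ) * (F + T * (8 * m / ρ) * B) ≤ C * 8 * (8 * m) * ρ * (F + T / ρ * B) := by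
    have e1 : C * (8 * ρ) * (F + T * (8 * m / ρ) * B) =
      C * 8 * ρ * F + C * 8 * (8 * m) * ρ * (T / ρ * B) := by ring
    have e2 : C * 8 * ρ * F ≤ C * 8 * (8 * m) * ρ * F := by
      have : C * 8 * (8 * m) * ρ * F = C * 8 * ρ * F * (8 * m) := by ring
      rw [this]
      exact le_mul_of_one_le_right (by positivity) (by linarith)
    rw [e1, mul_add]
    linarith
  linarith

/-- one propagation step -/
theorem propagate (hn : 1 ≤ n) {lam Lam d0 α Kb : ℝ} (hl : 0 < lam) (hL : lam ≤ Lam)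
    (hα : 0 < α) (hKb : 0 < Kb) :
    ∃ κ C ρ0 : ℝ, 0 < κ ∧ κ < 1 ∧ 0 < C ∧ 0 < ρ0 ∧ ∀ (N : ℝ) (b f u : E n → ℝ),
      Dat n hn lam Lam d0 α Kb N b f u → ∀ (y : E n) (ρ T : ℝ), 0 < ρ → ρ ≤ ρ0 →
      Metric.ball y (4 * ρ) ⊆ halfBall n hn 2 → (∀ x ∈ Metric.ball y ρ, T ≤ u x) →
      ∀ x ∈ Metric.ball y (2 * ρ), κ * T - C * N ≤ u x := by
  obtain ⟨m, C, δ, hm1, hC, hδ, hbar⟩ := local_barrier hn hl hL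
  set κ := (((5 : ℝ) ^ m)⁻¹ - ((17 : ℝ) ^ m)⁻¹) / 2 with hκ
  have h5 : ((17 : ℝ) ^ m)⁻¹ < ((5 : ℝ) ^ m)⁻¹ := by
    gcongr
    · norm_num
  have h5' : ((5 : ℝ) ^ m)⁻¹ ≤ 1 := inv_le_one_of_one_le₀ (one_le_pow₀ (by norm_num))
  have h17 : (0 : ℝ) < ((17 : ℝ) ^ m)⁻¹ := by positivity
  have hκ0 : 0 < κ := by rw [hκ]; linarith
  have hκ1 : κ < 1 := by rw [hκ]; linarith
  -- choose the radius
  set β := min δ (κ / C) / Kb with hβ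
  have hβ0 : 0 < β := by positivity
  set ρ0 := min 1 (β ^ (1 / α) / 4) with hρ0
  have hρ00 : 0 < ρ0 := by positivity
  refine ⟨κ, C, ρ0, hκ0, hκ1, hC, hρ00, ?_⟩
  intro N b f u hD y ρ T hρ hρρ hball hu x hx
  have hx4 : x ∈ Metric.ball y (4 * ρ) := Metric.ball_subset_ball (by linarith) hx
  rcases le_or_gt T 0 with hT | hT
  · have := hD.sup.u0 x (hball hx4)
    have h1 : κ * T ≤ 0 := mul_nonpos_of_nonneg_of_nonpos hκ0.le hT
    have h2 : 0 ≤ C * N := mul_nonneg hC.le hD.N0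
    linarith
  have hB : Kb * (4 * ρ) ^ α ≤ min δ (κ / C) := by
    have h1 : 4 * ρ ≤ β ^ (1 / α) := by
      have : ρ ≤ β ^ (1 / α) / 4 := hρρ.trans (min_le_right _ _)
      linarith
    have h2 : (4 * ρ) ^ α ≤ β := by
      calc (4 * ρ) ^ α ≤ (β ^ (1 / α)) ^ α := Real.rpow_le_rpow (by positivity) h1 hα.le
        _ = β := by rw [← Real.rpow_mul hβ0.le, one_div, inv_mul_cancel₀ hα.ne', Real.rpow_one]
    calc Kb * (4 * ρ) ^ α ≤ Kb * β := by gcongr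
      _ = _ := by rw [hβ]; field_simp
  have hN := hD.N0
  have hBpos : 0 ≤ Kb * (4 * ρ) ^ α := by positivity
  have key := hbar b f u y ρ T hρ hT.le (hD.sup.mono Metric.isOpen_ball hball) hu N
    (Kb * (4 * ρ) ^ α) hD.N0 hBpos
    ((lintegral_mono_set hball).trans hD.hf)
    (hD.hb _ y _ Metric.isOpen_ball hball (by positivity) subset_rfl)
    (hB.trans (min_le_left _ _)) x hx4
  set B := Kb * (4 * ρ) ^ α
  have hb1 : ((5 : ℝ) ^ m)⁻¹ ≤ bar m ρ y x := by
    rw [Metric.mem_ball, dist_eq_norm] at hx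
    have h1 := J_anti (ρ := ρ) m (s := ‖x - y‖ ^ 2) (t := 4 * ρ ^ 2) (by positivity)
      (by nlinarith [norm_nonneg (x - y)])
    rw [J_scale hρ] at h1
    norm_num at h1
    exact h1
  have hCB : C * B ≤ κ := by
    have : B ≤ κ / C := hB.trans (min_le_right _ _)
    rw [le_div_iff₀ hC] at this
    linarith
  have e1 : C * ρ * (N + T / ρ * B) = C * ρ * N + T * (C * B) := by field_simp
  have e2 : T * (C * B) ≤ T * κ := by gcongr
  have e3 : T * (2 * κ) ≤ T * (bar m ρ y x - ((17 : ℝ) ^ m)⁻¹) := by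
    gcongr
    rw [hκ]; linarith
  have e4 : C * ρ * N ≤ C * 1 * N := by
    gcongr
    exact hρρ.trans (min_le_left _ _)
  rw [e1] at key
  nlinarith

theorem halfBall_convex (hn : 1 ≤ n) (R : ℝ) : Convex ℝ (halfBall n hn R) := by
  have h1 : halfBall n hn R = Metric.ball 0 R ∩ {x | 0 < lastC n hn x} := by
    ext x; simp [halfBall]
  rw [h1]
  refine (convex_ball _ _).inter ?_
  intro x hx y hy a b ha hb hab
  simp only [Set.mem_ofPred_eq, lastC, PiLp.add_apply, PiLp.smul_apply, smul_eq_mul] at *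
  rcases eq_or_lt_of_le ha with h | h
  · have : b = 1 := by linarith
    subst this; subst h; simpa using hy
  · have := mul_pos h hx
    have := mul_nonneg hb hy.le
    linarith

theorem ball_interp (hn : 1 ≤ n) {y z : E n} {r s t R : ℝ} (hr : 0 < r) (hs : 0 < s)
    (ht0 : 0 ≤ t) (ht1 : t ≤ 1)
    (hy : Metric.ball y r ⊆ halfBall n hn R) (hz : Metric.ball z s ⊆ halfBall n hn R) :
    Metric.ball (y + t • (z - y)) (r + t * (s - r)) ⊆ halfBall n hn R := by
  intro x hx
  rw [Metric.mem_ball, dist_eq_norm] at hx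
  set q := r + t * (s - r) with hq
  have hq' : q = (1 - t) * r + t * s := by rw [hq]; ring
  have hq0 : 0 < q := by
    rcases eq_or_lt_of_le ht0 with h | h
    · rw [hq', ← h]; simpa using hr
    · have := mul_pos h hs
      have := mul_nonneg (sub_nonneg.2 ht1) hr.le
      linarith
  set v := q⁻¹ • (x - (y + t • (z - y))) with hv
  have hvn : ‖v‖ < 1 := by
    rw [hv, norm_smul, Real.norm_of_nonneg (by positivity), inv_mul_lt_iff₀ hq0]
    simpa using hx
  have hx2 : x = (1 - t) • (y + r • v) + t • (z + s • v) := by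
    have : q • v = x - (y + t • (z - y)) := by rw [hv, smul_smul, mul_inv_cancel₀ hq0.ne', one_smul]
    have h2 : x = (y + t • (z - y)) + q • v := by rw [this]; abel
    rw [h2, hq']; module
  rw [hx2]
  apply halfBall_convex hn R
  · apply hy
    rw [Metric.mem_ball, dist_eq_norm, add_sub_cancel_left, norm_smul, Real.norm_of_nonneg hr.le]
    nlinarith
  · apply hz
    rw [Metric.mem_ball, dist_eq_norm, add_sub_cancel_left, norm_smul, Real.norm_of_nonneg hs.le]
    nlinarith
  · linarith
  · exact ht0
  · ring

theorem chain (hn : 1 ≤ n) {lam Lam d0 α Kb : ℝ} (hl : 0 < lam) (hL : lam ≤ Lam)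
    (hα : 0 < α) (hKb : 0 < Kb) :
    ∃ ρ0 : ℝ, 0 < ρ0 ∧ ∀ s : ℝ, 0 < s → s ≤ ρ0 → s ≤ 1 →
    ∃ (c C : ℝ) (M : ℕ), 0 < c ∧ 0 < C ∧ ∀ (N : ℝ) (b f u : E n → ℝ),
      Dat n hn lam Lam d0 α Kb N b f u → ∀ (y z : E n) (ρ T : ℝ), 0 < ρ → ρ ≤ s / 2 → 0 ≤ T →
      Metric.ball y (4 * ρ) ⊆ halfBall n hn 2 → Metric.ball z (4 * s) ⊆ halfBall n hn 2 →
      (∀ x ∈ Metric.ball y ρ, T ≤ u x) →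
      ∀ x ∈ Metric.ball z s, c * ρ ^ M * T - C * N ≤ u x := by
  obtain ⟨κ, C, ρ0, hκ0, hκ1, hC, hρ0, hprop⟩ := propagate hn hl hL hα hKb (d0 := d0)
  refine ⟨ρ0, hρ0, fun s hs hsρ hs1 => ?_⟩
  set γ := 1 + s / 10 with hγ
  have hγ1 : 1 < γ := by rw [hγ]; linarith
  have hγ2 : γ ≤ 2 := by rw [hγ]; linarith
  obtain ⟨M, hM⟩ := pow_unbounded_of_one_lt (1 / κ) hγ1
  refine ⟨((4 * s) ^ M)⁻¹, C / (1 - κ), M, by positivity, div_pos hC (by linarith), ?_⟩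
  intro N b f u hD y z ρ T hρ hρs hT hy hz hu
  set C' := C / (1 - κ) with hC'
  have hC'' : κ * C' + C = C' := by
    have : 1 - κ ≠ 0 := by linarith
    rw [hC']; field_simp; ring
  have hyz : ‖z - y‖ ≤ 4 := by
    have h1 := (hy (Metric.mem_ball_self (by positivity))).1
    have h2 := (hz (Metric.mem_ball_self (by positivity))).1
    linarith [norm_sub_le z y]
  set t : ℕ → ℝ := fun k => min 1 (ρ * (γ ^ k - 1) / s) with ht
  have hγk : ∀ k : ℕ, 1 ≤ γ ^ k := fun k => one_le_pow₀ hγ1.le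
  have ht0 : ∀ k, 0 ≤ t k := by
    intro k
    have := hγk k
    refine le_min zero_le_one ?_
    have : 0 ≤ γ ^ k - 1 := by linarith
    positivity
  have ht1 : ∀ k, t k ≤ 1 := fun k => min_le_left _ _
  have hclaim : ∀ k, ∀ x ∈ Metric.ball (y + t k • (z - y)) (ρ + t k * (s - ρ)),
      κ ^ k * T - C' * N ≤ u x := by
    intro k
    induction k with
    | zero =>
      intro x hx
      have ht00 : t 0 = 0 := by simp [ht]
      rw [ht00] at hx
      simp only [zero_smul, zero_mul, add_zero] at hx
      have := hu x hx
      have h2 : 0 ≤ C' * N := mul_nonneg (div_pos hC (by linarith)).le hD.N0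
      rw [pow_zero, one_mul]; linarith
    | succ k ih =>
      have hR0 : 0 < ρ + t k * (s - ρ) := by
        have := mul_nonneg (ht0 k) (show 0 ≤ s - ρ by linarith)
        linarith
      have hR1 : ρ + t k * (s - ρ) ≤ s := by
        have : t k * (s - ρ) ≤ 1 * (s - ρ) := by
          gcongr
          · linarith
          · exact ht1 k
        linarith
      have hsub : Metric.ball (y + t k • (z - y)) (4 * (ρ + t k * (s - ρ))) ⊆ halfBall n hn 2 := by
        have := ball_interp hn (by positivity) (by positivity) (ht0 k) (ht1 k) hy hz
        convert this using 2
        ring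
      have hstep := hprop N b f u hD _ _ _ hR0 (hR1.trans hsρ) hsub ih
      have hΔ0 : t k ≤ t (k + 1) := by
        simp only [ht]
        gcongr
        · exact hγ1.le
        · omega
      have hΔ : 5 * (t (k + 1) - t k) ≤ ρ + t k * (s - ρ) := by
        rcases le_or_gt 1 (ρ * (γ ^ k - 1) / s) with h | h
        · have e1 : t k = 1 := min_eq_left h
          have := ht1 (k + 1)
          rw [e1] at hR0 ⊢; linarith
        · have e1 : t k = ρ * (γ ^ k - 1) / s := min_eq_right h.le
          have e2 : t (k + 1) ≤ ρ * (γ ^ (k + 1) - 1) / s := min_le_right _ _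
          have e3 : ρ * (γ ^ (k + 1) - 1) / s - ρ * (γ ^ k - 1) / s = ρ * γ ^ k / 10 := by
            rw [pow_succ]
            have : γ ^ k * γ = γ ^ k + γ ^ k * (s / 10) := by rw [hγ]; ring
            rw [this]; field_simp; ring
          have e4 : ρ * (γ ^ k - 1) / s * (s / 2) ≤ t k * (s - ρ) := by
            rw [e1]
            have := hγk k
            have : 0 ≤ γ ^ k - 1 := by linarith
            gcongr
            linarith
          have e5 : ρ * (γ ^ k - 1) / s * (s / 2) = ρ * (γ ^ k - 1) / 2 := by field_simp
          rw [e5] at e4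
          linarith
      intro x hx
      have hx2 : x ∈ Metric.ball (y + t k • (z - y)) (2 * (ρ + t k * (s - ρ))) := by
        rw [Metric.mem_ball, dist_eq_norm] at hx ⊢
        have e1 : x - (y + t k • (z - y)) = (x - (y + t (k + 1) • (z - y))) +
            (t (k + 1) - t k) • (z - y) := by module
        rw [e1]
        refine (norm_add_le _ _).trans_lt ?_
        rw [norm_smul, Real.norm_of_nonneg (by linarith)]
        have e2 : (t (k + 1) - t k) * ‖z - y‖ ≤ (t (k + 1) - t k) * 4 := by
          gcongr
        have e3 : (t (k + 1) - t k) * (s - ρ) ≤ (t (k + 1) - t k) * 1 := by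
          gcongr
          linarith
        linarith
      have := hstep x hx2
      calc κ ^ (k + 1) * T - C' * N = κ * (κ ^ k * T - C' * N) - C * N := by
            rw [pow_succ]; linear_combination (N) * hC''
        _ ≤ u x := this
  obtain ⟨k0, hk1, hk2⟩ := exists_nat_pow_near (show 1 ≤ 1 + s / ρ by
    have : 0 < s / ρ := by positivity
    linarith) hγ1
  have htk : t (k0 + 1) = 1 := by
    apply min_eq_left
    rw [le_div_iff₀ hs, one_mul]
    have : s / ρ ≤ γ ^ (k0 + 1) - 1 := by linarith
    rw [div_le_iff₀ hρ] at this
    linarith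
  intro x hx
  have h1 := hclaim (k0 + 1) x (by
    rw [htk]; simpa using hx)
  refine le_trans ?_ h1
  have hge : ((4 * s) ^ M)⁻¹ * ρ ^ M ≤ κ ^ (k0 + 1) := by
    have e1 : γ ^ (k0 + 1) ≤ 4 * s / ρ := by
      rw [pow_succ]
      have e2 : 1 ≤ s / ρ := by rw [le_div_iff₀ hρ]; linarith
      calc γ ^ k0 * γ ≤ (1 + s / ρ) * 2 := by gcongr
        _ ≤ (s / ρ + s / ρ) * 2 := by gcongr
        _ = 4 * s / ρ := by ring
    have e3 : (γ ^ M)⁻¹ ≤ κ := by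
      rw [inv_le_comm₀ (by positivity) hκ0, ← one_div]
      exact hM.le
    calc ((4 * s) ^ M)⁻¹ * ρ ^ M = ((4 * s / ρ) ^ M)⁻¹ := by rw [div_pow]; field_simp
      _ ≤ ((γ ^ (k0 + 1)) ^ M)⁻¹ := by gcongr
      _ = ((γ ^ M)⁻¹) ^ (k0 + 1) := by rw [inv_pow, ← pow_mul, ← pow_mul, mul_comm]
      _ ≤ κ ^ (k0 + 1) := by gcongr
  have : ((4 * s) ^ M)⁻¹ * ρ ^ M * T ≤ κ ^ (k0 + 1) * T := by gcongr
  linarith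

end chain
end QSMP
namespace QSMP

open Matrix Filter Topology

section hopf
variable {n : ℕ}

/-- last basis vector -/
noncomputable def en (n : ℕ) (hn : 1 ≤ n) : E n := EuclideanSpace.single ⟨n - 1, by omega⟩ (1 : ℝ)

theorem en_inner (hn : 1 ≤ n) (x : E n) : inner ℝ (en n hn) x = lastC n hn x := by
  unfold en lastC
  rw [EuclideanSpace.inner_single_left]
  simp

theorem en_norm (hn : 1 ≤ n) : ‖en n hn‖ = 1 := by
  unfold en; simp

theorem lastC_add (hn : 1 ≤ n) (x y : E n) : lastC n hn (x + y) = lastC n hn x + lastC n hn y := rfl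
theorem lastC_sub (hn : 1 ≤ n) (x y : E n) : lastC n hn (x - y) = lastC n hn x - lastC n hn y := rfl
theorem lastC_smul (hn : 1 ≤ n) (c : ℝ) (x : E n) : lastC n hn (c • x) = c * lastC n hn x := rfl
theorem lastC_en (hn : 1 ≤ n) : lastC n hn (en n hn) = 1 := by
  rw [← en_inner, real_inner_self_eq_norm_sq, en_norm]; norm_num

theorem abs_lastC_le (hn : 1 ≤ n) (x : E n) : |lastC n hn x| ≤ ‖x‖ := by
  rw [← en_inner]
  have := abs_real_inner_le_norm (en n hn) x
  rwa [en_norm, one_mul] at this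

theorem proj_norm_le (hn : 1 ≤ n) (x : E n) : ‖x - lastC n hn x • en n hn‖ ≤ ‖x‖ := by
  have h : ‖x - lastC n hn x • en n hn‖ ^ 2 ≤ ‖x‖ ^ 2 := by
    rw [norm_sub_sq_real, inner_smul_right, real_inner_comm, en_inner, norm_smul, en_norm]
    simp only [Real.norm_eq_abs, mul_one, sq_abs]
    nlinarith [sq_nonneg (lastC n hn x)]
  exact le_of_sq_le_sq h (norm_nonneg _)

theorem ball_sub_half (hn : 1 ≤ n) {y : E n} {r R : ℝ} (h1 : ‖y‖ + r ≤ R) (h2 : r ≤ lastC n hn y) :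
    Metric.ball y r ⊆ halfBall n hn R := by
  intro x hx
  rw [Metric.mem_ball, dist_eq_norm] at hx
  constructor
  · have := norm_le_norm_add_norm_sub' x y
    linarith
  · have h3 := abs_lastC_le hn (x - y)
    rw [lastC_sub] at h3
    have := (abs_le.1 h3).1
    linarith

/-- linear lower bound near the flat boundary at scale r -/
def HC (n : ℕ) (hn : 1 ≤ n) (u : E n → ℝ) (a σ r : ℝ) : Prop :=
  ∀ x : E n, 0 < lastC n hn x → lastC n hn x ≤ r → ‖x - lastC n hn x • en n hn‖ ≤ 1 + 2 * r →
    a * lastC n hn x - σ ≤ u x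

theorem HC.mono {hn : 1 ≤ n} {u : E n → ℝ} {a σ r a' σ' : ℝ} (h : HC n hn u a σ r) (ha : a' ≤ a)
    (hσ : σ ≤ σ') : HC n hn u a' σ' r := by
  intro x hx hxr hxn
  have h1 := h x hx hxr hxn
  have h2 : a' * lastC n hn x ≤ a * lastC n hn x := by gcongr
  linarith

theorem hopf_base (hn : 1 ≤ n) {lam Lam d0 α Kb : ℝ} (hl : 0 < lam) (hL : lam ≤ Lam)
    (hKb : 0 < Kb) :
    ∃ c C δ : ℝ, 0 < c ∧ 0 < C ∧ 0 < δ ∧ ∀ (N : ℝ) (b f u : E n → ℝ),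
      Dat n hn lam Lam d0 α Kb N b f u → ∀ r T : ℝ, 0 < r → r ≤ 1 / 8 → 2 * r ≤ d0 →
      Kb * r ^ α ≤ δ → 0 ≤ T →
      (∀ y : E n, lastC n hn y = 0 → ‖y‖ ≤ 1 + 2 * r →
        ∀ w ∈ Metric.ball (y + r • en n hn) (r / 4), T ≤ u w) →
      HC n hn u (c * T / r) (C * (r * r ^ α) * (N + T / r * Kb)) r := by
  obtain ⟨m, C, δ, hm1, hC, hδ, hbar⟩ := local_barrier hn hl hL
  have hm0 : (0 : ℝ) < m := by exact_mod_cast hm1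
  refine ⟨16 * m * ((17 : ℝ) ^ (m + 1))⁻¹, C, δ, by positivity, hC, hδ, ?_⟩
  intro N b f u hD r T hr hr8 hrd hKr hT hT1 x hx hxr hxn
  set t := lastC n hn x with ht
  set x0 := x - t • en n hn with hx0
  set y := x0 + r • en n hn with hy
  have hx0l : lastC n hn x0 = 0 := by
    rw [hx0, lastC_sub, lastC_smul, lastC_en]; linarith
  have hyl : lastC n hn y = r := by rw [hy, lastC_add, lastC_smul, lastC_en, hx0l]; ring
  have hyn : ‖y‖ ≤ 1 + 3 * r := by
    rw [hy]
    refine (norm_add_le _ _).trans ?_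
    rw [norm_smul, en_norm, Real.norm_of_nonneg hr.le]; linarith
  have e4 : 4 * (r / 4) = r := by ring
  have hball : Metric.ball y (4 * (r / 4)) ⊆ halfBall n hn 2 := by
    rw [e4]; exact ball_sub_half hn (by linarith) hyl.ge
  have hxy : ‖x - y‖ = r - t := by
    have : x - y = (t - r) • en n hn := by rw [hy, hx0]; module
    rw [this, norm_smul, en_norm, Real.norm_eq_abs, abs_of_nonpos (by linarith)]; ring
  have hN := hD.N0
  have hx4 : x ∈ Metric.ball y (4 * (r / 4)) := by
    rw [Metric.mem_ball, dist_eq_norm, hxy]; linarith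
  have key := hbar b f u y (r / 4) T (by positivity) hT (hD.sup.mono Metric.isOpen_ball hball)
    (hT1 x0 hx0l hxn) (N * r ^ α) (Kb * r ^ α) (by positivity) (by positivity)
    (hD.hfq _ y _ Metric.isOpen_ball hball hr (by
      intro w hw
      rw [e4, Metric.mem_ball, dist_eq_norm] at hw
      have h3 := abs_lastC_le hn (w - y)
      rw [lastC_sub] at h3
      have := (abs_le.1 h3).2
      linarith) (by rw [e4]))
    (hD.hb _ y _ Metric.isOpen_ball hball hr (by rw [e4])) hKr x hx4
  have hB := J_bern (ρ := r / 4) m (s := ‖x - y‖ ^ 2) (t := 16 * (r / 4) ^ 2)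
    (by positivity) (by positivity)
  rw [J_scale (by positivity), J_scale (by positivity)] at hB
  rw [show (1 + 16 : ℝ) = 17 by norm_num] at hB
  have h1 : 16 * m * ((17 : ℝ) ^ (m + 1))⁻¹ * (t / r) ≤ bar m (r / 4) y x - ((17 : ℝ) ^ m)⁻¹ := by
    have h2 : 16 * m * ((17 : ℝ) ^ (m + 1))⁻¹ * (t / r) ≤
        - (m / (r / 4) ^ 2 * ((17 : ℝ) ^ (m + 1))⁻¹ * (‖x - y‖ ^ 2 - 16 * (r / 4) ^ 2)) := by
      rw [hxy]
      have e5 : - (m / (r / 4) ^ 2 * ((17 : ℝ) ^ (m + 1))⁻¹ * ((r - t) ^ 2 - 16 * (r / 4) ^ 2))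
        = 16 * m * ((17 : ℝ) ^ (m + 1))⁻¹ * ((2 * r * t - t ^ 2) / r ^ 2) := by
        field_simp; ring
      rw [e5]
      refine mul_le_mul_of_nonneg_left ?_ (by positivity)
      rw [div_le_div_iff₀ hr (by positivity)]
      nlinarith [mul_pos hx hr, mul_nonneg hx.le (sub_nonneg.2 hxr)]
    have h3 : J (r / 4) m (‖x - y‖ ^ 2) = bar m (r / 4) y x := rfl
    rw [h3] at hB
    linarith
  have h7 : T * (16 * m * ((17 : ℝ) ^ (m + 1))⁻¹ * (t / r)) ≤
      T * (bar m (r / 4) y x - ((17 : ℝ) ^ m)⁻¹) := by gcongr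
  have h8 : C * (r / 4) * (N * r ^ α + T / (r / 4) * (Kb * r ^ α)) ≤
      C * (r * r ^ α) * (N + T / r * Kb) := by
    have e7 : C * (r / 4) * (N * r ^ α + T / (r / 4) * (Kb * r ^ α)) =
      C * (r * r ^ α) * (N / 4 + T / r * Kb) := by field_simp
    rw [e7]
    gcongr
    linarith
  have h9 : 16 * m * ((17 : ℝ) ^ (m + 1))⁻¹ * T / r * t =
    T * (16 * m * ((17 : ℝ) ^ (m + 1))⁻¹ * (t / r)) := by ring
  rw [h9]
  linarith

theorem hopf_step (hn : 1 ≤ n) {lam Lam d0 α Kb : ℝ} (hl : 0 < lam) (hL : lam ≤ Lam)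
    (hKb : 0 < Kb) :
    ∃ Q C δ : ℝ, 1 ≤ Q ∧ 0 < C ∧ 0 < δ ∧ ∀ (N : ℝ) (b f u : E n → ℝ),
      Dat n hn lam Lam d0 α Kb N b f u → ∀ r a σ : ℝ, 0 < r → r ≤ 1 / 8 → r ≤ d0 →
      Kb * r ^ α ≤ δ → 0 ≤ a → 0 ≤ σ → HC n hn u a σ r →
      HC n hn u (a - (Q + 1) * σ / r)
        (C * (2 * r) * (N * r ^ α + (a + 5 * Q * σ / r) * (Kb * r ^ α))) (r / 2) := by
  obtain ⟨C, δ, hC, hδ, hcomp⟩ := comparison n hn hl hL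
  have hL0 : 0 < Lam := by linarith
  have hn0 : (1 : ℝ) ≤ n := by exact_mod_cast hn
  set Q := Lam * n / lam with hQ
  have hQ1 : 1 ≤ Q := by
    rw [hQ, le_div_iff₀ hl]; nlinarith
  refine ⟨Q, C, δ, hQ1, hC, hδ, ?_⟩
  intro N b f u hD r a σ hr hr8 hrd hKr ha hσ hHC x hx hxr hxn
  have hN := hD.N0
  set t := lastC n hn x with ht
  set x0 := x - t • en n hn with hx0
  have hx0l : lastC n hn x0 = 0 := by
    rw [hx0, lastC_sub, lastC_smul, lastC_en]; linarith
  set U := Metric.ball x0 r ∩ {z | 0 < lastC n hn z} with hU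
  have hUo : IsOpen U := Metric.isOpen_ball.inter (isOpen_lt continuous_const (lastC_cont hn))
  have hUD : U ⊆ halfBall n hn 2 := by
    rintro z ⟨hz, hz2⟩
    rw [Metric.mem_ball, dist_eq_norm] at hz
    refine ⟨?_, hz2⟩
    have := norm_le_norm_add_norm_sub' z x0
    linarith
  have hlt : ∀ z, ‖z - x0‖ ≤ r → lastC n hn z ≤ r := by
    intro z hz
    have h3 := abs_lastC_le hn (z - x0)
    rw [lastC_sub, hx0l] at h3
    have := (abs_le.1 h3).2
    linarith
  have hproj : ∀ z, ‖z - x0‖ ≤ r → ‖z - lastC n hn z • en n hn‖ ≤ 1 + 2 * r := by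
    intro z hz
    have h1 := proj_norm_le hn (z - x0)
    rw [lastC_sub, hx0l, sub_zero] at h1
    have h2 : z - lastC n hn z • en n hn = x0 + (z - x0 - lastC n hn z • en n hn) := by abel
    rw [h2]
    refine (norm_add_le _ _).trans ?_
    linarith
  have htf := (((TF.nsq x0).smul (-(σ / r ^ 2))).add ((TF.linsq (en n hn)).smul (σ * Q / r ^ 2))).add
    (TF.aff 0 ((a - σ * Q / r) • en n hn))
  have hval : ∀ z : E n, -(σ / r ^ 2) * ‖z - x0‖ ^ 2 + σ * Q / r ^ 2 * (inner ℝ (en n hn) z) ^ 2 +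
      (0 + inner ℝ ((a - σ * Q / r) • en n hn) z) =
      a * lastC n hn z - σ * (‖z - x0‖ ^ 2 / r ^ 2 + Q * (lastC n hn z / r)
        - Q * (lastC n hn z ^ 2 / r ^ 2)) := by
    intro z
    rw [inner_smul_left, en_inner]
    simp only [conj_trivial]
    ring
  have hcont : Continuous (fun z : E n => -(σ / r ^ 2) * ‖z - x0‖ ^ 2 +
      σ * Q / r ^ 2 * (inner ℝ (en n hn) z) ^ 2 + (0 + inner ℝ ((a - σ * Q / r) • en n hn) z)) :=
    continuous_iff_continuousAt.2 fun z => (htf.d1 z).hasFDerivAt.continuousAt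
  have key := hcomp b f u U (hD.sup.mono hUo hUD) (2 * r) (by positivity) (by
    rintro z ⟨hz, -⟩ w ⟨hw, -⟩
    rw [Metric.mem_ball] at hz hw
    rw [← dist_eq_norm]
    linarith [dist_triangle_right z w x0]) _ _ _ htf (a + 5 * Q * σ / r) (by positivity) (by
    rintro z ⟨hz, hz0⟩
    rw [Metric.mem_ball, dist_eq_norm] at hz
    have hz0' : 0 < lastC n hn z := hz0
    have h1 : ‖(-(σ / r ^ 2)) • ((2 : ℝ) • (z - x0))‖ ≤ 2 * σ / r := by
      rw [norm_smul, norm_smul, norm_neg, Real.norm_of_nonneg (by positivity)]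
      calc σ / r ^ 2 * (‖(2 : ℝ)‖ * ‖z - x0‖) ≤ σ / r ^ 2 * (2 * r) := by
            gcongr; norm_num
        _ = 2 * σ / r := by field_simp
    have h2 : ‖(σ * Q / r ^ 2) • ((2 * inner ℝ (en n hn) z) • en n hn)‖ ≤ 2 * Q * σ / r := by
      rw [norm_smul, norm_smul, en_norm, en_inner, Real.norm_of_nonneg (by positivity),
        Real.norm_of_nonneg (by positivity)]
      calc σ * Q / r ^ 2 * (2 * lastC n hn z * 1) ≤ σ * Q / r ^ 2 * (2 * r * 1) := by
            gcongr; exact hlt z hz.le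
        _ = 2 * Q * σ / r := by field_simp
    have h3 : ‖(a - σ * Q / r) • en n hn‖ ≤ a + Q * σ / r := by
      rw [norm_smul, en_norm, mul_one]
      refine (norm_sub_le _ _).trans ?_
      rw [Real.norm_of_nonneg ha, Real.norm_of_nonneg (by positivity), mul_comm σ Q]
    have h4 : 2 * σ / r ≤ 2 * Q * σ / r := by
      gcongr
      linarith
    have h5 := norm_add₃_le (a := (-(σ / r ^ 2)) • ((2 : ℝ) • (z - x0)))
      (b := (σ * Q / r ^ 2) • ((2 * inner ℝ (en n hn) z) • en n hn)) (c := (a - σ * Q / r) • en n hn)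
    refine h5.trans ?_
    have e : 5 * Q * σ / r = 2 * Q * σ / r + 2 * Q * σ / r + Q * σ / r := by ring
    linarith) (by
    intro z hz _ A hA
    rw [add_zero, mat_add, mat_smul, mat_smul, mat_smul, mat_smul, Matrix.mul_add, Matrix.trace_add]
    simp only [Matrix.mul_smul, Matrix.trace_smul, smul_eq_mul]
    have h1 := hA.tr_id_le
    have h2 := hA.le_tr_rk (en n hn)
    rw [en_norm] at h2
    have h3 : -(σ / r ^ 2) * (2 * (A * mat (ContinuousLinearMap.id ℝ (E n))).trace) +
        σ * Q / r ^ 2 * (2 * (A * mat (rk (en n hn))).trace) = 2 * (σ / r ^ 2) *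
        (Q * (A * mat (rk (en n hn))).trace - (A * mat (ContinuousLinearMap.id ℝ (E n))).trace) := by
      ring
    rw [h3]
    have h4 : Q * (lam * 1 ^ 2) ≤ Q * (A * mat (rk (en n hn))).trace := by gcongr
    have h5 : Q * (lam * 1 ^ 2) = Lam * n := by rw [hQ]; field_simp
    apply mul_nonneg (by positivity)
    linarith)
    (fun z => (-(σ / r ^ 2) * ‖z - x0‖ ^ 2 +
      σ * Q / r ^ 2 * (inner ℝ (en n hn) z) ^ 2 + (0 + inner ℝ ((a - σ * Q / r) • en n hn) z))
      - max (a * lastC n hn z - σ) 0)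
    (hcont.sub (((continuous_const.mul (lastC_cont hn)).sub continuous_const).max
      continuous_const)) (by
    intro z hz hzU
    have hzc : ‖z - x0‖ ≤ r ∧ 0 ≤ lastC n hn z := by
      have hcl : IsClosed (Metric.closedBall x0 r ∩ {z | 0 ≤ lastC n hn z}) :=
        Metric.isClosed_closedBall.inter (isClosed_le continuous_const (lastC_cont hn))
      have := closure_minimal (s := U) (t := Metric.closedBall x0 r ∩ {z | 0 ≤ lastC n hn z})
        (fun w hw => ⟨Metric.ball_subset_closedBall hw.1, show 0 ≤ lastC n hn w from le_of_lt (show 0 < lastC n hn w from hw.2)⟩) hcl hz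
      refine ⟨?_, this.2⟩
      have h := this.1
      rwa [Metric.mem_closedBall, dist_eq_norm] at h
    rw [hval, sub_nonpos]
    by_cases hzr : ‖z - x0‖ < r
    · have hz0 : lastC n hn z = 0 := by
        refine le_antisymm ?_ hzc.2
        by_contra hcon
        push Not at hcon
        exact hzU ⟨by rwa [Metric.mem_ball, dist_eq_norm], hcon⟩
      rw [hz0]
      refine le_trans ?_ (le_max_right _ _)
      have : 0 ≤ σ * (‖z - x0‖ ^ 2 / r ^ 2) := by positivity
      simp only [mul_zero, zero_div, ne_eq, OfNat.ofNat_ne_zero, not_false_eq_true, zero_pow]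
      linarith
    · have hzr' : ‖z - x0‖ = r := le_antisymm hzc.1 (not_lt.1 hzr)
      refine le_trans ?_ (le_max_left _ _)
      rw [hzr', div_self (by positivity)]
      have h1 : lastC n hn z ^ 2 / r ^ 2 ≤ lastC n hn z / r := by
        rw [div_le_div_iff₀ (by positivity) hr]
        have := hlt z hzc.1
        nlinarith [mul_nonneg (mul_nonneg hzc.2 hr.le) (sub_nonneg.2 this)]
      have h2 : Q * (lastC n hn z ^ 2 / r ^ 2) ≤ Q * (lastC n hn z / r) := by gcongr
      have h3 : σ * 1 ≤ σ * (1 + Q * (lastC n hn z / r) - Q * (lastC n hn z ^ 2 / r ^ 2)) := by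
        gcongr
        linarith
      linarith) (by
    rintro z ⟨hz, hz0⟩
    rw [Metric.mem_ball, dist_eq_norm] at hz
    have h1 := hD.sup.u0 z (hUD ⟨by rwa [Metric.mem_ball, dist_eq_norm], hz0⟩)
    have h2 := hHC z hz0 (hlt z hz.le) (hproj z hz.le)
    have := max_le h2 h1
    linarith) (N * r ^ α) (Kb * r ^ α) (by positivity) (by positivity)
    (hD.hfq U x0 r hUo hUD hr (by
      rintro z ⟨hz, hz0⟩
      rw [Metric.mem_ball, dist_eq_norm] at hz
      have h3 := abs_lastC_le hn (z - x0)
      rw [lastC_sub, hx0l] at h3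
      have := (abs_le.1 h3).2
      linarith) Set.inter_subset_left)
    (hD.hb U x0 r hUo hUD hr Set.inter_subset_left) hKr x (by
      refine ⟨?_, hx⟩
      rw [Metric.mem_ball, dist_eq_norm, hx0, sub_sub_cancel, norm_smul, en_norm,
        Real.norm_of_nonneg hx.le]
      linarith)
  rw [hval] at key
  have hxx0 : ‖x - x0‖ = t := by
    rw [hx0, sub_sub_cancel, norm_smul, en_norm, Real.norm_of_nonneg hx.le, mul_one]
  rw [hxx0, ← ht] at key
  have h1 : t ^ 2 / r ^ 2 ≤ t / r := by
    rw [div_le_div_iff₀ (by positivity) hr]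
    nlinarith [mul_nonneg (mul_nonneg hx.le hr.le) (sub_nonneg.2 hxr)]
  have h2 : σ * (t ^ 2 / r ^ 2 + Q * (t / r) - Q * (t ^ 2 / r ^ 2)) ≤ σ * ((Q + 1) * (t / r)) := by
    gcongr
    have : 0 ≤ Q * (t ^ 2 / r ^ 2) := by positivity
    linarith
  have h3 : (a - (Q + 1) * σ / r) * t = a * t - σ * ((Q + 1) * (t / r)) := by ring
  rw [h3]
  linarith

end hopf
end QSMP
namespace QSMP

open Matrix Filter Topology

section hopf2
variable {n : ℕ}

set_option maxHeartbeats 2000000 in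
theorem hopf (hn : 1 ≤ n) {lam Lam d0 α Kb : ℝ} (hl : 0 < lam) (hL : lam ≤ Lam)
    (hKb : 0 < Kb) (hd0 : 0 < d0) (hα : 0 < α) (hα1 : α ≤ 1) :
    ∃ rs : ℝ, 0 < rs ∧ ∀ r0 : ℝ, 0 < r0 → r0 ≤ rs → ∃ c C : ℝ, 0 < c ∧ 0 < C ∧
      ∀ (N : ℝ) (b f u : E n → ℝ), Dat n hn lam Lam d0 α Kb N b f u → ∀ T : ℝ, 0 ≤ T →
      (∀ y : E n, lastC n hn y = 0 → ‖y‖ ≤ 1 + 2 * r0 →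
        ∀ w ∈ Metric.ball (y + r0 • en n hn) (r0 / 4), T ≤ u w) →
      ∀ x ∈ halfBall n hn 1, lastC n hn x ≤ r0 → (c * T - C * N) * lastC n hn x ≤ u x := by
  obtain ⟨c3, C1, δ1, hc3, hC1, hδ1, hbase⟩ := hopf_base hn hl hL hKb (d0 := d0) (α := α)
  obtain ⟨Q, C2, δ2, hQ, hC2, hδ2, hstep⟩ := hopf_step hn hl hL hKb (d0 := d0) (α := α)
  set θ : ℝ := (1 / 2) ^ α with hθ
  have hθ0 : 0 < θ := by positivity
  have hθ1 : θ < 1 := Real.rpow_lt_one (by norm_num) (by norm_num) hα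
  have hθ2 : 1 / 2 ≤ θ := by
    have := Real.rpow_le_rpow_of_exponent_ge (show (0 : ℝ) < 1 / 2 by norm_num) (by norm_num) hα1
    rwa [Real.rpow_one] at this
  set Kb' := Kb * (1 + 1 / c3) with hKb'
  have hKb'0 : 0 < Kb' := by positivity
  have hKbb : Kb ≤ Kb' := by
    rw [hKb']
    have : 0 < 1 / c3 := by positivity
    nlinarith
  set C4 := C1 + 16 * C2 with hC4
  have hC40 : 0 < C4 := by positivity
  have h1θ : 0 < 1 - θ := by linarith
  set C5 := 8 * C4 + 2 * (Q + 1) * C4 / (1 - θ) with hC5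
  have hC50 : 0 < C5 := by positivity
  set ε0 := min (min (δ1 / Kb) (δ2 / Kb)) (min (1 / (5 * Q * C4 * Kb)) (1 / (2 * C5 * Kb'))) with hε0
  have hε00 : 0 < ε0 := by positivity
  refine ⟨min (min (1 / 8) (d0 / 2)) (ε0 ^ (1 / α)), by positivity, ?_⟩
  intro r0 hr0 hr0s
  have hr8 : r0 ≤ 1 / 8 := hr0s.trans ((min_le_left _ _).trans (min_le_left _ _))
  have hrd : 2 * r0 ≤ d0 := by
    have : r0 ≤ d0 / 2 := hr0s.trans ((min_le_left _ _).trans (min_le_right _ _))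
    linarith
  have hrα : r0 ^ α ≤ ε0 := by
    calc r0 ^ α ≤ (ε0 ^ (1 / α)) ^ α :=
          Real.rpow_le_rpow hr0.le (hr0s.trans (min_le_right _ _)) hα.le
      _ = ε0 := by rw [← Real.rpow_mul hε00.le, one_div, inv_mul_cancel₀ hα.ne', Real.rpow_one]
  set A := r0 ^ α with hA
  have hA0 : 0 < A := by positivity
  have hd1 : Kb * A ≤ δ1 := by
    have : A ≤ δ1 / Kb := hrα.trans ((min_le_left _ _).trans (min_le_left _ _))
    rw [le_div_iff₀ hKb] at this; linarith
  have hd2 : Kb * A ≤ δ2 := by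
    have : A ≤ δ2 / Kb := hrα.trans ((min_le_left _ _).trans (min_le_right _ _))
    rw [le_div_iff₀ hKb] at this; linarith
  have hd3 : 5 * Q * C4 * Kb * A ≤ 1 := by
    have : A ≤ 1 / (5 * Q * C4 * Kb) := hrα.trans ((min_le_right _ _).trans (min_le_left _ _))
    rw [le_div_iff₀ (by positivity)] at this; linarith
  have hd4 : 2 * C5 * Kb' * A ≤ 1 := by
    have : A ≤ 1 / (2 * C5 * Kb') := hrα.trans ((min_le_right _ _).trans (min_le_right _ _))
    rw [le_div_iff₀ (by positivity)] at this; linarith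
  refine ⟨c3 / (4 * r0), C5 * A, by positivity, by positivity, ?_⟩
  intro N b f u hD T hT hT1 x hx hxr
  have hN := hD.N0
  set a0 := c3 * T / r0 with ha0
  have ha00 : 0 ≤ a0 := by positivity
  have hcT : c3 / (4 * r0) * T = a0 / 4 := by rw [ha0]; field_simp
  have hx0 : 0 < lastC n hn x := hx.2
  have hxD : x ∈ halfBall n hn 2 := ⟨by have := hx.1; linarith, hx.2⟩
  rw [hcT]
  by_cases hcase : a0 / 2 < C5 * A * N
  · have h1 := hD.sup.u0 x hxD
    have h2 : (a0 / 4 - C5 * A * N) * lastC n hn x ≤ 0 :=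
      mul_nonpos_of_nonpos_of_nonneg (by linarith) hx0.le
    linarith
  push Not at hcase
  set G := N + a0 * Kb' with hG
  have hG0 : 0 ≤ G := by positivity
  have hGa : C5 * A * G ≤ a0 := by
    have : C5 * A * G = C5 * A * N + a0 / 2 * (2 * C5 * Kb' * A) := by rw [hG]; ring
    rw [this]
    have : a0 / 2 * (2 * C5 * Kb' * A) ≤ a0 / 2 * 1 := by gcongr
    linarith
  have hGa1 : 8 * C4 * (A * G) ≤ a0 := by
    have : 8 * C4 * (A * G) ≤ C5 * (A * G) := by
      gcongr
      rw [hC5]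
      have : 0 ≤ 2 * (Q + 1) * C4 / (1 - θ) := by positivity
      linarith
    linarith
  have hGa2 : (Q + 1) * C4 * (A * G) ≤ a0 / 2 * (1 - θ) := by
    have h1 : 2 * (Q + 1) * C4 / (1 - θ) * (A * G) ≤ C5 * (A * G) := by
      gcongr
      rw [hC5]
      linarith
    have h2 : 2 * (Q + 1) * C4 / (1 - θ) * (A * G) ≤ a0 := by linarith
    have h3 : 2 * (Q + 1) * C4 / (1 - θ) * (A * G) = 2 * (Q + 1) * C4 * (A * G) / (1 - θ) := by ring
    rw [h3, div_le_iff₀ h1θ] at h2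
    linarith
  have hrk : ∀ k : ℕ, (r0 / 2 ^ k) ^ α = A * θ ^ k := by
    intro k
    have e1 : r0 / 2 ^ k = r0 * (1 / 2) ^ k := by rw [_root_.one_div_pow]; ring
    rw [e1, Real.mul_rpow hr0.le (by positivity), ← Real.rpow_natCast, ← Real.rpow_mul (by norm_num),
      mul_comm (k : ℝ) α, Real.rpow_mul (by norm_num), Real.rpow_natCast]
  have hclaim : ∀ k : ℕ, HC n hn u (a0 / 2 * (1 + θ ^ k))
      (C4 * (r0 / 2 ^ k) * (A * θ ^ k) * G) (r0 / 2 ^ k) := by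
    intro k
    induction k with
    | zero =>
      have := hbase N b f u hD r0 T hr0 hr8 hrd hd1 hT hT1
      simp only [pow_zero, div_one, mul_one]
      refine this.mono (by linarith) ?_
      have h1 : T / r0 = a0 / c3 := by rw [ha0]; field_simp
      have h2 : N + T / r0 * Kb ≤ G := by
        rw [h1, hG, hKb']
        have e1 : a0 * (Kb * (1 + 1 / c3)) = a0 * Kb + a0 / c3 * Kb := by ring
        rw [e1]
        have : 0 ≤ a0 * Kb := by positivity
        linarith
      calc C1 * (r0 * A) * (N + T / r0 * Kb) ≤ C4 * (r0 * A) * G := by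
            have : C1 ≤ C4 := by rw [hC4]; linarith
            gcongr
        _ = _ := by ring
    | succ k ih =>
      set r := r0 / 2 ^ k with hr
      have hr0' : 0 < r := by positivity
      have hrr : r ≤ r0 := div_le_self hr0.le (one_le_pow₀ (by norm_num))
      have hθk : θ ^ k ≤ 1 := pow_le_one₀ hθ0.le hθ1.le
      have hAk : A * θ ^ k ≤ A := by nlinarith
      have hrα2 : r ^ α = A * θ ^ k := hrk k
      have hσ0 : 0 ≤ C4 * r * (A * θ ^ k) * G := by positivity
      have hstep1 := hstep N b f u hD r (a0 / 2 * (1 + θ ^ k)) (C4 * r * (A * θ ^ k) * G) hr0'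
        (hrr.trans hr8) (by linarith) (by
          rw [hrα2]
          calc Kb * (A * θ ^ k) ≤ Kb * A := by gcongr
            _ ≤ δ2 := hd2) (by positivity) hσ0 ih
      have er : r0 / 2 ^ (k + 1) = r / 2 := by rw [hr, pow_succ]; field_simp
      rw [er]
      rw [hrα2] at hstep1
      have eσ : C4 * r * (A * θ ^ k) * G / r = C4 * (A * θ ^ k) * G := by field_simp
      refine hstep1.mono ?_ ?_
      · have e1 : (Q + 1) * (C4 * r * (A * θ ^ k) * G) / r = θ ^ k * ((Q + 1) * C4 * (A * G)) := by
          field_simp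
        rw [e1]
        have e2 : θ ^ k * ((Q + 1) * C4 * (A * G)) ≤ θ ^ k * (a0 / 2 * (1 - θ)) := by gcongr
        rw [pow_succ]
        linarith
      · have e1 : 5 * Q * (C4 * r * (A * θ ^ k) * G) / r = 5 * Q * C4 * (A * θ ^ k) * G := by
          field_simp
        rw [e1]
        have e2 : 5 * Q * C4 * (A * θ ^ k) * G * Kb ≤ G := by
          have : 5 * Q * C4 * (A * θ ^ k) * G * Kb = (5 * Q * C4 * Kb * (A * θ ^ k)) * G := by ring
          rw [this]
          have h3 : 5 * Q * C4 * Kb * (A * θ ^ k) ≤ 1 := by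
            calc 5 * Q * C4 * Kb * (A * θ ^ k) ≤ 5 * Q * C4 * Kb * A := by gcongr
              _ ≤ 1 := hd3
          nlinarith
        have e3 : N + a0 / 2 * (1 + θ ^ k) * Kb ≤ G := by
          rw [hG]
          have h3 : a0 / 2 * (1 + θ ^ k) ≤ a0 := by nlinarith
          have h4 : a0 / 2 * (1 + θ ^ k) * Kb ≤ a0 * Kb' := by gcongr
          linarith
        have e4 : C2 * (2 * r) * (N * (A * θ ^ k) +
            (a0 / 2 * (1 + θ ^ k) + 5 * Q * C4 * (A * θ ^ k) * G) * (Kb * (A * θ ^ k))) =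
            C2 * (2 * r) * (A * θ ^ k) * ((N + a0 / 2 * (1 + θ ^ k) * Kb) +
              5 * Q * C4 * (A * θ ^ k) * G * Kb) := by ring
        rw [e4]
        calc _ ≤ C2 * (2 * r) * (A * θ ^ k) * (G + G) := by gcongr
          _ = (16 * C2) * (r / 2) * (A * (θ ^ k * (1 / 2))) * G := by ring
          _ ≤ C4 * (r / 2) * (A * (θ ^ k * θ)) * G := by
              have : 16 * C2 ≤ C4 := by rw [hC4]; linarith
              gcongr
          _ = _ := by rw [pow_succ]
  set t := lastC n hn x with ht
  obtain ⟨k, hk1, hk2⟩ := exists_nat_pow_near (show 1 ≤ r0 / t by rw [le_div_iff₀ hx0]; linarith)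
    (show (1 : ℝ) < 2 by norm_num)
  have h2k : (0 : ℝ) < 2 ^ k := by positivity
  have hr1 : t ≤ r0 / 2 ^ k := by
    rw [le_div_iff₀ hx0] at hk1
    rw [le_div_iff₀ h2k]; linarith
  have hr2 : r0 / 2 ^ k ≤ 2 * t := by
    rw [div_lt_iff₀ hx0, pow_succ] at hk2
    rw [div_le_iff₀ h2k]; linarith
  have hfin := hclaim k x hx0 hr1 (by
    have h1 := proj_norm_le hn x
    have h2 := hx.1
    have h3 : 0 < r0 / 2 ^ k := by positivity
    linarith)
  rw [← ht] at hfin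
  have hθk : θ ^ k ≤ 1 := pow_le_one₀ hθ0.le hθ1.le
  have hθk0 : 0 < θ ^ k := by positivity
  have f1 : C4 * (r0 / 2 ^ k) * (A * θ ^ k) * G ≤ C4 * (2 * t) * (A * 1) * G := by gcongr
  have f2 : C4 * (2 * t) * (A * 1) * G = t / 4 * (8 * C4 * (A * G)) := by ring
  have f3 : t / 4 * (8 * C4 * (A * G)) ≤ t / 4 * a0 := by gcongr
  have f4 : 0 ≤ C5 * A * N * t := by positivity
  have f5 : 0 ≤ a0 / 2 * θ ^ k * t := by positivity
  linarith

/-- interior positivity propagates to a linear lower bound up to the flat boundary -/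
theorem thmH (hn : 1 ≤ n) {lam Lam d0 α Kb : ℝ} (hl : 0 < lam) (hL : lam ≤ Lam)
    (hKb : 0 < Kb) (hd0 : 0 < d0) (hα : 0 < α) (hα1 : α ≤ 1) :
    ∃ (ρ1 c C : ℝ) (M : ℕ), 0 < ρ1 ∧ 0 < c ∧ 0 < C ∧
      ∀ (N : ℝ) (b f u : E n → ℝ), Dat n hn lam Lam d0 α Kb N b f u →
      ∀ (y : E n) (ρ T : ℝ), 0 < ρ → ρ ≤ ρ1 → 0 ≤ T →
      Metric.ball y (4 * ρ) ⊆ halfBall n hn 2 → (∀ x ∈ Metric.ball y ρ, T ≤ u x) →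
      ∀ x ∈ halfBall n hn 1, (c * ρ ^ M * T - C * N) * lastC n hn x ≤ u x := by
  obtain ⟨rs, hrs, hhopf⟩ := hopf hn hl hL hKb hd0 hα hα1
  obtain ⟨ρ0, hρ0, hchain⟩ := chain hn hl hL hα hKb (d0 := d0)
  set r0 := min (min rs (4 * ρ0)) (1 / 8) with hr0
  have hr00 : 0 < r0 := by positivity
  obtain ⟨ch, Ch, hch, hCh, hh⟩ := hhopf r0 hr00 ((min_le_left _ _).trans (min_le_left _ _))
  have hr8 : r0 ≤ 1 / 8 := min_le_right _ _
  have hs1 : r0 / 4 ≤ ρ0 := by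
    have : r0 ≤ 4 * ρ0 := (min_le_left _ _).trans (min_le_right _ _)
    linarith
  obtain ⟨cc, Cc, M, hcc, hCc, hc⟩ := hchain (r0 / 4) (by positivity) hs1 (by linarith)
  have e4 : 4 * (r0 / 4) = r0 := by ring
  set cm := min ch 1 with hcm
  have hcm0 : 0 < cm := by positivity
  refine ⟨r0 / 4 / 2, cm * cc, cm * Cc + Ch, M, by positivity, by positivity, by positivity, ?_⟩
  intro N b f u hD y ρ T hρ hρr hT hy hu x hx
  have hN := hD.N0
  set T1 := max (cc * ρ ^ M * T - Cc * N) 0 with hT1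
  have hT10 : 0 ≤ T1 := le_max_right _ _
  have hz : ∀ z, Metric.ball z (4 * (r0 / 4)) ⊆ halfBall n hn 2 →
      ∀ w ∈ Metric.ball z (r0 / 4), T1 ≤ u w := by
    intro z hz w hw
    apply max_le (hc N b f u hD y z ρ T hρ hρr hT hy hz hu w hw)
    exact hD.sup.u0 w (hz (Metric.ball_subset_ball (by linarith) hw))
  have hx0 : 0 < lastC n hn x := hx.2
  have hx1 : ‖x‖ < 1 := hx.1
  have hlin : (cm * cc * ρ ^ M * T - (cm * Cc + Ch) * N) * lastC n hn x ≤
      (cm * T1 - Ch * N) * lastC n hn x := by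
    refine mul_le_mul_of_nonneg_right ?_ hx0.le
    have : cm * (cc * ρ ^ M * T - Cc * N) ≤ cm * T1 := by
      gcongr; exact le_max_left _ _
    linarith
  refine hlin.trans ?_
  rcases le_or_gt (lastC n hn x) r0 with hxr | hxr
  · have := hh N b f u hD T1 hT10 (by
      intro w hw0 hwn v hv
      refine hz _ ?_ v hv
      rw [e4]
      apply ball_sub_half hn
      · have := norm_add_le w (r0 • en n hn)
        rw [norm_smul, en_norm, Real.norm_of_nonneg hr00.le] at this
        linarith
      · rw [lastC_add, lastC_smul, lastC_en, hw0]; linarith) x hx hxr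
    refine le_trans ?_ this
    gcongr
    exact min_le_left _ _
  · have h1 := hz x (by rw [e4]; exact ball_sub_half hn (by linarith) hxr.le) x
      (Metric.mem_ball_self (by positivity))
    have h2 : lastC n hn x ≤ 1 := (le_abs_self _).trans ((abs_lastC_le hn x).trans hx1.le)
    have h3 : cm * T1 - Ch * N ≤ T1 := by
      have : cm * T1 ≤ 1 * T1 := by gcongr; exact min_le_right _ _
      have : 0 ≤ Ch * N := by positivity
      linarith
    calc (cm * T1 - Ch * N) * lastC n hn x ≤ T1 * lastC n hn x := by gcongr
      _ ≤ T1 * 1 := by gcongr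
      _ ≤ u x := by linarith

end hopf2
end QSMP
namespace QSMP

open Matrix Filter Topology

section growth
variable {n : ℕ}

/-- points touched from below by a concave paraboloid of opening `a` -/
def touch (u : E n → ℝ) (Ω : Set (E n)) (a G : ℝ) : Set (E n) :=
  {x ∈ Ω | (∀ z ∈ Ω, u x + inner ℝ (gradient u x) (z - x) - a * ‖z - x‖ ^ 2 ≤ u z) ∧
    ‖gradient u x‖ ≤ G}

theorem touch_mono {u : E n → ℝ} {Ω : Set (E n)} {a G a' G' : ℝ} (ha : a ≤ a') (hG : G ≤ G') :
    touch u Ω a G ⊆ touch u Ω a' G' := by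
  rintro x ⟨h1, h2, h3⟩
  refine ⟨h1, fun z hz => le_trans ?_ (h2 z hz), h3.trans hG⟩
  have : a * ‖z - x‖ ^ 2 ≤ a' * ‖z - x‖ ^ 2 := by gcongr
  linarith

theorem touch_compact {u : E n → ℝ} {Ω Kc : Set (E n)} (hΩ : IsOpen Ω) (hu : ContDiffOn ℝ 2 u Ω)
    (hK : IsCompact Kc) (hKΩ : Kc ⊆ Ω) (a G : ℝ) : IsCompact (touch u Ω a G ∩ Kc) := by
  have hw : ContinuousOn u Kc := hu.continuousOn.mono hKΩ
  have hg : ContinuousOn (gradient u) Kc := fun x hx =>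
    (grad_diff hΩ hu (hKΩ hx)).continuousAt.continuousWithinAt
  have hcl : IsClosed (touch u Ω a G ∩ Kc) := by
    have : touch u Ω a G ∩ Kc =
        (⋂ z ∈ Ω, {x ∈ Kc | u x + inner ℝ (gradient u x) (z - x) - a * ‖z - x‖ ^ 2 ≤ u z}) ∩
          {x ∈ Kc | ‖gradient u x‖ ≤ G} := by
      ext x
      simp only [touch, Set.mem_ofPred_eq, Set.mem_inter_iff, Set.mem_iInter]
      constructor
      · rintro ⟨⟨a, b, c⟩, d⟩; exact ⟨fun z hz => ⟨d, b z hz⟩, d, c⟩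
      · rintro ⟨a, b, c⟩; exact ⟨⟨hKΩ b, fun z hz => (a z hz).2, c⟩, b⟩
    rw [this]
    refine IsClosed.inter (isClosed_biInter fun z _ => ?_) ?_
    · apply hK.isClosed.isClosed_le
      · refine (hw.add (hg.inner (continuousOn_const.sub continuousOn_id))).sub ?_
        fun_prop
      · exact continuousOn_const
    · exact hK.isClosed.isClosed_le hg.norm continuousOn_const
  exact hK.of_isClosed_subset hcl (fun x hx => hx.2)

theorem bar_conv (m : ℕ) {r : ℝ} (x0 x z : E n) :
    bar m r x0 x + inner ℝ (barg m r x0 x) (z - x) - m / r ^ 2 * ‖z - x‖ ^ 2 ≤ bar m r x0 z := by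
  have h := J_bern (ρ := r) m (s := ‖z - x0‖ ^ 2) (t := ‖x - x0‖ ^ 2) (by positivity) (by positivity)
  have h1 := J_pos (ρ := r) (m + 1) (t := ‖x - x0‖ ^ 2) (by positivity)
  have h2 := J_le_one (ρ := r) (m + 1) (t := ‖x - x0‖ ^ 2) (by positivity)
  have e : ‖z - x0‖ ^ 2 - ‖x - x0‖ ^ 2 = 2 * inner ℝ (x - x0) (z - x) + ‖z - x‖ ^ 2 := by
    have : z - x0 = (x - x0) + (z - x) := by abel
    rw [this, norm_add_sq_real]; ring
  rw [e] at h
  unfold bar barg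
  rw [inner_smul_left]
  simp only [conj_trivial]
  set j := J r (m + 1) (‖x - x0‖ ^ 2)
  have h3 : m / r ^ 2 * j * ‖z - x‖ ^ 2 ≤ m / r ^ 2 * ‖z - x‖ ^ 2 := by
    have : (m : ℝ) / r ^ 2 * j ≤ m / r ^ 2 * 1 := by gcongr
    rw [mul_one] at this
    gcongr
  linarith

theorem three_add_pow (n : ℕ) {x y z : ℝ} (hx : 0 ≤ x) (hy : 0 ≤ y) (hz : 0 ≤ z) :
    (x + y + z) ^ n ≤ 4 ^ n * (x ^ n + y ^ n + z ^ n) := by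
  have h1 := two_add_pow n (add_nonneg hx hy) hz
  have h2 := two_add_pow n hx hy
  have h3 : (2 : ℝ) ^ n * z ^ n ≤ 2 ^ n * (2 ^ n * z ^ n) := by
    apply mul_le_mul_of_nonneg_left _ (by positivity)
    exact le_mul_of_one_le_left (by positivity) (one_le_pow₀ (by norm_num))
  have h4 : (2 : ℝ) ^ n * (x + y) ^ n ≤ 2 ^ n * (2 ^ n * (x ^ n + y ^ n)) := by gcongr
  have e : (4 : ℝ) ^ n = 2 ^ n * 2 ^ n := by rw [← mul_pow]; norm_num
  rw [e]
  nlinarith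

set_option maxHeartbeats 1000000 in
theorem lemB (hn : 1 ≤ n) {lam Lam : ℝ} (hl : 0 < lam) (hL : lam ≤ Lam) :
    ∃ M C : ℝ, 4 ≤ M ∧ 1 ≤ C ∧ ∀ (b f u : E n → ℝ) (Ω : Set (E n)), Sup n lam Lam b f u Ω →
      ∀ (x0 x1 g : E n) (a r G c : ℝ), 0 < a → 0 < r → ‖g‖ ≤ G →
      Metric.closedBall x0 (4 * r) ⊆ Ω → ‖x1 - x0‖ ≤ r →
      (∀ z ∈ Ω, c + inner ℝ g (z - x1) - a * ‖z - x1‖ ^ 2 ≤ u z) → u x1 ≤ c + a * r ^ 2 →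
      ENNReal.ofReal (r ^ n) ≤ ENNReal.ofReal C * (ENNReal.ofReal ((a ^ n)⁻¹) *
          (∫⁻ x in Metric.closedBall x0 (4 * r), ENNReal.ofReal ((max (f x) 0) ^ n)) +
        ENNReal.ofReal ((G / a + r) ^ n) *
          (∫⁻ x in Metric.closedBall x0 (4 * r), ENNReal.ofReal ((b x) ^ n)) +
        volume (touch u Ω (M * a) (G + C * a * r) ∩ Metric.ball x0 r)) := by
  obtain ⟨m0, hm0⟩ := exists_nat_ge (5 * Lam * n / lam)
  set m := m0 + 1 with hmdef
  have hL0 : 0 < Lam := by linarith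
  have hm : 5 * Lam * n ≤ (m + 1) * lam := by
    rw [div_le_iff₀ hl] at hm0
    refine hm0.trans ?_
    gcongr
    rw [hmdef]; push_cast; linarith
  have hm1 : (1 : ℝ) ≤ m := by rw [hmdef]; push_cast; linarith [Nat.cast_nonneg (α := ℝ) m0]
  set P : ℝ := 17 ^ (m + 2) with hP
  have hP1 : 1 ≤ P := one_le_pow₀ (by norm_num)
  set L : ℝ := 2 * P with hLdef
  have hLm : 2 ≤ L * m := by nlinarith
  set S1 : ℝ := (4 + 2 * L * m) * Lam * n with hS1
  have hS10 : 0 < S1 := by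
    have : (0 : ℝ) < n := by exact_mod_cast hn
    positivity
  set C0 : ℝ := 21 + 8 * L * m with hC0
  have hC01 : 1 ≤ C0 := by rw [hC0]; nlinarith
  set C1 : ℝ := (om n)⁻¹ * (4 / lam) ^ n with hC1
  have hom := om_pos n
  have hC10 : 0 < C1 := by positivity
  refine ⟨2 + L * m, C0 + C1 * (1 + C0 ^ n + S1 ^ n), by linarith, by
    have : 0 < C1 * (1 + C0 ^ n + S1 ^ n) := by positivity
    linarith, ?_⟩
  intro b f u Ω hS x0 x1 g a r G c ha hr hg hball hx10 hlow hx1u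
  set CC := C0 + C1 * (1 + C0 ^ n + S1 ^ n) with hCC
  have hCC0 : C0 ≤ CC := by
    have : 0 < C1 * (1 + C0 ^ n + S1 ^ n) := by positivity
    linarith
  have hG0 : 0 ≤ G := (norm_nonneg _).trans hg
  have ht := (((TF.aff (c - inner ℝ g x1) g).add ((TF.nsq x1).smul (-(2 * a)))).add
    ((TF.bar m r x0).smul (a * r ^ 2 * L)))
  set h : E n → ℝ := fun x => c - inner ℝ g x1 + inner ℝ g x + -(2 * a) * ‖x - x1‖ ^ 2 +
    a * r ^ 2 * L * bar m r x0 x with hh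
  set gh : E n → E n := fun x => g + (-(2 * a)) • (2 : ℝ) • (x - x1) +
    (a * r ^ 2 * L) • barg m r x0 x with hgh
  set Hh : E n → E n →L[ℝ] E n := fun x => 0 + (-(2 * a)) • (2 : ℝ) • ContinuousLinearMap.id ℝ (E n) +
    (a * r ^ 2 * L) • barH m r x0 x with hHh
  have ht' : TF h gh Hh := ht
  clear ht
  set Kc := Metric.closedBall x0 (4 * r) with hKc
  have hx1K : x1 ∈ Kc := by
    rw [hKc, Metric.mem_closedBall, dist_eq_norm]; linarith
  have hghb : ∀ x ∈ Kc, ‖gh x‖ ≤ G + a * r * (20 + 8 * L * m) := by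
    intro x hx
    rw [hKc, Metric.mem_closedBall, dist_eq_norm] at hx
    have h1 : ‖x - x1‖ ≤ 5 * r := by
      have := norm_sub_le (x - x0) (x1 - x0)
      rw [sub_sub_sub_cancel_right] at this
      linarith
    have h2 := barg_norm_le m hr hx
    rw [hgh]
    refine (norm_add₃_le).trans ?_
    rw [norm_smul, norm_smul, norm_smul, Real.norm_of_nonneg (by positivity : 0 ≤ a * r ^ 2 * L)]
    have e1 : ‖-(2 * a)‖ = 2 * a := by rw [norm_neg, Real.norm_of_nonneg (by positivity)]
    rw [e1, Real.norm_of_nonneg (by norm_num : (0 : ℝ) ≤ 2)]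
    have h3 : a * r ^ 2 * L * ‖barg m r x0 x‖ ≤ a * r ^ 2 * L * (8 * m / r) := by gcongr
    have e2 : a * r ^ 2 * L * (8 * m / r) = a * r * (8 * L * m) := by field_simp
    have h4 : 2 * a * (2 * ‖x - x1‖) ≤ 2 * a * (2 * (5 * r)) := by gcongr
    linarith
  set s : E n → ℝ := (Metric.ball x0 r).indicator (fun _ => a * S1) with hs
  obtain ⟨hcomp, habp⟩ := abp_sol hl hL hS (isCompact_closedBall x0 (4 * r)) hball ht'
    (hball hx1K) (η := a * r) (by positivity) (by
      intro z hz hzK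
      rw [Metric.mem_closedBall, dist_eq_norm] at hzK
      push Not at hzK
      have hd : 3 * r < ‖z - x1‖ := by
        have := norm_add_le (z - x1) (x1 - x0)
        rw [sub_add_sub_cancel] at this
        linarith
      have h1 := hlow z hz
      have h2 : bar m r x0 z ≤ bar m r x0 x1 := by
        apply J_anti m (by positivity)
        apply pow_le_pow_left₀ (by positivity)
        linarith
      have h3 : a * r ^ 2 * L * bar m r x0 z ≤ a * r ^ 2 * L * bar m r x0 x1 := by gcongr
      rw [hh]
      simp only [sub_self, norm_zero]
      rw [inner_sub_right] at h1
      have h4 : a * r ^ 2 + a * r * ‖z - x1‖ < a * ‖z - x1‖ ^ 2 := by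
        have : a * (r ^ 2 + r * ‖z - x1‖) < a * ‖z - x1‖ ^ 2 := by
          apply mul_lt_mul_of_pos_left _ ha
          nlinarith
        linarith
      linarith) (s := s) (by
      intro x hx A hA
      have hxK : ‖x - x0‖ ≤ 4 * r := by
        have := hx.1
        rwa [Metric.mem_closedBall, dist_eq_norm] at this
      rw [hHh]
      simp only [zero_add]
      rw [mat_add, mat_smul, mat_smul, mat_smul, Matrix.mul_add, Matrix.trace_add]
      simp only [Matrix.mul_smul, Matrix.trace_smul, smul_eq_mul]
      have h1 := hA.tr_id_le
      have h2 : a * 4 * (A * mat (ContinuousLinearMap.id ℝ (E n))).trace ≤ a * 4 * (Lam * n) := by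
        gcongr
      rw [hs]
      by_cases hxr : x ∈ Metric.ball x0 r
      · rw [Set.indicator_of_mem hxr]
        have h3 := bar_trace_ge' hl hL (m := m) hr (y := x0) (x := x) hA
        have h4 : a * r ^ 2 * L * (-(2 * m * Lam * n / r ^ 2)) ≤
          a * r ^ 2 * L * (A * mat (barH m r x0 x)).trace := by gcongr
        have e : a * r ^ 2 * L * (-(2 * m * Lam * n / r ^ 2)) = - (a * (2 * L * m * Lam * n)) := by
          field_simp
        rw [hS1]
        linarith
      · rw [Set.indicator_of_notMem hxr]
        rw [Metric.mem_ball, dist_eq_norm] at hxr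
        push Not at hxr
        have h3 := bar_trace_ge hl hL hm hr (y := x0) (x := x) (by linarith) hxK hA
        have h4 : a * r ^ 2 * L * (2 * m * Lam * n * P⁻¹ / r ^ 2) ≤
          a * r ^ 2 * L * (A * mat (barH m r x0 x)).trace := by gcongr
        have e : a * r ^ 2 * L * (2 * m * Lam * n * P⁻¹ / r ^ 2) = a * 4 * (Lam * n) * m := by
          rw [hLdef]; field_simp; ring
        have h5 : a * 4 * (Lam * n) * 1 ≤ a * 4 * (Lam * n) * m := by gcongr
        linarith)
  set Γ := contact (fun x => u x - h x) (fun x => gradient u x - gh x) Ω Kc (a * r) with hΓ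
  have hΓK : Γ ⊆ Kc := fun x hx => hx.1
  have hΓt : Γ ⊆ touch u Ω ((2 + L * m) * a) (G + CC * a * r) := by
    rintro x ⟨hxK, hx1, hx2⟩
    refine ⟨hball hxK, ?_, ?_⟩
    · intro z hz
      have h1 := hx1 z hz
      have h2 := bar_conv m (r := r) x0 x z
      have h3 : a * r ^ 2 * L * (bar m r x0 x + inner ℝ (barg m r x0 x) (z - x)
        - m / r ^ 2 * ‖z - x‖ ^ 2) ≤ a * r ^ 2 * L * bar m r x0 z := by gcongr
      have e1 : a * r ^ 2 * L * (m / r ^ 2 * ‖z - x‖ ^ 2) = a * (L * m) * ‖z - x‖ ^ 2 := by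
        field_simp
      have e2 : ‖z - x1‖ ^ 2 - ‖x - x1‖ ^ 2 = 2 * inner ℝ (x - x1) (z - x) + ‖z - x‖ ^ 2 := by
        have : z - x1 = (x - x1) + (z - x) := by abel
        rw [this, norm_add_sq_real]; ring
      have e2' : 2 * a * ‖z - x1‖ ^ 2 - 2 * a * ‖x - x1‖ ^ 2 =
        4 * a * inner ℝ (x - x1) (z - x) + 2 * a * ‖z - x‖ ^ 2 := by
        linear_combination (2 * a) * e2
      have e3 : inner ℝ (gradient u x - gh x) (z - x) = inner ℝ (gradient u x) (z - x) -
        inner ℝ g z + inner ℝ g x + 4 * a * inner ℝ (x - x1) (z - x) -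
        a * r ^ 2 * L * inner ℝ (barg m r x0 x) (z - x) := by
        rw [hgh, inner_sub_left, inner_add_left, inner_add_left]
        simp only [inner_smul_left, conj_trivial]
        rw [inner_sub_right g]
        ring
      simp only at h1
      rw [e3] at h1
      simp only [hh] at h1
      linarith
    · have h1 := hghb x hxK
      have h2 : ‖gradient u x‖ ≤ ‖gradient u x - gh x‖ + ‖gh x‖ := by
        have := norm_add_le (gradient u x - gh x) (gh x)
        rwa [sub_add_cancel] at this
      have h3 : a * r * C0 ≤ a * r * CC := by gcongr
      rw [hC0] at h3
      simp only at hx2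
      linarith
  have hmΓ : MeasurableSet Γ := hcomp.isClosed.measurableSet
  set α := (4 / lam) ^ n with hα
  set β := (4 / lam) ^ n * (G + a * r * C0) ^ n with hβ
  have hpt : ∀ x ∈ Γ, ENNReal.ofReal (((max (f x) 0 + b x * (‖gh x‖ + a * r) + s x) / lam) ^ n) ≤
      ENNReal.ofReal α * ENNReal.ofReal ((max (f x) 0) ^ n) +
      ENNReal.ofReal β * ENNReal.ofReal ((b x) ^ n) +
      ENNReal.ofReal (α * (a * S1) ^ n) * (Metric.ball x0 r).indicator 1 x := by
    intro x hx
    have hb0 := hS.b0 x (hball (hΓK hx))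
    have hs0 : 0 ≤ s x := by
      rw [hs]; exact Set.indicator_nonneg (fun _ _ => by positivity) x
    have hsn : ENNReal.ofReal (α * (s x) ^ n) =
        ENNReal.ofReal (α * (a * S1) ^ n) * (Metric.ball x0 r).indicator 1 x := by
      rw [hs]
      by_cases hxr : x ∈ Metric.ball x0 r
      · simp [Set.indicator_of_mem hxr]
      · simp [Set.indicator_of_notMem hxr, zero_pow (show n ≠ 0 by omega)]
    rw [← hsn, ← ENNReal.ofReal_mul (by positivity), ← ENNReal.ofReal_mul (by positivity),
      ← ENNReal.ofReal_add (by positivity) (by positivity),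
      ← ENNReal.ofReal_add (by positivity) (by positivity)]
    apply ENNReal.ofReal_le_ofReal
    have h1 : (max (f x) 0 + b x * (‖gh x‖ + a * r) + s x) ≤
      max (f x) 0 + b x * (G + a * r * C0) + s x := by
      have := hghb x (hΓK hx)
      have h2 : b x * (‖gh x‖ + a * r) ≤ b x * (G + a * r * C0) := by
        apply mul_le_mul_of_nonneg_left _ hb0
        rw [hC0]; linarith
      linarith
    calc ((max (f x) 0 + b x * (‖gh x‖ + a * r) + s x) / lam) ^ n
        ≤ ((max (f x) 0 + b x * (G + a * r * C0) + s x) / lam) ^ n := by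
          apply pow_le_pow_left₀ (by positivity)
          gcongr
      _ = (max (f x) 0 + b x * (G + a * r * C0) + s x) ^ n / lam ^ n := by rw [div_pow]
      _ ≤ 4 ^ n * ((max (f x) 0) ^ n + (b x * (G + a * r * C0)) ^ n + (s x) ^ n) / lam ^ n := by
          apply div_le_div_of_nonneg_right _ (by positivity)
          exact three_add_pow n (le_max_right _ _) (by positivity) hs0
      _ = _ := by
          rw [hβ, hα, div_pow, mul_pow (b x)]; ring
  have hmf : AEMeasurable (fun x => ENNReal.ofReal ((max (f x) 0) ^ n)) (volume.restrict Γ) := by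
    apply AEMeasurable.ennreal_ofReal
    exact ContinuousOn.aemeasurable ((((hS.fc.mono (hΓK.trans hball)).sup continuousOn_const).pow n)) hmΓ
  have hmb : AEMeasurable (fun x => ENNReal.ofReal ((b x) ^ n)) (volume.restrict Γ) := by
    apply AEMeasurable.ennreal_ofReal
    exact ContinuousOn.aemeasurable ((hS.bc.mono (hΓK.trans hball)).pow n) hmΓ
  have hIntg := habp.trans (setLIntegral_mono_ae' hmΓ (ae_of_all _ hpt))
  have hmfb : AEMeasurable (fun x => ENNReal.ofReal α * ENNReal.ofReal ((max (f x) 0) ^ n) +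
      ENNReal.ofReal β * ENNReal.ofReal ((b x) ^ n)) (volume.restrict Γ) :=
    (hmf.const_mul _).add (hmb.const_mul _)
  rw [lintegral_add_left' hmfb,
    lintegral_add_left' (hmf.const_mul _), lintegral_const_mul' _ _ ENNReal.ofReal_ne_top,
    lintegral_const_mul' _ _ ENNReal.ofReal_ne_top, lintegral_const_mul' _ _ ENNReal.ofReal_ne_top,
    lintegral_indicator_one Metric.isOpen_ball.measurableSet,
    Measure.restrict_apply Metric.isOpen_ball.measurableSet] at hIntg
  set F := ∫⁻ x in Kc, ENNReal.ofReal ((max (f x) 0) ^ n) with hF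
  set B := ∫⁻ x in Kc, ENNReal.ofReal ((b x) ^ n) with hB
  set V := volume (touch u Ω ((2 + L * m) * a) (G + CC * a * r) ∩ Metric.ball x0 r) with hV
  have hFle : ∫⁻ x in Γ, ENNReal.ofReal ((max (f x) 0) ^ n) ≤ F := lintegral_mono_set hΓK
  have hBle : ∫⁻ x in Γ, ENNReal.ofReal ((b x) ^ n) ≤ B := lintegral_mono_set hΓK
  have hVle : volume (Metric.ball x0 r ∩ Γ) ≤ V :=
    measure_mono fun x hx => ⟨hΓt hx.2, hx.1⟩
  have e0 : ENNReal.ofReal (r ^ n) = ENNReal.ofReal ((a ^ n)⁻¹ * (om n)⁻¹) *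
      ENNReal.ofReal ((a * r) ^ n * om n) := by
    rw [← ENNReal.ofReal_mul (by positivity), mul_pow]
    congr 1; field_simp
  have k1 : ENNReal.ofReal ((a ^ n)⁻¹ * (om n)⁻¹) * ENNReal.ofReal α ≤
      ENNReal.ofReal CC * ENNReal.ofReal ((a ^ n)⁻¹) := by
    rw [← ENNReal.ofReal_mul (by positivity), ← ENNReal.ofReal_mul (by linarith)]
    apply ENNReal.ofReal_le_ofReal
    have : C1 ≤ CC := by
      have : 0 ≤ C1 * (C0 ^ n + S1 ^ n) := by positivity
      rw [hCC]; linarith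
    calc (a ^ n)⁻¹ * (om n)⁻¹ * α = C1 * (a ^ n)⁻¹ := by rw [hC1, hα]; ring
      _ ≤ _ := by gcongr
  have k2 : ENNReal.ofReal ((a ^ n)⁻¹ * (om n)⁻¹) * ENNReal.ofReal β ≤
      ENNReal.ofReal CC * ENNReal.ofReal ((G / a + r) ^ n) := by
    rw [← ENNReal.ofReal_mul (by positivity), ← ENNReal.ofReal_mul (by linarith)]
    apply ENNReal.ofReal_le_ofReal
    have h1 : C1 * C0 ^ n ≤ CC := by
      have : 0 ≤ C1 * (1 + S1 ^ n) := by positivity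
      rw [hCC]; linarith
    have h2 : (G + a * r * C0) ≤ a * C0 * (G / a + r) := by
      have e : a * C0 * (G / a + r) = G * C0 + a * r * C0 := by field_simp
      have : G * 1 ≤ G * C0 := by gcongr
      linarith
    calc (a ^ n)⁻¹ * (om n)⁻¹ * β = C1 * (a ^ n)⁻¹ * (G + a * r * C0) ^ n := by rw [hC1, hβ]; ring
      _ ≤ C1 * (a ^ n)⁻¹ * (a * C0 * (G / a + r)) ^ n := by gcongr
      _ = C1 * C0 ^ n * (G / a + r) ^ n := by
          rw [mul_pow, mul_pow]; field_simp
      _ ≤ _ := by gcongr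
  have k3 : ENNReal.ofReal ((a ^ n)⁻¹ * (om n)⁻¹) * ENNReal.ofReal (α * (a * S1) ^ n) ≤
      ENNReal.ofReal CC := by
    rw [← ENNReal.ofReal_mul (by positivity)]
    apply ENNReal.ofReal_le_ofReal
    have h1 : C1 * S1 ^ n ≤ CC := by
      have : 0 ≤ C1 * (1 + C0 ^ n) := by positivity
      rw [hCC]; linarith
    calc _ = C1 * S1 ^ n := by rw [hC1, hα, mul_pow]; field_simp
      _ ≤ _ := h1
  calc ENNReal.ofReal (r ^ n) = _ := e0
    _ ≤ ENNReal.ofReal ((a ^ n)⁻¹ * (om n)⁻¹) * (ENNReal.ofReal α * F + ENNReal.ofReal β * B +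
          ENNReal.ofReal (α * (a * S1) ^ n) * V) := by
        refine mul_le_mul_right (hIntg.trans ?_) _
        gcongr
    _ = ENNReal.ofReal ((a ^ n)⁻¹ * (om n)⁻¹) * ENNReal.ofReal α * F +
        ENNReal.ofReal ((a ^ n)⁻¹ * (om n)⁻¹) * ENNReal.ofReal β * B +
        ENNReal.ofReal ((a ^ n)⁻¹ * (om n)⁻¹) * ENNReal.ofReal (α * (a * S1) ^ n) * V := by ring
    _ ≤ ENNReal.ofReal CC * ENNReal.ofReal ((a ^ n)⁻¹) * F +
        ENNReal.ofReal CC * ENNReal.ofReal ((G / a + r) ^ n) * B + ENNReal.ofReal CC * V := by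
        exact add_le_add (add_le_add (mul_le_mul_left k1 _) (mul_le_mul_left k2 _))
          (mul_le_mul_left k3 _)
    _ = _ := by ring

end growth
end QSMP
namespace QSMP

open Matrix Filter Topology

section covering
variable {n : ℕ}

theorem ball_touch {A : Set (E n)} (hA : IsCompact A) (hA0 : A.Nonempty) {x y : E n} {ρ : ℝ}
    (hρ : 0 < ρ) (hAy : A ⊆ Metric.closedBall y ρ) (hx : x ∈ Metric.ball y ρ) (hxA : x ∉ A) :
    ∃ (c : E n) (t : ℝ), 0 < t ∧ ‖c - y‖ + t ≤ ρ ∧ ‖x - c‖ ≤ t ∧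
      (∀ z ∈ Metric.ball c t, z ∉ A) ∧ ∃ x1 ∈ A, ‖x1 - c‖ ≤ t := by
  rw [Metric.mem_ball, dist_eq_norm] at hx
  set p : ℝ → E n := fun t => y + (1 - t / ρ) • (x - y) with hp
  have hpc : Continuous p := by fun_prop
  have hφ : ContinuousOn (fun t => Metric.infDist (p t) A - t) (Set.Icc 0 ρ) :=
    (((Metric.continuous_infDist_pt A).comp hpc).sub continuous_id).continuousOn
  have h0 : 0 < Metric.infDist (p 0) A := by
    have : p 0 = x := by simp [hp]
    rw [this]
    exact (hA.isClosed.notMem_iff_infDist_pos hA0).1 hxA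
  have h1 : Metric.infDist (p ρ) A ≤ ρ := by
    have : p ρ = y := by simp [hp, div_self hρ.ne']
    rw [this]
    obtain ⟨z, hz⟩ := hA0
    refine (Metric.infDist_le_dist_of_mem hz).trans ?_
    rw [dist_comm]; exact hAy hz
  obtain ⟨t, ⟨ht0, htρ⟩, ht⟩ := intermediate_value_Icc' hρ.le hφ
    (show (0 : ℝ) ∈ Set.Icc _ _ from ⟨by linarith, by linarith⟩)
  simp only at ht
  have htd : Metric.infDist (p t) A = t := by linarith
  have htpos : 0 < t := by
    rcases ht0.eq_or_lt with h | h
    · rw [← h] at htd; linarith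
    · exact h
  have hq : 0 ≤ 1 - t / ρ := by
    have : t / ρ ≤ 1 := (div_le_one hρ).2 htρ
    linarith
  obtain ⟨x1, hx1, hd⟩ := hA.exists_infDist_eq_dist hA0 (p t)
  refine ⟨p t, t, htpos, ?_, ?_, ?_, x1, hx1, ?_⟩
  · have : p t - y = (1 - t / ρ) • (x - y) := by simp [hp]
    rw [this, norm_smul, Real.norm_of_nonneg hq]
    have : (1 - t / ρ) * ‖x - y‖ ≤ (1 - t / ρ) * ρ := by gcongr
    have e : (1 - t / ρ) * ρ = ρ - t := by field_simp
    linarith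
  · have : x - p t = (t / ρ) • (x - y) := by simp only [hp]; module
    rw [this, norm_smul, Real.norm_of_nonneg (by positivity)]
    calc t / ρ * ‖x - y‖ ≤ t / ρ * ρ := by gcongr
      _ = t := by field_simp
  · intro z hz hzA
    have := Metric.infDist_le_dist_of_mem (x := p t) hzA
    rw [Metric.mem_ball, dist_comm] at hz
    linarith
  · rw [← dist_eq_norm, dist_comm, ← hd, htd]

theorem vitali {D : Set (E n)} {c : E n → E n} {t : E n → ℝ} {R : ℝ} (ht : ∀ x ∈ D, 0 < t x)
    (htR : ∀ x ∈ D, t x ≤ R) :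
    ∃ v ⊆ D, v.Countable ∧ (v.PairwiseDisjoint fun x => Metric.closedBall (c x) (t x)) ∧
      ∀ x ∈ D, ∃ z ∈ v, Metric.closedBall (c x) (t x) ⊆ Metric.closedBall (c z) (5 * t z) := by
  obtain ⟨v, hv, hd, hc⟩ := Vitali.exists_disjoint_subfamily_covering_enlargement_closedBall D c t R
    htR 5 (by norm_num)
  refine ⟨v, hv, ?_, hd, hc⟩
  apply hd.countable_of_nonempty_interior
  intro x hx
  have : (Metric.ball (c x) (t x)).Nonempty := Metric.nonempty_ball.2 (ht x (hv hx))
  exact this.mono Metric.ball_subset_interior_closedBall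

set_option maxHeartbeats 1000000 in
theorem growth_step (hn : 1 ≤ n) {lam Lam : ℝ} (hl : 0 < lam) (hL : lam ≤ Lam) :
    ∃ M C K : ℝ, 4 ≤ M ∧ 1 ≤ C ∧ 1 ≤ K ∧
    (∀ (b f u : E n → ℝ) (y : E n) (ρ : ℝ), 0 < ρ → Sup n lam Lam b f u (Metric.ball y (5 * ρ)) →
      ∀ F B : ℝ, 0 ≤ F → 0 ≤ B →
      ∫⁻ x in Metric.ball y (5 * ρ), ENNReal.ofReal ((max (f x) 0) ^ n) ≤ ENNReal.ofReal F →
      ∫⁻ x in Metric.ball y (5 * ρ), ENNReal.ofReal ((b x) ^ n) ≤ ENNReal.ofReal B →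
      ∀ a G R : ℝ, 0 < a → 0 ≤ G → 0 < R →
      (touch u (Metric.ball y (5 * ρ)) a G ∩ Metric.closedBall y ρ).Nonempty →
      volume (Metric.ball y ρ \ touch u (Metric.ball y (5 * ρ)) a G) ≤ ENNReal.ofReal (om n * R ^ n) →
      volume (Metric.ball y ρ \ touch u (Metric.ball y (5 * ρ)) (M * a) (G + C * a * R)) ≤
        ENNReal.ofReal ((1 - 1 / K) * (om n * R ^ n) + ((a ^ n)⁻¹ * F + (G / a + R) ^ n * B))) ∧
    (∀ (b f u : E n → ℝ) (y : E n) (ρ : ℝ), 0 < ρ → Sup n lam Lam b f u (Metric.ball y (5 * ρ)) →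
      ∀ F B : ℝ, 0 ≤ F → 0 ≤ B →
      ∫⁻ x in Metric.ball y (5 * ρ), ENNReal.ofReal ((max (f x) 0) ^ n) ≤ ENNReal.ofReal F →
      ∫⁻ x in Metric.ball y (5 * ρ), ENNReal.ofReal ((b x) ^ n) ≤ ENNReal.ofReal B →
      ∀ a : ℝ, 0 < a → (∃ x1 ∈ Metric.ball y ρ, u x1 ≤ a * ρ ^ 2) →
      C * ((a ^ n)⁻¹ * F + ρ ^ n * B) < ρ ^ n →
      (touch u (Metric.ball y (5 * ρ)) (M * a) (C * a * ρ) ∩ Metric.closedBall y ρ).Nonempty) := by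
  obtain ⟨M, C, hM, hC, hB0⟩ := lemB hn hl hL
  have hom := om_pos n
  set K : ℝ := 1 + 20 ^ n * om n * C with hK
  have hK1 : 1 ≤ K := by rw [hK]; have : 0 ≤ 20 ^ n * om n * C := by positivity
                         linarith
  refine ⟨M, C, K, hM, hC, hK1, ?_, ?_⟩
  · intro b f u y ρ hρ hS F B hF0 hB00 hF hB a G R ha hG hR hne hD
    set Ω := Metric.ball y (5 * ρ) with hΩ
    have hcb : Metric.closedBall y ρ ⊆ Ω := Metric.closedBall_subset_ball (by linarith)
    have hcA := touch_compact hS.op hS.cd (isCompact_closedBall y ρ) hcb a G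
    have hcA' := touch_compact hS.op hS.cd (isCompact_closedBall y ρ) hcb (M * a) (G + C * a * R)
    set D := Metric.ball y ρ \ touch u Ω a G with hDdef
    set D' := Metric.ball y ρ \ touch u Ω (M * a) (G + C * a * R) with hD'def
    have hDD : D' ⊆ D := by
      apply Set.sdiff_subset_sdiff_right
      apply touch_mono
      · nlinarith
      · have : 0 ≤ C * a * R := by positivity
        linarith
    have hmD' : MeasurableSet D' := by
      have : D' = Metric.ball y ρ \ (touch u Ω (M * a) (G + C * a * R) ∩ Metric.closedBall y ρ) := by
        ext x
        simp only [hD'def, Set.mem_sdiff, Set.mem_inter_iff, not_and]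
        constructor
        · rintro ⟨h1, h2⟩; exact ⟨h1, fun h => absurd h h2⟩
        · rintro ⟨h1, h2⟩; exact ⟨h1, fun h => h2 h (Metric.ball_subset_closedBall h1)⟩
      rw [this]
      exact Metric.isOpen_ball.measurableSet.diff hcA'.isClosed.measurableSet
    have hch : ∀ x ∈ D, ∃ ct : E n × ℝ, 0 < ct.2 ∧ ct.2 ≤ R ∧ ‖x - ct.1‖ ≤ ct.2 ∧
        Metric.closedBall ct.1 (4 * ct.2) ⊆ Ω ∧ Metric.ball ct.1 ct.2 ⊆ D ∧
        ENNReal.ofReal (ct.2 ^ n) ≤ ENNReal.ofReal C * (ENNReal.ofReal ((a ^ n)⁻¹) *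
          (∫⁻ x in Metric.closedBall ct.1 (4 * ct.2), ENNReal.ofReal ((max (f x) 0) ^ n)) +
        ENNReal.ofReal ((G / a + R) ^ n) *
          (∫⁻ x in Metric.closedBall ct.1 (4 * ct.2), ENNReal.ofReal ((b x) ^ n)) +
        volume ((D \ D') ∩ Metric.ball ct.1 ct.2)) := by
      intro x hx
      obtain ⟨c, t, ht0, hct, hxc, hdis, x1, hx1, hx1c⟩ := ball_touch hcA hne hρ
        (fun z hz => hz.2) hx.1 (fun h => hx.2 h.1)
      have hby : Metric.ball c t ⊆ Metric.ball y ρ := by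
        apply Metric.ball_subset_ball'
        rw [dist_eq_norm]; linarith
      have hbD : Metric.ball c t ⊆ D := fun z hz =>
        ⟨hby hz, fun h => hdis z hz ⟨h, Metric.ball_subset_closedBall (hby hz)⟩⟩
      have htR : t ≤ R := by
        have h1 := (measure_mono hbD).trans hD
        rw [vol_ball c ht0] at h1
        have h2 := (ENNReal.ofReal_le_ofReal_iff (by positivity)).1 h1
        have h3 : t ^ n ≤ R ^ n := by
          rw [mul_comm] at h2
          exact le_of_mul_le_mul_left h2 hom
        exact le_of_pow_le_pow_left₀ (by omega) hR.le h3
      have hcO : Metric.closedBall c (4 * t) ⊆ Ω := by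
        refine (Metric.closedBall_subset_closedBall' (ε₂ := 4 * ρ) (y := y) ?_).trans
          (Metric.closedBall_subset_ball (by linarith))
        have := norm_nonneg (c - y)
        rw [dist_eq_norm]; linarith
      refine ⟨(c, t), ht0, htR, hxc, hcO, hbD, ?_⟩
      obtain ⟨⟨hx1O, hx1t, hx1g⟩, hx1b⟩ := hx1
      have := hB0 b f u Ω hS c x1 (gradient u x1) a t G (u x1) ha ht0 hx1g hcO hx1c hx1t (by
        have : 0 ≤ a * t ^ 2 := by positivity
        linarith)
      refine this.trans ?_
      simp only
      have hv : volume (touch u Ω (M * a) (G + C * a * t) ∩ Metric.ball c t) ≤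
          volume ((D \ D') ∩ Metric.ball c t) := by
        apply measure_mono
        rintro z ⟨hz1, hz2⟩
        refine ⟨⟨hbD hz2, fun h => h.2 ?_⟩, hz2⟩
        refine touch_mono le_rfl ?_ hz1
        gcongr
      gcongr
    choose! ct hct0 hctR hctx hctO hctD hctE using hch
    obtain ⟨v, hvD, hvc, hvd, hcov⟩ := vitali (D := D) (c := fun x => (ct x).1)
      (t := fun x => 4 * (ct x).2) (R := 4 * R) (fun x hx => by have := hct0 x hx; positivity)
      (fun x hx => by have := hctR x hx; linarith)
    have hsub : D ⊆ ⋃ z ∈ v, Metric.closedBall (ct z).1 (5 * (4 * (ct z).2)) := by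
      intro x hx
      obtain ⟨z, hz, hxz⟩ := hcov x hx
      refine Set.mem_biUnion hz (hxz ?_)
      rw [Metric.mem_closedBall, dist_eq_norm]
      have := hctx x hx
      have := hct0 x hx
      linarith
    have hcount : Countable v := hvc.to_subtype
    have hsumI : ∀ φ : E n → ℝ≥0∞,
        ∑' z : v, ∫⁻ x in Metric.closedBall (ct z.1).1 (4 * (ct z.1).2), φ x ≤ ∫⁻ x in Ω, φ x := by
      intro φ
      rw [← lintegral_biUnion hvc (s := fun z => Metric.closedBall (ct z).1 (4 * (ct z).2))
        (fun z _ => measurableSet_closedBall) hvd]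
      apply lintegral_mono_set
      exact Set.iUnion₂_subset fun z hz => hctO z (hvD hz)
    have hsumV : ∑' z : v, volume ((D \ D') ∩ Metric.ball (ct z.1).1 (ct z.1).2) ≤
        volume (D \ D') := by
      have hpd : Pairwise (Function.onFun Disjoint fun z : v => Metric.ball (ct z.1).1 (ct z.1).2) := by
        intro i j hij
        have := hvd i.2 j.2 (fun h => hij (Subtype.ext h))
        refine Set.disjoint_of_subset ?_ ?_ this
        · exact Metric.ball_subset_closedBall.trans (Metric.closedBall_subset_closedBall (by
            have := hct0 i.1 (hvD i.2); linarith))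
        · exact Metric.ball_subset_closedBall.trans (Metric.closedBall_subset_closedBall (by
            have := hct0 j.1 (hvD j.2); linarith))
      have h1 := measure_iUnion (μ := volume.restrict (D \ D')) hpd
        (fun z => Metric.isOpen_ball.measurableSet)
      have h2 : ∀ z : v, volume.restrict (D \ D') (Metric.ball (ct z.1).1 (ct z.1).2) =
          volume ((D \ D') ∩ Metric.ball (ct z.1).1 (ct z.1).2) := by
        intro z
        rw [Measure.restrict_apply Metric.isOpen_ball.measurableSet, Set.inter_comm]
      simp only [h2] at h1
      rw [← h1]
      exact (measure_mono (Set.subset_univ _)).trans_eq (by simp)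
    set kk := ENNReal.ofReal (20 ^ n * om n * C) with hkk
    have hmain : volume D ≤ kk * (ENNReal.ofReal ((a ^ n)⁻¹ * F) +
        ENNReal.ofReal ((G / a + R) ^ n * B) + volume (D \ D')) := by
      calc volume D ≤ ∑' z : v, volume (Metric.closedBall (ct z.1).1 (5 * (4 * (ct z.1).2))) := by
            refine (measure_mono hsub).trans ?_
            exact measure_biUnion_le _ hvc _
        _ = ∑' z : v, ENNReal.ofReal (20 ^ n * om n) * ENNReal.ofReal ((ct z.1).2 ^ n) := by
            congr 1; ext z
            have := hct0 z.1 (hvD z.2)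
            rw [vol_closedBall _ (by positivity), ← ENNReal.ofReal_mul (by positivity)]
            congr 1
            have e : 5 * (4 * (ct z.1).2) = 20 * (ct z.1).2 := by ring
            rw [e, mul_pow]; ring
        _ ≤ ∑' z : v, ENNReal.ofReal (20 ^ n * om n) * (ENNReal.ofReal C *
              (ENNReal.ofReal ((a ^ n)⁻¹) *
          (∫⁻ x in Metric.closedBall (ct z.1).1 (4 * (ct z.1).2), ENNReal.ofReal ((max (f x) 0) ^ n)) +
        ENNReal.ofReal ((G / a + R) ^ n) *
          (∫⁻ x in Metric.closedBall (ct z.1).1 (4 * (ct z.1).2), ENNReal.ofReal ((b x) ^ n)) +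
        volume ((D \ D') ∩ Metric.ball (ct z.1).1 (ct z.1).2))) := by
            refine ENNReal.tsum_le_tsum fun z => ?_
            exact mul_le_mul_right (hctE z.1 (hvD z.2)) _
        _ = kk * (ENNReal.ofReal ((a ^ n)⁻¹) * (∑' z : v,
              ∫⁻ x in Metric.closedBall (ct z.1).1 (4 * (ct z.1).2), ENNReal.ofReal ((max (f x) 0) ^ n)) +
            ENNReal.ofReal ((G / a + R) ^ n) * (∑' z : v,
              ∫⁻ x in Metric.closedBall (ct z.1).1 (4 * (ct z.1).2), ENNReal.ofReal ((b x) ^ n)) +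
            ∑' z : v, volume ((D \ D') ∩ Metric.ball (ct z.1).1 (ct z.1).2)) := by
            rw [ENNReal.tsum_mul_left, ENNReal.tsum_mul_left, ENNReal.tsum_add, ENNReal.tsum_add,
              ENNReal.tsum_mul_left, ENNReal.tsum_mul_left, hkk,
              ENNReal.ofReal_mul (show (0 : ℝ) ≤ 20 ^ n * om n by positivity) (q := C), mul_assoc]
        _ ≤ kk * (ENNReal.ofReal ((a ^ n)⁻¹) * ENNReal.ofReal F +
            ENNReal.ofReal ((G / a + R) ^ n) * ENNReal.ofReal B + volume (D \ D')) := by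
            refine mul_le_mul_right (add_le_add (add_le_add ?_ ?_) hsumV) _
            · exact mul_le_mul_right ((hsumI _).trans hF) _
            · exact mul_le_mul_right ((hsumI _).trans hB) _
        _ = _ := by rw [ENNReal.ofReal_mul (by positivity), ENNReal.ofReal_mul (by positivity)]
    have hDfin : volume D ≠ ⊤ := ne_top_of_le_ne_top ENNReal.ofReal_ne_top hD
    have hD'fin : volume D' ≠ ⊤ := ne_top_of_le_ne_top hDfin (measure_mono hDD)
    have hdiff : volume (D \ D') = volume D - volume D' :=
      measure_diff hDD hmD'.nullMeasurableSet hD'fin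
    set X := (a ^ n)⁻¹ * F + (G / a + R) ^ n * B with hX
    have hX0 : 0 ≤ X := by positivity
    rw [← ENNReal.ofReal_add (by positivity) (by positivity), hdiff] at hmain
    have hDr : volume D = ENNReal.ofReal (volume D).toReal := (ENNReal.ofReal_toReal hDfin).symm
    have hDr' : volume D' = ENNReal.ofReal (volume D').toReal := (ENNReal.ofReal_toReal hD'fin).symm
    have hle : (volume D').toReal ≤ (volume D).toReal := ENNReal.toReal_mono hDfin (measure_mono hDD)
    have hm0 : 0 ≤ (volume D').toReal := ENNReal.toReal_nonneg
    rw [hDr] at hD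
    rw [hDr, hDr'] at hmain
    rw [hDr']
    generalize (volume D).toReal = d at hmain hle hD
    generalize (volume D').toReal = d' at hmain hle hm0
    have hD2 := (ENNReal.ofReal_le_ofReal_iff (by positivity)).1 hD
    rw [← ENNReal.ofReal_sub _ hm0, ← ENNReal.ofReal_add hX0 (by linarith), hkk,
      ← ENNReal.ofReal_mul (by positivity)] at hmain
    have hm2 := (ENNReal.ofReal_le_ofReal_iff (by
      have : 0 ≤ X + (d - d') := by linarith
      positivity)).1 hmain
    apply ENNReal.ofReal_le_ofReal
    have hm3 : d ≤ K * (X + (d - d')) := by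
      have : 0 ≤ X + (d - d') := by linarith
      rw [hK]; linarith
    have hK0 : 0 < K := by linarith
    have hm4 : d / K ≤ X + (d - d') := by rw [div_le_iff₀ hK0]; linarith
    have hm5 : (1 - 1 / K) * d ≤ (1 - 1 / K) * (om n * R ^ n) := by
      have : 1 / K ≤ 1 := (div_le_one hK0).2 hK1
      apply mul_le_mul_of_nonneg_left hD2; linarith
    have e : (1 - 1 / K) * d = d - d / K := by ring
    linarith
  · intro b f u y ρ hρ hS F B hF0 hB00 hF hB a ha ⟨x1, hx1, hx1u⟩ hsmall
    rw [Metric.mem_ball, dist_eq_norm] at hx1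
    have h := hB0 b f u _ hS y x1 0 a ρ 0 0 ha hρ (by simp)
      (Metric.closedBall_subset_ball (by linarith)) hx1.le (by
        intro z hz
        have := hS.u0 z hz
        have : 0 ≤ a * ‖z - x1‖ ^ 2 := by positivity
        simp only [inner_zero_left]; linarith) (by linarith)
    by_contra hne
    rw [Set.not_nonempty_iff_eq_empty] at hne
    have hv : touch u (Metric.ball y (5 * ρ)) (M * a) (0 + C * a * ρ) ∩ Metric.ball y ρ = ∅ := by
      rw [zero_add]
      apply Set.eq_empty_of_subset_empty
      rw [← hne]
      exact Set.inter_subset_inter_right _ Metric.ball_subset_closedBall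
    rw [hv, measure_empty, add_zero, zero_div, zero_add] at h
    have hcs : Metric.closedBall y (4 * ρ) ⊆ Metric.ball y (5 * ρ) :=
      Metric.closedBall_subset_ball (by linarith)
    have h2 : ENNReal.ofReal (ρ ^ n) ≤ ENNReal.ofReal C * (ENNReal.ofReal ((a ^ n)⁻¹) *
        ENNReal.ofReal F + ENNReal.ofReal (ρ ^ n) * ENNReal.ofReal B) := by
      refine h.trans (mul_le_mul_right (add_le_add ?_ ?_) _)
      · exact mul_le_mul_right ((lintegral_mono_set hcs).trans hF) _
      · exact mul_le_mul_right ((lintegral_mono_set hcs).trans hB) _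
    rw [← ENNReal.ofReal_mul (by positivity), ← ENNReal.ofReal_mul (by positivity),
      ← ENNReal.ofReal_add (by positivity) (by positivity), ← ENNReal.ofReal_mul (by positivity),
      ENNReal.ofReal_le_ofReal_iff (by positivity)] at h2
    linarith

end covering
end QSMP
namespace QSMP

open Matrix Filter Topology

section decay
variable {n : ℕ}

theorem touch_f {lam Lam : ℝ} (hl : 0 < lam) (hL : lam ≤ Lam) {b f u : E n → ℝ} {Ω : Set (E n)}
    (hS : Sup n lam Lam b f u Ω) {a G : ℝ} (ha : 0 ≤ a) {x : E n} (hx : x ∈ touch u Ω a G) :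
    -f x ≤ 2 * a * Lam * n + b x * G := by
  obtain ⟨hxO, hx1, hx2⟩ := hx
  have ht := (TF.nsq x).smul a
  have hp := contact_psd hS.op (w := fun z => u z + a * ‖z - x‖ ^ 2)
    (gw := fun z => gradient u z + a • (2 : ℝ) • (z - x))
    (T := fderiv ℝ (gradient u) x + a • (2 : ℝ) • ContinuousLinearMap.id ℝ (E n))
    (fun z hz => by
      have := (grad_has hS.op hS.cd hz).hasFDerivAt.add (ht.d1 z).hasFDerivAt
      rw [hasGradientAt_iff_hasFDerivAt, map_add]; exact this)
    hxO ((grad_diff hS.op hS.cd hxO).add (ht.d2 x)) (by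
      intro z hz
      have := hx1 z hz
      simp only [sub_self, smul_zero, add_zero, norm_zero]
      simp only [ne_eq, OfNat.ofNat_ne_zero, not_false_eq_true, zero_pow, mul_zero, add_zero]
      linarith)
  have hpsd := mat_psd (T := fderiv ℝ (gradient u) x + a • (2 : ℝ) • ContinuousLinearMap.id ℝ (E n))
    (by
      intro v w
      simp only [_root_.add_apply, inner_add_left, inner_add_right, grad_sym hS.op hS.cd hxO,
        ht.sym x]) hp
  rw [mat_add, mat_smul, mat_smul, mat_id, smul_smul, ← hess_eq hS.op hS.cd hxO] at hpsd
  have h1 := pucci_lower hL (by positivity) hl.le hpsd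
  have h2 := hS.eq x hxO
  rw [gradNorm_eq] at h2
  have h3 : b x * ‖gradient u x‖ ≤ b x * G := mul_le_mul_of_nonneg_left hx2 (hS.b0 x hxO)
  linarith

theorem growth (hn : 1 ≤ n) {lam Lam : ℝ} (hl : 0 < lam) (hL : lam ≤ Lam) :
    ∃ M C θ δ : ℝ, 4 ≤ M ∧ 1 ≤ C ∧ 1 / 2 ≤ θ ∧ θ < 1 ∧ 0 < δ ∧
    (∀ (b f u : E n → ℝ) (y : E n) (ρ T : ℝ), 0 < ρ → 0 < T →
      Sup n lam Lam b f u (Metric.ball y (5 * ρ)) →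
      ∫⁻ x in Metric.ball y (5 * ρ), ENNReal.ofReal ((max (f x) 0) ^ n) ≤
        ENNReal.ofReal (δ * (T / ρ) ^ n) →
      ∫⁻ x in Metric.ball y (5 * ρ), ENNReal.ofReal ((b x) ^ n) ≤ ENNReal.ofReal δ →
      (∃ x1 ∈ Metric.ball y ρ, u x1 ≤ T) → ∀ k : ℕ,
      volume (Metric.ball y ρ \ touch u (Metric.ball y (5 * ρ)) (M * (T / ρ ^ 2) * M ^ k)
        (C * (M * (T / ρ ^ 2) * M ^ k) * (ρ * θ ^ k))) ≤ ENNReal.ofReal (om n * (ρ * θ ^ k) ^ n)) := by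
  obtain ⟨M, C, K, hM, hC, hK, hstep, hinit⟩ := growth_step hn hl hL
  have hom := om_pos n
  have hn1 : (1 : ℝ) ≤ n := by exact_mod_cast hn
  have hx0 : 0 < 1 / (2 * n * K) := by positivity
  have hx1 : 1 / (2 * n * K) ≤ 1 / 2 := by
    apply div_le_div_of_nonneg_left (by norm_num) (by norm_num)
    nlinarith
  set θ := 1 - 1 / (2 * n * K) with hθ
  have hθn : 1 - 1 / (2 * K) ≤ θ ^ n := by
    have := one_add_mul_le_pow (a := -(1 / (2 * n * K))) (by linarith) n
    have e : 1 + (n : ℝ) * -(1 / (2 * n * K)) = 1 - 1 / (2 * K) := by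
      field_simp
      ring
    rw [e] at this
    rw [hθ, sub_eq_add_neg 1 (1 / (2 * (n : ℝ) * K))]; exact this
  set δ := min (1 / (4 * C)) (om n / (2 * K * (1 + (C + 1) ^ n))) with hδ
  have hδ0 : 0 < δ := by positivity
  have hδ1 : δ ≤ 1 / (4 * C) := min_le_left _ _
  have hδ2 : δ ≤ om n / (2 * K * (1 + (C + 1) ^ n)) := min_le_right _ _
  refine ⟨M, C, θ, δ, hM, hC, by linarith, by linarith, hδ0, ?_⟩
  intro b f u y ρ T hρ hT hS hF hB hx k
  have hθ0 : 1 / 2 ≤ θ := by linarith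
  have hMθ : 2 ≤ M * θ := by nlinarith
  suffices h : (touch u (Metric.ball y (5 * ρ)) (M * (T / ρ ^ 2) * M ^ k)
        (C * (M * (T / ρ ^ 2) * M ^ k) * (ρ * θ ^ k)) ∩ Metric.closedBall y ρ).Nonempty ∧
      volume (Metric.ball y ρ \ touch u (Metric.ball y (5 * ρ)) (M * (T / ρ ^ 2) * M ^ k)
        (C * (M * (T / ρ ^ 2) * M ^ k) * (ρ * θ ^ k))) ≤ ENNReal.ofReal (om n * (ρ * θ ^ k) ^ n) from h.2
  induction k with
  | zero =>
    constructor
    · have := hinit b f u y ρ hρ hS _ _ (by positivity) hδ0.le hF hB (T / ρ ^ 2) (by positivity) (by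
        obtain ⟨x1, h1, h2⟩ := hx
        refine ⟨x1, h1, h2.trans (le_of_eq ?_)⟩
        field_simp) (by
        have e : C * (((T / ρ ^ 2) ^ n)⁻¹ * (δ * (T / ρ) ^ n) + ρ ^ n * δ) = 2 * (C * δ) * ρ ^ n := by
          rw [div_pow, div_pow, ← pow_mul]
          field_simp
          rw [show 2 * n = n + n by ring, pow_add]; ring
        rw [e]
        have h1 : C * δ ≤ 1 / 4 := by
          calc C * δ ≤ C * (1 / (4 * C)) := by gcongr
            _ = 1 / 4 := by field_simp
        have : 0 < ρ ^ n := by positivity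
        nlinarith)
      refine this.mono (Set.inter_subset_inter_left _ (touch_mono ?_ ?_))
      · simp
      · simp only [pow_zero, mul_one]
        have : C * (1 * (T / ρ ^ 2)) * ρ ≤ C * (M * (T / ρ ^ 2)) * ρ := by gcongr; linarith
        linarith
    · simp only [pow_zero, mul_one]
      refine (measure_mono Set.sdiff_subset).trans ?_
      rw [vol_ball y hρ, mul_comm]
  | succ k ih =>
    obtain ⟨ih1, ih2⟩ := ih
    set a := M * (T / ρ ^ 2) * M ^ k with ha
    set R := ρ * θ ^ k with hR
    have ha0 : 0 < a := by positivity
    have hR0 : 0 < R := by positivity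
    have ea : M * (T / ρ ^ 2) * M ^ (k + 1) = M * a := by rw [ha, pow_succ]; ring
    have eR : ρ * θ ^ (k + 1) = R * θ := by rw [hR, pow_succ]; ring
    rw [ea, eR]
    have hGG : C * a * R + C * a * R ≤ C * (M * a) * (R * θ) := by
      have e : C * (M * a) * (R * θ) = (C * a * R) * (M * θ) := by ring
      rw [e]
      have : 0 < C * a * R := by positivity
      nlinarith
    constructor
    · refine ih1.mono (Set.inter_subset_inter_left _ (touch_mono ?_ ?_))
      · nlinarith
      · have : 0 < C * a * R := by positivity
        linarith
    · have h := hstep b f u y ρ hρ hS _ _ (by positivity) hδ0.le hF hB a (C * a * R) R ha0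
        (by positivity) hR0 ih1 ih2
      refine (measure_mono (Set.sdiff_subset_sdiff_right (touch_mono le_rfl hGG))).trans (h.trans ?_)
      apply ENNReal.ofReal_le_ofReal
      have h1 : T / ρ ≤ a * R := by
        have e : a * R = M * (M * θ) ^ k * (T / ρ) := by
          rw [ha, hR, mul_pow]; field_simp
        rw [e]
        have h2 : 1 ≤ (M * θ) ^ k := one_le_pow₀ (by linarith)
        have h3 : 1 ≤ M * (M * θ) ^ k := by nlinarith
        exact le_mul_of_one_le_left (by positivity) h3
      have h2 : (a ^ n)⁻¹ * (δ * (T / ρ) ^ n) ≤ δ * R ^ n := by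
        calc (a ^ n)⁻¹ * (δ * (T / ρ) ^ n) ≤ (a ^ n)⁻¹ * (δ * (a * R) ^ n) := by gcongr
          _ = ((a ^ n)⁻¹ * a ^ n) * (δ * R ^ n) := by rw [mul_pow]; ring
          _ = _ := by rw [inv_mul_cancel₀ (by positivity), one_mul]
      have e3 : (C * a * R / a + R) ^ n * δ = δ * (C + 1) ^ n * R ^ n := by
        have : C * a * R / a + R = (C + 1) * R := by field_simp
        rw [this, mul_pow]; ring
      rw [e3]
      have h4 : δ * (1 + (C + 1) ^ n) ≤ om n / (2 * K) := by
        calc δ * (1 + (C + 1) ^ n) ≤ om n / (2 * K * (1 + (C + 1) ^ n)) * (1 + (C + 1) ^ n) := by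
              apply mul_le_mul_of_nonneg_right hδ2 (by positivity)
          _ = _ := by field_simp
      have h5 : δ * (1 + (C + 1) ^ n) * R ^ n ≤ om n / (2 * K) * R ^ n := by
        apply mul_le_mul_of_nonneg_right h4 (by positivity)
      have h6 : (1 - 1 / (2 * K)) * (om n * R ^ n) ≤ θ ^ n * (om n * R ^ n) := by
        apply mul_le_mul_of_nonneg_right hθn (by positivity)
      have e7 : (1 - 1 / K) * (om n * R ^ n) + om n / (2 * K) * R ^ n =
        (1 - 1 / (2 * K)) * (om n * R ^ n) := by field_simp; ring
      have e8 : om n * (R * θ) ^ n = θ ^ n * (om n * R ^ n) := by rw [mul_pow]; ring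
      rw [e8]
      linarith

theorem layer {S : Set (E n)} {g : E n → ℝ} (hg : ∀ x ∈ S, 0 ≤ g x) (hSm : MeasurableSet S)
    {H Q V κ κ' ε : ℝ} (hH : 0 < H) (hQ : 1 < Q) (hV : 0 ≤ V) (hκ : 0 ≤ κ) (hκ' : κ' < 1)
    (hε : 0 < ε) (hQε : Q ^ ε * κ ≤ κ') {D : ℕ → Set (E n)}
    (hD : ∀ k, volume (D k) ≤ ENNReal.ofReal (V * κ ^ k)) (hSV : volume S ≤ ENNReal.ofReal V)
    (hgD : ∀ x ∈ S, ∀ k : ℕ, H * Q ^ k < g x → x ∈ D k) :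
    ∫⁻ x in S, ENNReal.ofReal (g x ^ ε) ≤
      ENNReal.ofReal ((2 * H) ^ ε * (V * (1 + Q ^ ε * (1 - κ')⁻¹))) := by
  have hκ0 : 0 ≤ κ' := le_trans (by positivity) hQε
  set D' : ℕ → Set (E n) := fun k => toMeasurable volume (D k) with hD'
  have hQp : 0 < Q ^ ε := by positivity
  have hpt : ∀ x ∈ S, ENNReal.ofReal (g x ^ ε) ≤ ENNReal.ofReal ((2 * H) ^ ε) *
      (1 + ∑' k, ENNReal.ofReal ((Q ^ ε) ^ (k + 1)) * (D' k).indicator 1 x) := by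
    intro x hx
    have hg0 := hg x hx
    rcases lt_or_ge (g x) (2 * H) with h | h
    · calc ENNReal.ofReal (g x ^ ε) ≤ ENNReal.ofReal ((2 * H) ^ ε) := by
            apply ENNReal.ofReal_le_ofReal
            exact Real.rpow_le_rpow hg0 h.le hε.le
        _ = ENNReal.ofReal ((2 * H) ^ ε) * 1 := (mul_one _).symm
        _ ≤ _ := mul_le_mul_right le_self_add _
    · obtain ⟨k, hk1, hk2⟩ := exists_nat_pow_near
        (show 1 ≤ g x / (2 * H) by rw [le_div_iff₀ (by positivity)]; linarith) hQ
      have h2H : 0 < 2 * H := by positivity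
      rw [le_div_iff₀ h2H] at hk1
      rw [div_lt_iff₀ h2H] at hk2
      have hQk : 0 < Q ^ k := by positivity
      have hxk : x ∈ D' k := subset_toMeasurable _ _ (hgD x hx k (by nlinarith))
      have h3 : ENNReal.ofReal (g x ^ ε) ≤
          ENNReal.ofReal ((2 * H) ^ ε) * ENNReal.ofReal ((Q ^ ε) ^ (k + 1)) := by
        rw [← ENNReal.ofReal_mul (by positivity)]
        apply ENNReal.ofReal_le_ofReal
        calc g x ^ ε ≤ (2 * H * Q ^ (k + 1)) ^ ε := by
              apply Real.rpow_le_rpow hg0 _ hε.le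
              linarith
          _ = _ := by
            rw [Real.mul_rpow (by positivity) (by positivity), ← Real.rpow_natCast,
              ← Real.rpow_natCast, ← Real.rpow_mul (by positivity), ← Real.rpow_mul (by positivity),
              mul_comm ε]
      refine h3.trans (mul_le_mul_right ?_ _)
      refine le_trans ?_ le_add_self
      refine le_trans ?_ (ENNReal.le_tsum k)
      rw [Set.indicator_of_mem hxk]; simp
  refine (setLIntegral_mono_ae' hSm (ae_of_all _ hpt)).trans ?_
  have hmk : ∀ k, Measurable (fun x => ENNReal.ofReal ((Q ^ ε) ^ (k + 1)) *
      (D' k).indicator (1 : E n → ℝ≥0∞) x) := fun k =>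
    (measurable_const.indicator (measurableSet_toMeasurable _ _)).const_mul _
  rw [lintegral_const_mul' _ _ ENNReal.ofReal_ne_top, lintegral_add_left measurable_const,
    lintegral_tsum fun k => (hmk k).aemeasurable]
  have hterm : ∀ k, ∫⁻ x in S, ENNReal.ofReal ((Q ^ ε) ^ (k + 1)) *
      (D' k).indicator (1 : E n → ℝ≥0∞) x ≤ ENNReal.ofReal (Q ^ ε * V) * (ENNReal.ofReal κ') ^ k := by
    intro k
    rw [lintegral_const_mul' _ _ ENNReal.ofReal_ne_top,
      lintegral_indicator_one (measurableSet_toMeasurable _ _)]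
    have h1 : volume.restrict S (D' k) ≤ ENNReal.ofReal (V * κ ^ k) :=
      (Measure.restrict_apply_le _ _).trans ((measure_toMeasurable _).le.trans (hD k))
    refine (mul_le_mul_right h1 _).trans ?_
    rw [← ENNReal.ofReal_mul (by positivity), ← ENNReal.ofReal_pow hκ0,
      ← ENNReal.ofReal_mul (by positivity)]
    apply ENNReal.ofReal_le_ofReal
    calc (Q ^ ε) ^ (k + 1) * (V * κ ^ k) = Q ^ ε * V * (Q ^ ε * κ) ^ k := by
          rw [pow_succ, mul_pow]; ring
      _ ≤ _ := by gcongr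
  have h1 : ∫⁻ x in S, (1 : ℝ≥0∞) ≤ ENNReal.ofReal V := by simpa using hSV
  have h2 : ∑' k, ∫⁻ x in S, ENNReal.ofReal ((Q ^ ε) ^ (k + 1)) *
      (D' k).indicator (1 : E n → ℝ≥0∞) x ≤ ENNReal.ofReal (Q ^ ε * V) * ENNReal.ofReal ((1 - κ')⁻¹) := by
    refine (ENNReal.tsum_le_tsum hterm).trans ?_
    rw [ENNReal.tsum_mul_left, ENNReal.tsum_geometric]
    refine mul_le_mul_right (le_of_eq ?_) _
    rw [ENNReal.ofReal_inv_of_pos (by linarith), ENNReal.ofReal_sub _ hκ0, ENNReal.ofReal_one]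
  refine (mul_le_mul_right (add_le_add h1 h2) _).trans (le_of_eq ?_)
  have : 0 < (1 - κ')⁻¹ := by
    have : 0 < 1 - κ' := by linarith
    positivity
  rw [← ENNReal.ofReal_mul (by positivity), ← ENNReal.ofReal_add (by positivity) (by positivity),
    ← ENNReal.ofReal_mul (by positivity)]
  congr 1; ring

theorem thmD (hn : 1 ≤ n) {lam Lam : ℝ} (hl : 0 < lam) (hL : lam ≤ Lam) :
    ∃ ε0 C δ : ℝ, 0 < ε0 ∧ 0 < C ∧ 0 < δ ∧
    (∀ (b f u : E n → ℝ) (y : E n) (ρ T ε : ℝ), 0 < ρ → 0 < T → 0 < ε → ε ≤ ε0 →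
      Sup n lam Lam b f u (Metric.ball y (5 * ρ)) →
      ∫⁻ x in Metric.ball y (5 * ρ), ENNReal.ofReal ((max (f x) 0) ^ n) ≤
        ENNReal.ofReal (δ * (T / ρ) ^ n) →
      ∫⁻ x in Metric.ball y (5 * ρ), ENNReal.ofReal ((b x) ^ n) ≤ ENNReal.ofReal δ →
      (∃ x1 ∈ Metric.ball y ρ, u x1 ≤ T) →
      ∫⁻ x in Metric.ball y ρ, ENNReal.ofReal ((max (-f x) 0) ^ ε) ≤
        ENNReal.ofReal (C * (T / ρ ^ 2) ^ ε * ρ ^ n)) := by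
  obtain ⟨M, C, θ, δ, hM, hC, hθ0, hθ1, hδ, hgr⟩ := growth hn hl hL
  have hom := om_pos n
  have hn1 : (1 : ℝ) ≤ n := by exact_mod_cast hn
  have hL0 : 0 < Lam := by linarith
  set κ' := (1 + θ) / 2 with hκ'
  have hκ'1 : κ' < 1 := by linarith
  have hκθ : θ < κ' := by linarith
  set Q := M ^ 2 with hQ
  have hQ1 : 1 < Q := by nlinarith
  set ε0 := min 1 (Real.log (κ' / θ) / Real.log Q) with hε0
  have hθp : 0 < θ := by linarith
  have hlogQ : 0 < Real.log Q := Real.log_pos hQ1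
  have hlogκ : 0 < Real.log (κ' / θ) := Real.log_pos ((one_lt_div hθp).2 hκθ)
  have hε00 : 0 < ε0 := by positivity
  set H0 := (2 * Lam * n + C) * M with hH0
  have hH00 : 0 < H0 := by positivity
  have hk1 : 0 < 1 - κ' := by linarith
  have hkinv : 0 < (1 - κ')⁻¹ := by positivity
  refine ⟨ε0, (2 * H0 + 1) * ((om n + δ) * (1 + Q * (1 - κ')⁻¹)), δ, hε00, by positivity, hδ, ?_⟩
  intro b f u y ρ T ε hρ hT hε hεε hS hF hB hx1
  have hgk := hgr b f u y ρ T hρ hT hS hF hB hx1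
  have hε1 : ε ≤ 1 := hεε.trans (min_le_left _ _)
  have hQε : Q ^ ε * θ ≤ κ' := by
    rw [← le_div_iff₀ hθp, Real.rpow_def_of_pos (by linarith)]
    rw [← Real.le_log_iff_exp_le (by positivity)]
    have h1 : ε ≤ Real.log (κ' / θ) / Real.log Q := hεε.trans (min_le_right _ _)
    rw [le_div_iff₀ hlogQ] at h1
    linarith
  have hby : Metric.ball y ρ ⊆ Metric.ball y (5 * ρ) := Metric.ball_subset_ball (by linarith)
  set D : ℕ → Set (E n) := fun k =>
    (Metric.ball y ρ \ touch u (Metric.ball y (5 * ρ)) (M * (T / ρ ^ 2) * M ^ k)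
        (C * (M * (T / ρ ^ 2) * M ^ k) * (ρ * θ ^ k))) ∪ {x ∈ Metric.ball y ρ | M ^ k < ρ * b x} with hD
  set V := (om n + δ) * ρ ^ n with hV
  have hcheb : ∀ k : ℕ, volume {x ∈ Metric.ball y ρ | M ^ k < ρ * b x} ≤
      ENNReal.ofReal (δ * ρ ^ n * θ ^ k) := by
    intro k
    have hmb : AEMeasurable (fun x => ENNReal.ofReal ((b x) ^ n))
        (volume.restrict (Metric.ball y ρ)) := by
      apply AEMeasurable.ennreal_ofReal
      exact ContinuousOn.aemeasurable ((hS.bc.mono hby).pow n) Metric.isOpen_ball.measurableSet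
    have h1 := mul_meas_ge_le_lintegral₀ hmb (ENNReal.ofReal ((M ^ k / ρ) ^ n))
    have h2 : volume {x ∈ Metric.ball y ρ | M ^ k < ρ * b x} ≤
        volume.restrict (Metric.ball y ρ) {x | ENNReal.ofReal ((M ^ k / ρ) ^ n) ≤
          ENNReal.ofReal ((b x) ^ n)} := by
      refine le_trans (measure_mono ?_) (Measure.le_restrict_apply _ _)
      rintro x ⟨hx, hxb⟩
      refine ⟨?_, hx⟩
      show ENNReal.ofReal ((M ^ k / ρ) ^ n) ≤ ENNReal.ofReal ((b x) ^ n)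
      apply ENNReal.ofReal_le_ofReal
      apply pow_le_pow_left₀ (by positivity)
      rw [div_le_iff₀ hρ]; linarith
    have h3 : ENNReal.ofReal ((M ^ k / ρ) ^ n) * volume {x ∈ Metric.ball y ρ | M ^ k < ρ * b x} ≤
        ENNReal.ofReal δ :=
      (mul_le_mul_right h2 _).trans (h1.trans ((lintegral_mono_set hby).trans hB))
    have hpos : 0 < (M ^ k / ρ) ^ n := by positivity
    have h4 : volume {x ∈ Metric.ball y ρ | M ^ k < ρ * b x} ≤
        ENNReal.ofReal δ / ENNReal.ofReal ((M ^ k / ρ) ^ n) := by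
      rw [ENNReal.le_div_iff_mul_le (Or.inl (by simpa using hpos)) (Or.inl ENNReal.ofReal_ne_top),
        mul_comm]
      exact h3
    refine h4.trans ?_
    rw [← ENNReal.ofReal_div_of_pos hpos]
    apply ENNReal.ofReal_le_ofReal
    have e : δ / (M ^ k / ρ) ^ n = δ * ρ ^ n * ((M⁻¹) ^ n) ^ k := by
      rw [div_pow, ← pow_mul, ← pow_mul, inv_pow, mul_comm n k]; field_simp
    rw [e]
    apply mul_le_mul_of_nonneg_left _ (by positivity)
    apply pow_le_pow_left₀ (by positivity)
    have hMi : M⁻¹ ≤ θ := by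
      refine le_trans ?_ hθ0
      rw [inv_le_comm₀ (by linarith) (by norm_num)]; linarith
    calc M⁻¹ ^ n ≤ θ ^ n := by gcongr
      _ ≤ θ := pow_le_of_le_one hθp.le hθ1.le (by omega)
  have := layer (S := Metric.ball y ρ) (g := fun x => max (-f x) 0) (fun x _ => le_max_right _ _)
    Metric.isOpen_ball.measurableSet (H := H0 * (T / ρ ^ 2)) (Q := Q) (V := V) (κ := θ) (κ' := κ')
    (ε := ε) (by positivity) hQ1 (by positivity) hθp.le hκ'1 hε hQε (D := D) (by
      intro k
      refine (measure_union_le _ _).trans ((add_le_add (hgk k) (hcheb k)).trans ?_)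
      rw [← ENNReal.ofReal_add (by positivity) (by positivity)]
      apply ENNReal.ofReal_le_ofReal
      have h1 : (θ ^ k) ^ n ≤ θ ^ k := pow_le_of_le_one (by positivity)
        (pow_le_one₀ hθp.le hθ1.le) (by omega)
      have h2 : om n * (ρ ^ n * (θ ^ k) ^ n) ≤ om n * (ρ ^ n * θ ^ k) := by gcongr
      rw [mul_pow, hV]; linarith) (by
      rw [vol_ball y hρ]
      apply ENNReal.ofReal_le_ofReal
      have : 0 ≤ δ * ρ ^ n := by positivity
      rw [hV]; linarith) (by
      intro x hx k hk
      by_contra hxD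
      rw [hD] at hxD
      simp only [Set.mem_union, not_or] at hxD
      obtain ⟨h1, h2⟩ := hxD
      have h1' : x ∈ touch u (Metric.ball y (5 * ρ)) (M * (T / ρ ^ 2) * M ^ k)
        (C * (M * (T / ρ ^ 2) * M ^ k) * (ρ * θ ^ k)) := by
        by_contra h; exact h1 ⟨hx, h⟩
      have h2' : ρ * b x ≤ M ^ k := by
        by_contra h; push Not at h; exact h2 ⟨hx, h⟩
      have h3 := touch_f hl hL hS (by positivity) h1'
      set a := M * (T / ρ ^ 2) with ha
      have ha0 : 0 < a := by positivity
      have hMk : 1 ≤ M ^ k := one_le_pow₀ (by linarith)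
      have hb0 := hS.b0 x (hby hx)
      have h4 : b x * (C * (a * M ^ k) * (ρ * θ ^ k)) ≤ C * (a * M ^ k) * M ^ k := by
        have h5 : θ ^ k ≤ 1 := pow_le_one₀ hθp.le hθ1.le
        calc b x * (C * (a * M ^ k) * (ρ * θ ^ k)) = C * (a * M ^ k) * (ρ * b x * θ ^ k) := by ring
          _ ≤ C * (a * M ^ k) * (M ^ k * 1) := by
              gcongr
          _ = _ := by ring
      have h6 : 2 * (a * M ^ k) * Lam * n * 1 ≤ 2 * (a * M ^ k) * Lam * n * M ^ k := by gcongr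
      have e : H0 * (T / ρ ^ 2) * Q ^ k = 2 * (a * M ^ k) * Lam * n * M ^ k +
          C * (a * M ^ k) * M ^ k := by
        rw [hH0, hQ, ha, ← pow_mul, mul_comm 2 k, pow_mul]; ring
      have h7 : 0 ≤ H0 * (T / ρ ^ 2) * Q ^ k := by positivity
      have h8 : max (-f x) 0 ≤ H0 * (T / ρ ^ 2) * Q ^ k := max_le (by linarith) h7
      exact absurd hk (not_lt.2 h8))
  refine this.trans ?_
  apply ENNReal.ofReal_le_ofReal
  have g1 : (2 * (H0 * (T / ρ ^ 2))) ^ ε ≤ (2 * H0 + 1) * (T / ρ ^ 2) ^ ε := by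
    calc (2 * (H0 * (T / ρ ^ 2))) ^ ε ≤ ((2 * H0 + 1) * (T / ρ ^ 2)) ^ ε := by
          apply Real.rpow_le_rpow (by positivity) _ hε.le
          have : 0 < T / ρ ^ 2 := by positivity
          linarith
      _ = (2 * H0 + 1) ^ ε * (T / ρ ^ 2) ^ ε := Real.mul_rpow (by positivity) (by positivity)
      _ ≤ (2 * H0 + 1) ^ (1 : ℝ) * (T / ρ ^ 2) ^ ε := by
          gcongr
          linarith
      _ = _ := by rw [Real.rpow_one]
  have g2 : Q ^ ε ≤ Q := by
    calc Q ^ ε ≤ Q ^ (1 : ℝ) := by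
          gcongr
          linarith
      _ = Q := Real.rpow_one Q
  calc _ ≤ ((2 * H0 + 1) * (T / ρ ^ 2) ^ ε) * (V * (1 + Q * (1 - κ')⁻¹)) := by gcongr
    _ = _ := by rw [hV]; ring

end decay
end QSMP
namespace QSMP
open Matrix Filter Topology

section conclusion

lemma weight_fin {n : ℕ} (hn : 1 ≤ n) : ∃ W : ℝ, 0 ≤ W ∧
    ∫⁻ x in halfBall n hn 2, ENNReal.ofReal (lastC n hn x ^ (-(1 / 2) : ℝ)) ≤ ENNReal.ofReal W := by
  classical
  let k : Fin n := ⟨n - 1, by omega⟩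
  let F : Fin n → ℝ → ℝ := fun i => if i = k then
      (Set.Ioc (0 : ℝ) 2).indicator (fun t => t ^ (-(1 / 2) : ℝ))
    else (Set.Icc (-2 : ℝ) 2).indicator (fun _ => (1 : ℝ))
  have hF : ∀ i, Integrable (F i) volume := by
    intro i
    by_cases h : i = k
    · simp only [F, h, if_true]
      have h1 := (intervalIntegral.intervalIntegrable_rpow' (a := 0) (b := 2)
        (r := -(1 / 2)) (by norm_num)).1
      exact h1.integrable_indicator measurableSet_Ioc
    · simp only [F, h, if_false]
      apply IntegrableOn.integrable_indicator _ measurableSet_Icc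
      exact integrableOn_const (by simp)
  have hG : Integrable (fun x : Fin n → ℝ => ∏ i, F i (x i)) volume :=
    Integrable.fintype_prod hF
  have hG2 : Integrable (fun x : E n => ∏ i, F i (x i)) volume :=
    (PiLp.volume_preserving_ofLp (Fin n)).integrable_comp_of_integrable hG
  have hpw : ∀ x ∈ halfBall n hn 2, lastC n hn x ^ (-(1 / 2) : ℝ) = ∏ i, F i (x i) := by
    intro x hx
    have hco : ∀ i, |x i| ≤ 2 := by
      intro i
      have := PiLp.norm_apply_le x i
      rw [Real.norm_eq_abs] at this
      linarith [hx.1]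
    rw [Finset.prod_eq_single k]
    · have h1 : lastC n hn x = x k := rfl
      have h2 : x k ∈ Set.Ioc (0 : ℝ) 2 := ⟨hx.2, (le_abs_self _).trans (hco k)⟩
      simp only [F, if_true]
      rw [Set.indicator_of_mem h2, h1]
    · intro i _ hi
      simp only [F, hi, if_false]
      exact Set.indicator_of_mem (s := Set.Icc (-2 : ℝ) 2) (abs_le.1 (hco i)) _
    · intro h; exact absurd (Finset.mem_univ k) h
  have hfin := hG2.lintegral_lt_top
  refine ⟨(∫⁻ x : E n, ENNReal.ofReal (∏ i, F i (x i))).toReal, ENNReal.toReal_nonneg, ?_⟩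
  rw [ENNReal.ofReal_toReal hfin.ne]
  rw [setLIntegral_congr_fun (halfBall_open hn 2).measurableSet
    (fun x hx => by simp only [hpw x hx] : Set.EqOn _ (fun x : E n => ENNReal.ofReal (∏ i, F i (x i))) _)]
  exact setLIntegral_le_lintegral _ _

lemma cover_sum {n : ℕ} (hn : 1 ≤ n) : ∃ W : ℝ, 0 < W ∧ ∀ (g : E n → ℝ≥0∞) (θ A : ℝ),
    0 < θ → θ ≤ 1 / 20 → 0 ≤ A →
    (∀ y ∈ halfBall n hn (3 / 2), ∫⁻ x in Metric.ball y (θ * lastC n hn y), g x ≤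
      ENNReal.ofReal (A * (θ * lastC n hn y) ^ n * lastC n hn y ^ (-(1 / 2) : ℝ))) →
    ∫⁻ x in halfBall n hn (3 / 2), g x ≤ ENNReal.ofReal (A * W) := by
  obtain ⟨W, hW, hWi⟩ := weight_fin hn
  have hom := om_pos n
  set L : ℝ := 10 ^ n * 2 ^ (1 / 2 : ℝ) / om n with hL
  have hL0 : 0 < L := by positivity
  refine ⟨L * (W + 1), by positivity, ?_⟩
  intro g θ A hθ hθ1 hA hloc
  obtain ⟨v, hvD, hvc, hvd, hvcov⟩ := vitali (n := n) (D := halfBall n hn (3 / 2)) (c := id)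
    (t := fun y => θ * lastC n hn y / 10) (R := 2)
    (fun x hx => by have := hx.2; positivity)
    (fun x hx => by
      have h1 := hx.1
      have h2 := hx.2
      have h3 := (le_abs_self _).trans (abs_lastC_le hn x)
      nlinarith)
  have hcv : Countable v := hvc.to_subtype
  have hsub : halfBall n hn (3 / 2) ⊆ ⋃ z : v, Metric.ball z.1 (θ * lastC n hn z.1) := by
    intro x hx
    obtain ⟨z, hz, hxz⟩ := hvcov x hx
    have hz2 := (hvD hz).2
    have hx2 := hx.2
    refine Set.mem_iUnion.2 ⟨⟨z, hz⟩, ?_⟩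
    have h1 : x ∈ Metric.closedBall z (5 * (θ * lastC n hn z / 10)) :=
      hxz (Metric.mem_closedBall_self (by positivity))
    rw [Metric.mem_closedBall] at h1
    rw [Metric.mem_ball]
    have : 0 < θ * lastC n hn z := by positivity
    simp only
    linarith
  have hterm : ∀ z : v, ∫⁻ x in Metric.ball z.1 (θ * lastC n hn z.1), g x ≤
      ENNReal.ofReal (A * L) * ∫⁻ x in Metric.closedBall z.1 (θ * lastC n hn z.1 / 10),
        ENNReal.ofReal (lastC n hn x ^ (-(1 / 2) : ℝ)) := by
    rintro ⟨z, hz⟩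
    have hz0 := (hvD hz).2
    refine (hloc z (hvD hz)).trans ?_
    simp only
    have hlow : ENNReal.ofReal ((2 * lastC n hn z) ^ (-(1 / 2) : ℝ)) *
        volume (Metric.closedBall z (θ * lastC n hn z / 10)) ≤
        ∫⁻ x in Metric.closedBall z (θ * lastC n hn z / 10),
        ENNReal.ofReal (lastC n hn x ^ (-(1 / 2) : ℝ)) := by
      rw [← setLIntegral_const]
      apply setLIntegral_mono' Metric.isClosed_closedBall.measurableSet
      intro x hx
      apply ENNReal.ofReal_le_ofReal
      rw [Metric.mem_closedBall, dist_eq_norm] at hx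
      have h1 := (abs_lastC_le hn (x - z)).trans hx
      rw [lastC_sub, abs_le] at h1
      have h2 : θ * lastC n hn z / 10 ≤ lastC n hn z / 10 := by nlinarith
      exact Real.rpow_le_rpow_of_nonpos (by linarith) (by linarith) (by norm_num)
    refine le_trans ?_ (mul_le_mul_right hlow _)
    rw [vol_closedBall z (by positivity), ← ENNReal.ofReal_mul (by positivity),
      ← ENNReal.ofReal_mul (by positivity)]
    apply ENNReal.ofReal_le_ofReal
    apply le_of_eq
    rw [Real.mul_rpow (by norm_num) hz0.le, hL, div_pow, Real.rpow_neg (by norm_num : (0 : ℝ) ≤ 2)]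
    have h2 : (0 : ℝ) < 2 ^ (1 / 2 : ℝ) := by positivity
    field_simp
  have hdis : Pairwise (Function.onFun Disjoint
      (fun z : v => Metric.closedBall z.1 (θ * lastC n hn z.1 / 10))) := by
    intro a b hab
    exact hvd a.2 b.2 (fun h => hab (Subtype.ext h))
  calc ∫⁻ x in halfBall n hn (3 / 2), g x
      ≤ ∫⁻ x in ⋃ z : v, Metric.ball z.1 (θ * lastC n hn z.1), g x := lintegral_mono_set hsub
    _ ≤ ∑' z : v, ∫⁻ x in Metric.ball z.1 (θ * lastC n hn z.1), g x := lintegral_iUnion_le _ _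
    _ ≤ ∑' z : v, ENNReal.ofReal (A * L) *
        ∫⁻ x in Metric.closedBall z.1 (θ * lastC n hn z.1 / 10),
        ENNReal.ofReal (lastC n hn x ^ (-(1 / 2) : ℝ)) := ENNReal.tsum_le_tsum hterm
    _ = ENNReal.ofReal (A * L) * ∫⁻ x in ⋃ z : v,
        Metric.closedBall z.1 (θ * lastC n hn z.1 / 10),
        ENNReal.ofReal (lastC n hn x ^ (-(1 / 2) : ℝ)) := by
        rw [ENNReal.tsum_mul_left, lintegral_iUnion
          (fun z => Metric.isClosed_closedBall.measurableSet) hdis]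
    _ ≤ ENNReal.ofReal (A * L) * ENNReal.ofReal W := by
        refine mul_le_mul_right (le_trans (lintegral_mono_set ?_) hWi) _
        apply Set.iUnion_subset
        rintro ⟨z, hz⟩
        have hz0 := (hvD hz).2
        have hz1 := (hvD hz).1
        have hz3 := (le_abs_self _).trans (abs_lastC_le hn z)
        have hp : 0 < θ * lastC n hn z := by positivity
        have hp2 : θ * lastC n hn z ≤ 1 / 20 * lastC n hn z := by gcongr
        refine (Metric.closedBall_subset_ball (ε₂ := θ * lastC n hn z) ?_).trans
          (ball_sub_half hn ?_ ?_)
        · simp only; linarith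
        · linarith
        · linarith
    _ ≤ _ := by
        rw [← ENNReal.ofReal_mul (by positivity)]
        apply ENNReal.ofReal_le_ofReal
        have : 0 ≤ A * L := by positivity
        nlinarith

end conclusion

end QSMP
namespace QSMP
open Matrix Filter Topology

section final

lemma thmMain {n : ℕ} (hn : 1 ≤ n) {lam Lam d0 α Kb : ℝ} (hl : 0 < lam) (hL : lam ≤ Lam)
    (hKb : 0 < Kb) (hd0 : 0 < d0) (hα : 0 < α) (hα1 : α ≤ 1) :
    ∃ ε c D : ℝ, 0 < ε ∧ 0 < c ∧ 0 < D ∧ ∀ (N : ℝ) (b f u : E n → ℝ),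
      Dat n hn lam Lam d0 α Kb N b f u → ∀ I0 : ℝ, 0 < I0 →
      (∃ x ∈ halfBall n hn 1, u x < I0 * lastC n hn x) →
      ENNReal.ofReal c * (∫⁻ x in halfBall n hn (3 / 2),
        ENNReal.ofReal ((max (-f x) 0) ^ ε)) ^ (1 / ε) ≤ ENNReal.ofReal (I0 + D * N) := by
  obtain ⟨ρ1, c, C, M, hρ1, hc, hC, hH⟩ := thmH hn (d0 := d0) hl hL hKb hd0 hα hα1
  obtain ⟨ε0, CD, δ, hε0, hCD, hδ, hDd⟩ := thmD hn hl hL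
  obtain ⟨W, hW, hcov⟩ := cover_sum hn
  set δ' := min δ 1 with hδ'
  have hδ0 : 0 < δ' := lt_min hδ one_pos
  have hδ1 : δ' ≤ 1 := min_le_right _ _
  have hδn : δ' ^ n ≤ δ := (pow_le_of_le_one hδ0.le hδ1 (by omega)).trans (min_le_left _ _)
  set κ := (δ' / Kb) ^ (1 / α) with hκ
  have hκ0 : 0 < κ := by positivity
  set θ := min (1 / 20) (min (ρ1 / 2) (κ / 10)) with hθ
  have hθ0 : 0 < θ := by
    apply lt_min (by norm_num) (lt_min (by positivity) (by positivity))
  have hθ1 : θ ≤ 1 / 20 := min_le_left _ _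
  have hθ2 : θ ≤ ρ1 / 2 := (min_le_right _ _).trans (min_le_left _ _)
  have hθ3 : θ ≤ κ / 10 := (min_le_right _ _).trans (min_le_right _ _)
  set ε := min ε0 (1 / (2 * ((M : ℝ) + 2))) with hε
  have hεp : 0 < ε := lt_min hε0 (by positivity)
  have hε1 : ε ≤ ε0 := min_le_left _ _
  have hε2 : ((M : ℝ) + 2) * ε ≤ 1 / 2 := by
    calc ((M : ℝ) + 2) * ε ≤ ((M : ℝ) + 2) * (1 / (2 * ((M : ℝ) + 2))) := by
          gcongr; exact min_le_right _ _
      _ = 1 / 2 := by field_simp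
  set Z := CD * θ ^ (-(1 / 2) : ℝ) * W with hZ
  have hZ0 : 0 < Z := by positivity
  refine ⟨ε, c / Z ^ (1 / ε), C + c / δ', hεp, by positivity, by positivity, ?_⟩
  intro N b f u hdat I0 hI0 hx
  have hN := hdat.N0
  set J := (I0 + C * N) / c + N / δ' with hJ
  have hJ0 : 0 < J := by positivity
  have hmain : ∫⁻ x in halfBall n hn (3 / 2), ENNReal.ofReal ((max (-f x) 0) ^ ε) ≤
      ENNReal.ofReal ((CD * θ ^ (-(1 / 2) : ℝ) * J ^ ε) * W) := by
    refine hcov _ θ _ hθ0 hθ1 (by positivity) ?_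
    intro y hy
    have hy0 := hy.2
    have hy1 := hy.1
    have hy2 := (le_abs_self _).trans (abs_lastC_le hn y)
    set ρ := θ * lastC n hn y with hρ
    have hρ0 : 0 < ρ := by positivity
    have hρθ : ρ ≤ 2 * θ := by nlinarith
    have hρ20 : ρ ≤ 1 / 20 * lastC n hn y := by rw [hρ]; gcongr
    have hρ1' : ρ ≤ 1 := by linarith
    have hsub5 : Metric.ball y (5 * ρ) ⊆ halfBall n hn 2 :=
      ball_sub_half hn (by linarith) (by linarith)
    have hsub4 : Metric.ball y (4 * ρ) ⊆ halfBall n hn 2 :=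
      (Metric.ball_subset_ball (by linarith)).trans hsub5
    set T := J / ρ ^ M with hT
    have hT0 : 0 < T := by positivity
    have hTρ : J ≤ T / ρ := by
      rw [hT, div_div, le_div_iff₀ (by positivity), ← pow_succ]
      have : ρ ^ (M + 1) ≤ 1 := pow_le_one₀ hρ0.le hρ1'
      nlinarith
    have hex : ∃ x1 ∈ Metric.ball y ρ, u x1 ≤ T := by
      by_contra hcon
      push Not at hcon
      obtain ⟨x, hx1, hx2⟩ := hx
      have h := hH N b f u hdat y ρ T hρ0 (by linarith) hT0.le hsub4
        (fun x hx => (hcon x hx).le) x hx1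
      have e : c * ρ ^ M * T = c * J := by
        rw [hT]; field_simp
      have e2 : c * J = I0 + C * N + c * (N / δ') := by
        rw [hJ]; field_simp
      have h3 : 0 ≤ c * (N / δ') := by positivity
      have h4 : I0 * lastC n hn x ≤ (c * ρ ^ M * T - C * N) * lastC n hn x := by
        apply mul_le_mul_of_nonneg_right _ hx1.2.le
        rw [e, e2]; linarith
      linarith
    have hNJ : N ≤ δ' * J := by
      rw [hJ, mul_add, mul_div_cancel₀ N hδ0.ne']
      have : 0 ≤ δ' * ((I0 + C * N) / c) := by positivity
      linarith
    have hff : ∫⁻ x in Metric.ball y (5 * ρ), ENNReal.ofReal ((max (f x) 0) ^ n) ≤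
        ENNReal.ofReal (δ * (T / ρ) ^ n) := by
      refine (lintegral_mono_set hsub5).trans (hdat.hf.trans (ENNReal.ofReal_le_ofReal ?_))
      calc N ^ n ≤ (δ' * (T / ρ)) ^ n := by
            apply pow_le_pow_left₀ hN
            exact hNJ.trans (mul_le_mul_of_nonneg_left hTρ hδ0.le)
        _ = δ' ^ n * (T / ρ) ^ n := mul_pow _ _ _
        _ ≤ _ := mul_le_mul_of_nonneg_right hδn (by positivity)
    have hbb : ∫⁻ x in Metric.ball y (5 * ρ), ENNReal.ofReal ((b x) ^ n) ≤
        ENNReal.ofReal δ := by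
      refine (hdat.hb _ y (5 * ρ) Metric.isOpen_ball hsub5 (by positivity) subset_rfl).trans
        (ENNReal.ofReal_le_ofReal (le_trans ?_ hδn))
      apply pow_le_pow_left₀ (by positivity)
      have h1 : (5 * ρ) ^ α ≤ δ' / Kb := by
        calc (5 * ρ) ^ α ≤ κ ^ α := by
              apply Real.rpow_le_rpow (by positivity) (by linarith) hα.le
          _ = δ' / Kb := by
              rw [hκ, ← Real.rpow_mul (by positivity), one_div_mul_cancel hα.ne', Real.rpow_one]
      calc Kb * (5 * ρ) ^ α ≤ Kb * (δ' / Kb) := by gcongr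
        _ = δ' := by field_simp
    refine (hDd b f u y ρ T ε hρ0 hT0 hεp hε1 (hdat.sup.mono Metric.isOpen_ball hsub5)
      hff hbb hex).trans (ENNReal.ofReal_le_ofReal ?_)
    have e1 : (T / ρ ^ 2) ^ ε ≤ J ^ ε * (θ ^ (-(1 / 2) : ℝ) * lastC n hn y ^ (-(1 / 2) : ℝ)) := by
      have e2 : T / ρ ^ 2 = J * ρ ^ (-((M : ℝ) + 2)) := by
        rw [hT, div_div, ← pow_add, Real.rpow_neg hρ0.le, div_eq_mul_inv]
        congr 2
        rw [← Real.rpow_natCast]; push_cast; rfl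
      rw [e2, Real.mul_rpow hJ0.le (by positivity), ← Real.mul_rpow hθ0.le hy0.le, ← hρ,
        ← Real.rpow_mul hρ0.le]
      apply mul_le_mul_of_nonneg_left _ (by positivity)
      apply Real.rpow_le_rpow_of_exponent_ge hρ0 hρ1'
      linarith
    calc CD * (T / ρ ^ 2) ^ ε * ρ ^ n
        ≤ CD * (J ^ ε * (θ ^ (-(1 / 2) : ℝ) * lastC n hn y ^ (-(1 / 2) : ℝ))) * ρ ^ n := by
          gcongr
      _ = _ := by ring
  have e3 : (CD * θ ^ (-(1 / 2) : ℝ) * J ^ ε) * W = Z * J ^ ε := by rw [hZ]; ring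
  rw [e3] at hmain
  calc _ ≤ ENNReal.ofReal (c / Z ^ (1 / ε)) * (ENNReal.ofReal (Z * J ^ ε)) ^ (1 / ε) := by
        gcongr
    _ = ENNReal.ofReal (c * J) := by
        rw [ENNReal.ofReal_rpow_of_pos (by positivity), ← ENNReal.ofReal_mul (by positivity),
          Real.mul_rpow hZ0.le (by positivity), ← Real.rpow_mul hJ0.le,
          mul_one_div_cancel hεp.ne', Real.rpow_one]
        congr 1
        have : 0 < Z ^ (1 / ε) := by positivity
        field_simp
    _ ≤ _ := by
        apply ENNReal.ofReal_le_ofReal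
        apply le_of_eq
        rw [hJ]; field_simp
        try ring

end final

end QSMP
/-- Boundary quantitative strong maximum principle in half-balls. -/
theorem boundary_quantitative_strong_maximum_principle
    (n : ℕ) (hn : 2 ≤ n) (lam Lam : ℝ) (hlam : 0 < lam) (hLam : lam ≤ Lam)
    (p q d0 K : ℝ) (hq : (n : ℝ) < q) (hp : (n : ℝ) ≤ p) (hpq : p ≤ q)
    (hd0 : 0 < d0) (hd0' : d0 ≤ 1 / 4) (hK : 0 < K) :
    ∃ ε c C : ℝ, 0 < ε ∧ 0 < c ∧ 0 < C ∧
      ∀ b f u : EuclideanSpace ℝ (Fin n) → ℝ,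
        ContinuousOn b (halfBall n (by omega) 2) →
        ContinuousOn f (halfBall n (by omega) 2) →
        (∀ x ∈ halfBall n (by omega) 2, 0 ≤ b x) →
        LpNormE n q b (halfBall n (by omega) 2) ≤ ENNReal.ofReal K →
        ContDiffOn ℝ 2 u (halfBall n (by omega) 2) →
        (∀ x ∈ halfBall n (by omega) 2, 0 ≤ u x) →
        (∀ x ∈ halfBall n (by omega) 2,
          pucciMinus n lam Lam (hess n u x) - b x * gradNorm n u x ≤ f x) →
        ENNReal.ofReal c *
            (∫⁻ x in halfBall n (by omega) (3 / 2),
              ENNReal.ofReal ((max (-f x) 0) ^ ε)) ^ (1 / ε)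
          ≤ ENNReal.ofReal (⨅ x : halfBall n (by omega : 1 ≤ n) 1, u x.1 / lastC n (by omega) x.1)
            + ENNReal.ofReal C * LpqNormHB n (by omega) p q d0 2 (fun x => max (f x) 0) := by
  have hn1 : 1 ≤ n := by omega
  have hn0 : (0 : ℝ) < n := by exact_mod_cast hn1
  have hq0 : 0 < q := hn0.trans hq
  have hα : 0 < 1 - (n : ℝ) / q := by
    rw [sub_pos, div_lt_one hq0]; exact hq
  have hα1 : 1 - (n : ℝ) / q ≤ 1 := by
    have : 0 ≤ (n : ℝ) / q := by positivity
    linarith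
  obtain ⟨Kb, CN, hKb, hCN, hdat⟩ := QSMP.dat_of (lam := lam) (Lam := Lam) hn1 hq hp hd0 hK
  obtain ⟨ε, c, D, hε, hc, hD, hmain⟩ := QSMP.thmMain hn1 hlam hLam hKb hd0 hα hα1
  refine ⟨ε, c, D * CN, hε, hc, by positivity, ?_⟩
  intro b f u hbc hfc hb0 hbK hu hu0 heq
  by_cases hfin : LpqNormHB n hn1 p q d0 2 (fun x => max (f x) 0) = ⊤
  · rw [hfin, ENNReal.mul_top (by simpa using mul_pos hD hCN), add_top]
    exact le_top
  have hd := hdat b f u ⟨QSMP.halfBall_open hn1 2, hbc, hfc, hb0, hu, hu0, heq⟩ hbK hfin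
  set N := LpqNormHB n hn1 p q d0 2 (fun x => max (f x) 0) with hN
  have hne : Nonempty (halfBall n hn1 1) := by
    refine ⟨⟨EuclideanSpace.single ⟨n - 1, by omega⟩ (1 / 2 : ℝ), ?_, ?_⟩⟩
    · rw [EuclideanSpace.norm_single, Real.norm_eq_abs, abs_of_pos (by norm_num)]
      norm_num
    · simp [lastC]
  have hinf0 : 0 ≤ ⨅ x : halfBall n hn1 1, u x.1 / lastC n hn1 x.1 := by
    apply Real.iInf_nonneg
    intro x
    exact div_nonneg (hu0 x.1 ⟨x.2.1.trans (by norm_num), x.2.2⟩) x.2.2.le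
  set m := ⨅ x : halfBall n hn1 1, u x.1 / lastC n hn1 x.1 with hm
  apply ENNReal.le_of_forall_pos_le_add
  intro η hη _
  have hη' : (0 : ℝ) < η := hη
  obtain ⟨x, hx⟩ := exists_lt_of_ciInf_lt (show m < m + η by linarith)
  have h := hmain _ b f u hd (m + η) (by linarith)
    ⟨x.1, x.2, by rwa [div_lt_iff₀ x.2.2] at hx⟩
  refine h.trans ?_
  have hNt := ENNReal.toReal_nonneg (a := N)
  rw [← mul_assoc, ENNReal.ofReal_add (by linarith) (by positivity),
    ENNReal.ofReal_add hinf0 hη'.le, ENNReal.ofReal_mul (by positivity),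
    ENNReal.ofReal_toReal hfin, ENNReal.ofReal_coe_nnreal]
  exact le_of_eq (by ring)
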